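/- arXiv:2102.06889 — 3 statements merged into one kernel-verified Lean document; each statement's English description precedes it below -/
import Mathlib

section
/- Let A be a demonic VASS with d counters and let D(A) be the DAG of its strongly connected components. For a path η_1,…,η_m in D(A) starting at a root of D(A), define v_0 = (1,…,1) and v_i = V_{η_i}(v_{i−1}) for 1 ≤ i ≤ m. Then for every counter c_i and every k ∈ ℕ: C_A[c_i] ∈ Ω(n^k) if and only if there is a path η_1,…,η_m in D(A) from a root with v_m(i) ≥ k; and C_A[c_i] ∈ O(n^k) if and only if for every path η_1,…,η_m in D(A) from a root, v_m(i) ≤ k. -/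
open scoped Classical

namespace VassPaper

noncomputable section

/-- A `d`-dimensional VASS (game): a finite nonempty set of control states together with a
finite set of transitions, where states are partitioned into angelic and demonic ones
(via the predicate `angelic`; demonic states are those that are not angelic). -/
structure VASS (d : ℕ) where
  Q : Type
  [finQ : Fintype Q]
  [neQ : Nonempty Q]
  Tran : Finset (Q × (Fin d → ℤ) × Q)
  angelic : Q → Prop

attribute [instance] VASS.finQ VASS.neQ

variable {d : ℕ}

/-- Every control state has at least one outgoing transition. -/
def VASS.total (V : VASS d) : Prop := ∀ q : V.Q, ∃ u p, (q, u, p) ∈ V.Tran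

/-- A demonic VASS: all states are demonic. -/
def VASS.demonic (V : VASS d) : Prop := ∀ q : V.Q, ¬ V.angelic q

/-- A configuration: a control state together with a vector of counter values. -/
abbrev VASS.Config (V : VASS d) : Type := V.Q × (Fin d → ℕ)

/-- A transition is enabled in a configuration if it is a transition of the VASS, starts in the
current control state, and does not make any counter negative. -/
def VASS.enabled (V : VASS d) (c : V.Config) (t : V.Q × (Fin d → ℤ) × V.Q) : Prop :=
  t ∈ V.Tran ∧ t.1 = c.1 ∧ ∀ i, 0 ≤ (c.2 i : ℤ) + t.2.1 i

/-- The configuration resulting from taking transition `t` in configuration `c`. -/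
def VASS.applyT (V : VASS d) (c : V.Config) (t : V.Q × (Fin d → ℤ) × V.Q) : V.Config :=
  (t.2.2, fun i => ((c.2 i : ℤ) + t.2.1 i).toNat)

/-- A strategy for the player owning the states in `own`: it assigns to every finite computation
(represented by its strict past `h` and current configuration `c`) an outgoing transition of the
current control state; the chosen transition must be enabled whenever some enabled transition
exists. -/
structure Strategy (V : VASS d) (own : V.Q → Prop) where
  choose : List V.Config → V.Config → V.Q × (Fin d → ℤ) × V.Q
  choose_mem : ∀ h c, own c.1 → (∃ t ∈ V.Tran, t.1 = c.1) →
    choose h c ∈ V.Tran ∧ (choose h c).1 = c.1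
  choose_enabled : ∀ h c, own c.1 → (∃ t, V.enabled c t) → V.enabled c (choose h c)

abbrev AngelStrategy (V : VASS d) := Strategy V V.angelic
abbrev DemonStrategy (V : VASS d) := Strategy V (fun q => ¬ V.angelic q)

/-- The maximal computation determined by the pair of strategies `(σ, π)` and the initial
configuration `init`: `playAux σ π init n` is (the history together with) the `n`-th
configuration of the computation, or `none` if the computation has already ended. -/
def playAux {V : VASS d} (σ : AngelStrategy V) (π : DemonStrategy V) (init : V.Config) :
    ℕ → Option (List V.Config × V.Config)
  | 0 => some ([], init)
  | n+1 => (playAux σ π init n).bind fun hc =>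
      let t := if V.angelic hc.2.1 then σ.choose hc.1 hc.2 else π.choose hc.1 hc.2
      if V.enabled hc.2 t then some (hc.1 ++ [hc.2], V.applyT hc.2 t) else none

/-- `c` is visited by the maximal computation `Comp^{σ,π}(init)`. -/
def visits {V : VASS d} (σ : AngelStrategy V) (π : DemonStrategy V) (init : V.Config)
    (c : V.Config) : Prop := ∃ n h, playAux σ π init n = some (h, c)

/-- The length of the maximal computation `Comp^{σ,π}(init)` (number of configurations),
as an extended natural number. -/
def lenComp {V : VASS d} (σ : AngelStrategy V) (π : DemonStrategy V) (init : V.Config) : ℕ∞ :=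
  ⨆ n ∈ {n : ℕ | (playAux σ π init n).isSome}, ((n : ℕ∞) + 1)

/-- The supremum of the values of counter `i` along the maximal computation
`Comp^{σ,π}(init)`. -/
def maxCounter {V : VASS d} (σ : AngelStrategy V) (π : DemonStrategy V) (init : V.Config)
    (i : Fin d) : ℕ∞ :=
  ⨆ c ∈ {c : V.Config | visits σ π init c}, (c.2 i : ℕ∞)

/-- `Tval(pv) = inf_σ sup_π len(Comp^{σ,π}(pv))`. -/
def Tval (V : VASS d) (init : V.Config) : ℕ∞ :=
  ⨅ σ : AngelStrategy V, ⨆ π : DemonStrategy V, lenComp σ π init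

/-- `Cval[c](pv) = inf_σ sup_π max_c(Comp^{σ,π}(pv))`. -/
def Cval (V : VASS d) (i : Fin d) (init : V.Config) : ℕ∞ :=
  ⨅ σ : AngelStrategy V, ⨆ π : DemonStrategy V, maxCounter σ π init i

/-- Termination complexity: `L(n) = max_{p ∈ Q} Tval(p n⃗)`. -/
def Lcomp (V : VASS d) : ℕ → ℕ∞ := fun n => ⨆ p : V.Q, Tval V (p, fun _ => n)

/-- Counter complexity: `C[c](n) = max_{p ∈ Q} Cval[c](p n⃗)`. -/
def Ccomp (V : VASS d) (i : Fin d) : ℕ → ℕ∞ := fun n => ⨆ p : V.Q, Cval V i (p, fun _ => n)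

/-- `f ∈ O(g)`: `f n ≤ C · g n` for some constant `C` and all sufficiently large `n`. -/
def BigO (f : ℕ → ℕ∞) (g : ℕ → ℕ) : Prop := ∃ C N : ℕ, ∀ n ≥ N, f n ≤ ((C * g n : ℕ) : ℕ∞)

/-- `f ∈ Ω(g)`: `f n ≥ g n / c` (i.e. `g n ≤ c · f n`) for some constant `c > 0` and all
sufficiently large `n`. -/
def BigOmega (f : ℕ → ℕ∞) (g : ℕ → ℕ) : Prop :=
  ∃ c N : ℕ, 0 < c ∧ ∀ n ≥ N, (g n : ℕ∞) ≤ (c : ℕ∞) * f n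

/-- `f ∈ Θ(g) = O(g) ∩ Ω(g)`. -/
def BigTheta (f : ℕ → ℕ∞) (g : ℕ → ℕ) : Prop := BigO f g ∧ BigOmega f g

/-- `f ∈ 2^{Ω(n)}`: `f n ≥ 2^{εn}` for some `ε > 0` (taken of the form `1/c`) and all
sufficiently large `n`. -/
def ExpOmega (f : ℕ → ℕ∞) : Prop :=
  ∃ c N : ℕ, 0 < c ∧ ∀ n ≥ N, ((2 ^ (n / c) : ℕ) : ℕ∞) ≤ f n

/-- `S ∈ 2^{O(n)}`: `S n ≤ 2^{Cn}` for some constant `C` and all sufficiently large `n`. -/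
def ExpO (S : ℕ → ℕ) : Prop := ∃ C N : ℕ, ∀ n ≥ N, S n ≤ 2 ^ (C * n)


/-- The edge relation on control states induced by the transitions. -/
def VASS.edgeRel {d : ℕ} (V : VASS d) : V.Q → V.Q → Prop := fun p q => ∃ u, (p, u, q) ∈ V.Tran

/-- A VASS is strongly connected if every state is reachable from every other state. -/
def VASS.stronglyConnected {d : ℕ} (V : VASS d) : Prop :=
  ∀ p q : V.Q, Relation.ReflTransGen V.edgeRel p q

/-- `C[c,v](n) = max_{p ∈ Q} Cval[c](p u)` where `u = (n^{v 1}, …, n^{v d})`. -/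
def CvecComp {d : ℕ} (V : VASS d) (c : Fin d) (v : Fin d → ℕ) : ℕ → ℕ∞ :=
  fun n => ⨆ p : V.Q, Cval V c (p, fun i => n ^ v i)

/-- The VASS `A_v` obtained from `A` by zeroing the components of all update vectors at the
indices `i` with `v i = ∞`. -/
def VASS.modInf {d : ℕ} (V : VASS d) (v : Fin d → ℕ∞) : VASS d :=
  { V with Tran := V.Tran.image fun t =>
      (t.1, (fun i => if v i = ⊤ then 0 else t.2.1 i), t.2.2) }

/-- The vector `v'` obtained from `v` by changing all `∞` components into `1`. -/
def vTrunc {d : ℕ} (v : Fin d → ℕ∞) : Fin d → ℕ :=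
  fun i => if v i = ⊤ then 1 else (v i).toNat

/-- `C_A[c,v] = C_{A_v}[c,v']` for `v ∈ ℕ∞^d`. -/
def CInf {d : ℕ} (V : VASS d) (c : Fin d) (v : Fin d → ℕ∞) : ℕ → ℕ∞ :=
  CvecComp (V.modInf v) c (vTrunc v)

/-- `F : ℕ → ℕ^d` is `v`-consistent: the `i`-th projection of `F` is in `Θ(n^k)` when
`v i = k ∈ ℕ`, and in `2^{Ω(n)}` when `v i = ∞`. -/
def vConsistent {d : ℕ} (v : Fin d → ℕ∞) (F : ℕ → Fin d → ℕ) : Prop :=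
  ∀ i : Fin d,
    (∀ k : ℕ, v i = (k : ℕ∞) → BigTheta (fun n => ((F n i : ℕ) : ℕ∞)) (fun n => n ^ k)) ∧
    (v i = ⊤ → ExpOmega (fun n => ((F n i : ℕ) : ℕ∞)))

/-- Mutual reachability of control states. -/
def mutReach {d : ℕ} (V : VASS d) (p q : V.Q) : Prop :=
  Relation.ReflTransGen V.edgeRel p q ∧ Relation.ReflTransGen V.edgeRel q p

/-- The strongly connected component of a state. -/
def sccOf {d : ℕ} (V : VASS d) (p : V.Q) : Set V.Q := {q | mutReach V p q}

/-- A strongly connected component of `A` (a vertex of the DAG `D(A)`). -/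
def IsSCC {d : ℕ} (V : VASS d) (C : Set V.Q) : Prop := ∃ p : V.Q, C = sccOf V p

/-- The edges of the DAG `D(A)` of strongly connected components. -/
def sccEdge {d : ℕ} (V : VASS d) (C C' : Set V.Q) : Prop :=
  C ≠ C' ∧ ∃ p ∈ C, ∃ q ∈ C', V.edgeRel p q

/-- A root of `D(A)`: an SCC with no incoming edge. -/
def IsRootSCC {d : ℕ} (V : VASS d) (C : Set V.Q) : Prop :=
  IsSCC V C ∧ ∀ C' : Set V.Q, IsSCC V C' → ¬ sccEdge V C' C

/-- The restriction of `A` to a set `C` of states: all transitions leading from/to states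
outside `C` are deleted.  (States outside `C` become isolated and do not affect the
functions `C[c,v]`, since an isolated state contributes exactly the initial counter value.) -/
def VASS.restrictTo {d : ℕ} (V : VASS d) (C : Set V.Q) : VASS d :=
  { V with Tran := V.Tran.filter fun t => t.1 ∈ C ∧ t.2.2 ∈ C }

/-- The function `V_A : ℕ∞^d → ℕ∞^d`: `V_A(v)(i) = k` if `v i ≠ ∞` and
`C_A[c_i,v] ∈ Θ(n^k)`, and `V_A(v)(i) = ∞` otherwise. -/
def Vfun {d : ℕ} (V : VASS d) (v : Fin d → ℕ∞) : Fin d → ℕ∞ := fun i =>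
  if h : v i ≠ ⊤ ∧ ∃ k : ℕ, BigTheta (CInf V i v) (fun n => n ^ k) then
    ((h.2.choose : ℕ) : ℕ∞)
  else ⊤

/-- `v_m` for a path `η_1, …, η_m` in `D(A)`:
`v_0 = (1,…,1)` and `v_i = V_{η_i}(v_{i-1})`. -/
def pathVec {d : ℕ} (V : VASS d) (ηs : List (Set V.Q)) : Fin d → ℕ∞ :=
  ηs.foldl (fun w C => Vfun (V.restrictTo C) w) (fun _ => (1 : ℕ∞))

/-- A path in `D(A)` starting at a root. -/
def IsRootedSCCPath {d : ℕ} (V : VASS d) (ηs : List (Set V.Q)) : Prop :=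
  (∀ C ∈ ηs, IsSCC V C) ∧ List.Chain' (sccEdge V) ηs ∧
    ∃ C₀ rest, ηs = C₀ :: rest ∧ IsRootSCC V C₀

/-!
In a single strongly connected component the counters are controlled layer by layer. A multicycle is
a circulation on the transition graph; layer `l` admits those circulations on the transitions of the
earlier layers that decrease no counter of initial order at most `n ^ l`, where a counter already
known to be `O(n ^ i)` is accounted for separately in each connected component of the transitions of
layer `l - i`. Integer Farkas duality then gives an alternative. A transition or counter that no
admissible circulation uses or increases has a linear ranking function, whence a bound `O(n ^ l)` by
strong induction on `l`. The others are used and increased by one generic circulation per layer,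
and nesting the Euler circuits of these circulations, the circuit of layer `l` being run `n` times
within one run of that of layer `l - 1`, realises `Ω(n ^ (l + 1))` by a single walk that raises all
counters at once. Hence every counter of a component has exact polynomial order or is infinite, and
one walk attains the whole vector.

A computation of the VASS visits the components along a path from a root, possibly entering it
in the middle. Running the components of such a path in turn, on constant fractions of the
counters, attains `v_m`; conversely, the counters on leaving a component are dominated by the vector
attached to it, so that the bounds compose along the path. There are finitely many paths, which
turns the path-wise bounds into a bound for the VASS.
-/

/-! ### The Farkas lemma -/

section Farkas

variable {𝕜 W I : Type*} [Field 𝕜] [AddCommGroup W] [Module 𝕜 W]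

/-- The functional that agrees with `f` on the kernel of `g` and vanishes at `x`, provided that
`g x = 1`. -/
def projectAlong (g : Module.Dual 𝕜 W) (x : W) : Module.Dual 𝕜 W →ₗ[𝕜] Module.Dual 𝕜 W :=
  LinearMap.id - LinearMap.smulRight (Module.Dual.eval 𝕜 W x) g

theorem projectAlong_apply (g : Module.Dual 𝕜 W) (x : W) (f : Module.Dual 𝕜 W) :
    projectAlong g x f = f - f x • g := by
  simp [projectAlong]

variable [LinearOrder 𝕜] [IsStrictOrderedRing 𝕜]

theorem apply_nonneg_of_mem_hull {s : Set (Module.Dual 𝕜 W)} {f : Module.Dual 𝕜 W}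
    (hf : f ∈ PointedCone.hull 𝕜 s) {x : W} (hx : ∀ a ∈ s, 0 ≤ a x) : 0 ≤ f x := by
  induction hf using Submodule.span_induction with
  | mem a ha => exact hx a ha
  | zero => simp
  | add f g _ _ hf hg => exact add_nonneg hf hg
  | smul t f _ hf => exact mul_nonneg t.2 hf

theorem hull_image_projectAlong (g : Module.Dual 𝕜 W) (x : W) {s : Set (Module.Dual 𝕜 W)}
    {f : Module.Dual 𝕜 W} (hf : projectAlong g x f ∈ PointedCone.hull 𝕜 (projectAlong g x '' s)) :
    ∃ f' ∈ PointedCone.hull 𝕜 s, f = f' + (f x - f' x) • g := by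
  obtain ⟨f', hf', heq⟩ :
      ∃ f' ∈ PointedCone.hull 𝕜 s, projectAlong g x f' = projectAlong g x f := by
    rwa [PointedCone.hull, ← LinearMap.coe_restrictScalars {c : 𝕜 // 0 ≤ c}, ← Submodule.map_span]
      at hf
  refine ⟨f', hf', ?_⟩
  rw [projectAlong_apply, projectAlong_apply] at heq
  ext z
  have hz := congrArg (fun k : Module.Dual 𝕜 W => k z) heq
  simp only [LinearMap.sub_apply, LinearMap.add_apply, LinearMap.smul_apply, smul_eq_mul] at hz ⊢
  linear_combination -hz

-- When a constraint `a m` is added and the others do not yet imply `0 ≤ b`, projecting along a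
-- witness `x` of that failure eliminates `a m`.
theorem mem_hull_image_of_forall_nonneg (s : Finset I) (a : I → Module.Dual 𝕜 W)
    (b : Module.Dual 𝕜 W) (h : ∀ x, (∀ i ∈ s, 0 ≤ a i x) → 0 ≤ b x) :
    b ∈ PointedCone.hull 𝕜 (a '' s) := by
  induction s using Finset.induction_on generalizing a b with
  | empty =>
    have hb : b = 0 := by
      ext x
      have h1 := h x (by simp)
      have h2 := h (-x) (by simp)
      rw [map_neg, neg_nonneg] at h2
      exact le_antisymm h2 h1
    exact hb ▸ zero_mem _
  | insert m s _ ih =>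
    rw [Finset.coe_insert, Set.image_insert_eq]
    by_cases hs : ∀ x, (∀ i ∈ s, 0 ≤ a i x) → 0 ≤ b x
    · exact Submodule.span_mono (Set.subset_insert _ _) (ih a b hs)
    push Not at hs
    obtain ⟨x, hx, hbx⟩ := hs
    have hmx : a m x < 0 := by
      by_contra! hm
      exact hbx.not_ge (h x (Finset.forall_mem_insert _ _ _ |>.2 ⟨hm, hx⟩))
    set y : W := (a m x)⁻¹ • x with hy
    have hmy : a m y = 1 := by simp [hy, hmx.ne]
    have hproj : projectAlong (a m) y b ∈
        PointedCone.hull 𝕜 (projectAlong (a m) y '' (a '' s)) := by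
      rw [Set.image_image]
      refine ih (fun i => projectAlong (a m) y (a i)) _ fun z hz => ?_
      have hb := h (z - a m z • y) (Finset.forall_mem_insert _ _ _ |>.2 ⟨by simp [hmy],
        fun i hi => by simpa [projectAlong_apply, mul_comm] using hz i hi⟩)
      simpa [projectAlong_apply, mul_comm] using hb
    obtain ⟨b', hb', heq⟩ := hull_image_projectAlong (a m) y hproj
    have hcoef : 0 ≤ b y - b' y := by
      have h1 : 0 ≤ b' x :=
        apply_nonneg_of_mem_hull hb' (Set.forall_mem_image.2 fun i hi => hx i hi)
      rw [hy, map_smul, map_smul, ← smul_sub]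
      exact mul_nonneg_of_nonpos_of_nonpos (inv_lt_zero.2 hmx).le (by linarith)
    rw [heq]
    exact add_mem (Submodule.span_mono (Set.subset_insert _ _) hb') (Submodule.smul_mem _
      (⟨_, hcoef⟩ : {c : 𝕜 // 0 ≤ c}) (Submodule.subset_span (Set.mem_insert _ _)))

theorem exists_nonneg_combination_le {E : Type*} [Fintype E] [Fintype I] (A : I → E → 𝕜)
    (c : E → 𝕜)
    (h : ∀ x : E → 𝕜, (∀ e, 0 ≤ x e) → (∀ i, 0 ≤ ∑ e, x e * A i e) → ∑ e, x e * c e ≤ 0) :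
    ∃ t : I → 𝕜, (∀ i, 0 ≤ t i) ∧ ∀ e, c e + ∑ i, t i * A i e ≤ 0 := by
  let dot (f : E → 𝕜) : Module.Dual 𝕜 (E → 𝕜) := Fintype.linearCombination 𝕜 f
  have hdot (f x : E → 𝕜) : dot f x = ∑ e, x e * f e := Fintype.linearCombination_apply 𝕜 f x
  have hsingle (f : E → 𝕜) (e : E) : dot f (Pi.single e 1) = f e := by
    simp [hdot, Pi.single_apply]
  let a : I ⊕ E → Module.Dual 𝕜 (E → 𝕜) :=
    Sum.elim (fun i => dot (A i)) fun e => dot (Pi.single e 1)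
  have hmem : dot (-c) ∈ PointedCone.hull 𝕜 (a '' (Finset.univ : Finset (I ⊕ E))) := by
    refine mem_hull_image_of_forall_nonneg _ _ _ fun x hx => ?_
    have hx' (e : E) : 0 ≤ x e := by
      simpa [a, hdot, Pi.single_apply] using hx (.inr e) (Finset.mem_univ _)
    have := h x hx' fun i => by simpa [a, hdot] using hx (.inl i) (Finset.mem_univ _)
    simpa [hdot] using this
  rw [Finset.coe_univ, Set.image_univ, PointedCone.hull, Submodule.mem_span_range_iff_exists_fun]
    at hmem
  obtain ⟨t, ht⟩ := hmem
  have hsmul (r : {r : 𝕜 // 0 ≤ r}) (f : Module.Dual 𝕜 (E → 𝕜)) (x : E → 𝕜) :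
      (r • f) x = r * f x := rfl
  refine ⟨fun i => t (.inl i), fun i => (t (.inl i)).2, fun e => ?_⟩
  have hte : ∑ i, (t (.inl i) : 𝕜) * A i e + t (.inr e) = -c e := by
    have := congrArg (fun f : Module.Dual 𝕜 (E → 𝕜) => f (Pi.single e 1)) ht
    simpa [a, hsmul, hsingle, Pi.single_apply] using this
  have := (t (.inr e)).2
  linarith

end Farkas

section IntegerDuality

variable {E I J : Type*} [Fintype E]

theorem exists_nat_multiple {E : Type*} [Finite E] (x : E → ℚ) (hx : ∀ e, 0 ≤ x e) :
    ∃ N : ℕ, 0 < N ∧ ∃ m : E → ℕ, ∀ e, (m e : ℚ) = N * x e := by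
  have := Fintype.ofFinite E
  refine ⟨∏ e, (x e).den, Finset.prod_pos fun e _ => (x e).den_pos,
    fun e => (∏ f ∈ Finset.univ.erase e, (x f).den) * (x e).num.toNat, fun e => ?_⟩
  have hnum : ((x e).num.toNat : ℚ) = x e * (x e).den := by
    rw [Rat.mul_den_eq_num]
    exact_mod_cast Int.toNat_of_nonneg (Rat.num_nonneg.2 (hx e))
  rw [← Finset.prod_erase_mul _ _ (Finset.mem_univ e)]
  push_cast
  rw [hnum]
  ring

theorem exists_dual_of_forall_nat [Fintype I] (A : I → E → ℤ) (c : E → ℤ)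
    (h : ∀ m : E → ℕ, (∀ i, 0 ≤ ∑ e, m e * A i e) → ∑ e, m e * c e ≤ 0) :
    ∃ t : I → ℚ, (∀ i, 0 ≤ t i) ∧ ∀ e, c e + ∑ i, t i * A i e ≤ 0 := by
  refine exists_nonneg_combination_le (fun i e => (A i e : ℚ)) (fun e => c e) fun x hx hA => ?_
  obtain ⟨N, hN, m, hm⟩ := exists_nat_multiple x hx
  have hscale (f : E → ℤ) : ((∑ e, m e * f e : ℤ) : ℚ) = N * ∑ e, x e * f e := by
    push_cast
    rw [Finset.mul_sum]
    exact Finset.sum_congr rfl fun e _ => by rw [hm]; ring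
  have hc : ((∑ e, m e * c e : ℤ) : ℚ) ≤ 0 := by
    refine Int.cast_nonpos.2 (h m fun i => ?_)
    have : (0 : ℚ) ≤ ((∑ e, m e * A i e : ℤ) : ℚ) := by
      rw [hscale]
      exact mul_nonneg N.cast_nonneg (hA i)
    exact_mod_cast this
  rw [hscale] at hc
  exact nonpos_of_mul_nonpos_right hc (by exact_mod_cast hN)

theorem exists_dual_of_forall_nat_eq [Fintype I] [Fintype J] (A : I → E → ℤ) (B : J → E → ℤ)
    (c : E → ℤ)
    (h : ∀ m : E → ℕ, (∀ i, 0 ≤ ∑ e, m e * A i e) → (∀ j, ∑ e, m e * B j e = 0) →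
      ∑ e, m e * c e ≤ 0) :
    ∃ (t : I → ℚ) (z : J → ℚ), (∀ i, 0 ≤ t i) ∧
      ∀ e, c e + ∑ i, t i * A i e + ∑ j, z j * B j e ≤ 0 := by
  obtain ⟨t, ht, hle⟩ := exists_dual_of_forall_nat (I := I ⊕ J ⊕ J)
    (Sum.elim A (Sum.elim B (-B))) c fun m hm =>
      h m (fun i => hm (.inl i)) fun j => le_antisymm
        (by simpa using hm (.inr (.inr j))) (by simpa using hm (.inr (.inl j)))
  refine ⟨fun i => t (.inl i), fun j => t (.inr (.inl j)) - t (.inr (.inr j)),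
    fun i => ht _, fun e => ?_⟩
  simpa [sub_mul, Finset.sum_sub_distrib, ← sub_eq_add_neg, add_assoc] using hle e

end IntegerDuality

/-! ### Nets and their layers -/

theorem setoid_iInf_apply {α : Sort*} {Q : Type*} {s : α → Setoid Q} {p q : Q} :
    (⨅ a, s a) p q ↔ ∀ a, s a p q :=
  Setoid.sInf_iff.trans Set.forall_mem_range

/-- A directed graph whose edges update counters: the edge `e` leads from `src e` to `tgt e` and
adds `u e x` to the counter `x`, whose initial value is of order `n ^ v x`. The components of a VASS
are studied in this form. -/
structure Net (Q E ι : Type*) where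
  src : E → Q
  tgt : E → Q
  u : E → ι → ℤ
  v : ι → ℕ

namespace Net

variable {Q E ι : Type*} (N : Net Q E ι)

/-- The connected components of the undirected graph with edge set `G`, as an equivalence relation
on the states. -/
def classes (G : Set E) : Setoid Q :=
  Relation.EqvGen.setoid fun p q => ∃ e ∈ G, N.src e = p ∧ N.tgt e = q

theorem classes_mono {G G' : Set E} (h : G ⊆ G') : N.classes G ≤ N.classes G' :=
  Setoid.eqvGen_mono fun _ _ ⟨e, he, hpq⟩ => ⟨e, h he, hpq⟩

theorem classes_edge {G : Set E} {e : E} (he : e ∈ G) : N.classes G (N.src e) (N.tgt e) :=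
  .rel _ _ ⟨e, he, rfl, rfl⟩

theorem classes_le {G : Set E} {s : Setoid Q} (h : ∀ e ∈ G, s (N.src e) (N.tgt e)) :
    N.classes G ≤ s :=
  Setoid.eqvGen_le fun _ _ ⟨e, he, hp, hq⟩ => hp ▸ hq ▸ h e he

section Circulation

variable [Fintype E]

/-- A circulation: a multiset of edges that enters every state as often as it leaves it. -/
def IsCirculation (m : E → ℕ) : Prop :=
  ∀ q, ∑ e with N.tgt e = q, m e = ∑ e with N.src e = q, m e

/-- The edge weights `f` have nonnegative sum over every class of `s`, an edge being counted in the
class of its source. -/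
def NonnegOnClasses (s : Setoid Q) (f : E → ℤ) : Prop :=
  ∀ p, 0 ≤ ∑ e with s p (N.src e), f e

variable {N}

theorem NonnegOnClasses.mono {s s' : Setoid Q} (hs : s ≤ s') {f : E → ℤ}
    (hf : N.NonnegOnClasses s f) : N.NonnegOnClasses s' f := by
  intro p
  let cls : E → Quotient s := fun e => Quotient.mk s (N.src e)
  rw [← Finset.sum_fiberwise_of_maps_to (t := Finset.univ.image cls) (g := cls) fun e _ =>
    Finset.mem_image_of_mem _ (Finset.mem_univ e)]
  refine Finset.sum_nonneg fun c _ => ?_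
  induction c using Quotient.inductionOn with | _ q
  rw [Finset.filter_filter]
  simp only [cls, Quotient.eq]
  by_cases hq : s' p q
  · refine (hf q).trans_eq (Finset.sum_congr (Finset.filter_congr fun e _ => ?_) fun _ _ => rfl)
    exact ⟨fun h => ⟨s'.trans hq (hs h), s.symm h⟩, fun h => s.symm h.2⟩
  · rw [Finset.filter_false_of_mem fun e _ h => hq (s'.trans h.1 (hs h.2)), Finset.sum_empty]

theorem NonnegOnClasses.sum_nonneg {s : Setoid Q} {f : E → ℤ} (hf : N.NonnegOnClasses s f) :
    0 ≤ ∑ e, f e := by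
  rcases isEmpty_or_nonempty E with hE | ⟨⟨e⟩⟩
  · simp
  · simpa using hf.mono (le_top : s ≤ ⊤) (N.src e)

theorem NonnegOnClasses.add {s : Setoid Q} {f g : E → ℤ} (hf : N.NonnegOnClasses s f)
    (hg : N.NonnegOnClasses s g) : N.NonnegOnClasses s fun e => f e + g e := by
  intro p
  simp only [Finset.sum_add_distrib]
  exact add_nonneg (hf p) (hg p)

end Circulation

section Layers

/-- The partition of the states on whose classes a circulation of layer `l` must not decrease the
counter `x`, given the edges `(g i).1` and the bounded counters `(g i).2` of the layers `i < l`. If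
`x` is bounded in layer `i`, these are the classes of layer `l - i`: a run leaves them only
`O(n ^ (l - i))` times, so `x`, being `O(n ^ i)`, can lose only `O(n ^ l)` in one of them, and a
circulation that decreases `x` there cannot be repeated more often than that. -/
def rowSetoidOf (l : ℕ) (g : ∀ j < l, Set E × Set ι) (x : ι) : Setoid Q :=
  ⨅ (i : ℕ) (j : ℕ) (hi : i < l) (hj : j < l) (_ : i + j = l) (_ : x ∈ (g i hi).2),
    N.classes (g j hj).1

variable [Fintype E]

/-- The circulations admitted in layer `l`, given the earlier layers `g`. -/
structure FeasibleOf (l : ℕ) (g : ∀ j < l, Set E × Set ι) (m : E → ℕ) : Prop where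
  isCirculation : N.IsCirculation m
  mem_of_ne_zero : ∀ j (hj : j < l), ∀ e, m e ≠ 0 → e ∈ (g j hj).1
  nonneg : ∀ x, N.v x ≤ l → N.NonnegOnClasses (N.rowSetoidOf l g x) fun e => m e * N.u e x

/-- Layer `l`: the set of the edges used by some feasible circulation, and the set of the counters
of initial order at most `n ^ l` that no feasible circulation increases. -/
def layer (l : ℕ) : Set E × Set ι :=
  ({e | ∃ m, N.FeasibleOf l (fun j _ => layer j) m ∧ m e ≠ 0},
   {x | N.v x ≤ l ∧ ∀ m, N.FeasibleOf l (fun j _ => layer j) m → ∑ e, m e * N.u e x ≤ 0})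

/-- The edges of layer `l`; all others can be used only `O(n ^ l)` times. -/
def G (l : ℕ) : Set E := (N.layer l).1

/-- The counters bounded in layer `l`, which never exceed `O(n ^ l)`. -/
def B (l : ℕ) : Set ι := (N.layer l).2

/-- `Net.rowSetoidOf` for the actual layers. -/
def rowSetoid (l : ℕ) (x : ι) : Setoid Q := N.rowSetoidOf l (fun j _ => N.layer j) x

/-- `Net.FeasibleOf` for the actual layers. -/
def Feasible (l : ℕ) (m : E → ℕ) : Prop := N.FeasibleOf l (fun j _ => N.layer j) m

variable {N} {l : ℕ} {m m' : E → ℕ}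

theorem mem_G {e : E} : e ∈ N.G l ↔ ∃ m, N.Feasible l m ∧ m e ≠ 0 := by
  rw [G, layer]
  rfl

theorem mem_B {x : ι} :
    x ∈ N.B l ↔ N.v x ≤ l ∧ ∀ m, N.Feasible l m → ∑ e, m e * N.u e x ≤ 0 := by
  rw [B, layer]
  rfl

theorem rowSetoid_le {i j : ℕ} {x : ι} (hi : 0 < i) (hj : 0 < j) (hl : i + j = l)
    (hx : x ∈ N.B i) : N.rowSetoid l x ≤ N.classes (N.G j) :=
  iInf₂_le_of_le i j <| iInf₂_le_of_le (by omega) (by omega) <| iInf₂_le hl hx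

theorem rowSetoid_apply {x : ι} {p q : Q} : N.rowSetoid l x p q ↔
    ∀ i j, i < l → j < l → i + j = l → x ∈ N.B i → N.classes (N.G j) p q := by
  unfold rowSetoid rowSetoidOf
  simp only [setoid_iInf_apply]
  exact ⟨fun h i j hi hj => h i j hi hj, fun h i j hi hj => h i j hi hj⟩

theorem Feasible.sum_nonneg (h : N.Feasible l m) {x : ι} (hx : N.v x ≤ l) :
    0 ≤ ∑ e, m e * N.u e x :=
  (h.nonneg x hx).sum_nonneg

theorem Feasible.zero : N.Feasible l 0 where
  isCirculation := fun q => by simp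
  mem_of_ne_zero := fun j _ e h => absurd rfl h
  nonneg := fun x _ p => by simp

theorem Feasible.add (h : N.Feasible l m) (h' : N.Feasible l m') : N.Feasible l (m + m') where
  isCirculation := fun q => by
    simp only [Pi.add_apply, Finset.sum_add_distrib, h.isCirculation q, h'.isCirculation q]
  mem_of_ne_zero := fun j hj e he => by
    by_cases hm : m e = 0
    · exact h'.mem_of_ne_zero j hj e fun hm' => he (by simp [hm, hm'])
    · exact h.mem_of_ne_zero j hj e hm
  nonneg := fun x hx => by
    simpa only [Pi.add_apply, Nat.cast_add, add_mul] using (h.nonneg x hx).add (h'.nonneg x hx)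

theorem Feasible.sum {I : Type*} (s : Finset I) {m : I → E → ℕ}
    (h : ∀ i ∈ s, N.Feasible l (m i)) : N.Feasible l (∑ i ∈ s, m i) :=
  Finset.sum_induction _ _ (fun _ _ => Feasible.add) Feasible.zero h

theorem G_anti {j l : ℕ} (h : j ≤ l) : N.G l ⊆ N.G j := by
  intro e he
  obtain rfl | hlt := h.eq_or_lt
  · exact he
  · obtain ⟨m, hm, hme⟩ := mem_G.1 he
    exact hm.mem_of_ne_zero j hlt e hme

end Layers

end Net

/-! ### Walks -/

namespace Net

variable {Q E ι : Type*} (N : Net Q E ι)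

/-- The list of edges `w` leads from `p` to `q`. -/
def Walk : Q → List E → Q → Prop
  | p, [], q => p = q
  | p, e :: w, q => N.src e = p ∧ Walk (N.tgt e) w q

/-- The total change of the counter `x` along `w`. -/
def eff (w : List E) (x : ι) : ℤ := (w.map fun e => N.u e x).sum

/-- Starting from the value `b`, the counter `x` stays nonnegative along `w`. -/
def Safe (x : ι) : ℤ → List E → Prop
  | b, [] => 0 ≤ b
  | b, e :: w => 0 ≤ b ∧ Safe x (b + N.u e x) w

variable {N} {p q r : Q} {w w' : List E} {x : ι} {a b : ℤ}

theorem Walk.append (h : N.Walk p w q) (h' : N.Walk q w' r) : N.Walk p (w ++ w') r := by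
  induction w generalizing p with
  | nil => exact Eq.symm h ▸ h'
  | cons e w ih => exact ⟨h.1, ih h.2⟩

theorem walk_append : N.Walk p (w ++ w') r ↔ ∃ q, N.Walk p w q ∧ N.Walk q w' r := by
  refine ⟨fun h => ?_, fun ⟨q, h, h'⟩ => h.append h'⟩
  induction w generalizing p with
  | nil => exact ⟨p, rfl, h⟩
  | cons e w ih =>
    obtain ⟨q, hq, hr⟩ := ih h.2
    exact ⟨q, ⟨h.1, hq⟩, hr⟩

theorem walk_concat {e : E} : N.Walk p (w ++ [e]) q ↔ N.Walk p w (N.src e) ∧ N.tgt e = q := by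
  rw [walk_append]
  exact ⟨fun ⟨_, h, he, hq⟩ => ⟨he ▸ h, hq⟩, fun ⟨h, hq⟩ => ⟨_, h, rfl, hq⟩⟩

@[simp]
theorem eff_nil : N.eff [] x = 0 := rfl

@[simp]
theorem eff_cons {e : E} : N.eff (e :: w) x = N.u e x + N.eff w x := List.sum_cons

@[simp]
theorem eff_append : N.eff (w ++ w') x = N.eff w x + N.eff w' x := by
  simp only [eff, List.map_append, List.sum_append]

theorem eff_eq_sum_count [Fintype E] : N.eff w x = ∑ e, w.count e * N.u e x := by
  rw [eff, Finset.sum_list_map_count]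
  simp only [nsmul_eq_mul]
  refine Finset.sum_subset (Finset.subset_univ _) fun e _ he => ?_
  rw [List.count_eq_zero.2 fun h => he (List.mem_toFinset.2 h), Nat.cast_zero, zero_mul]

theorem safe_append : N.Safe x b (w ++ w') ↔ N.Safe x b w ∧ N.Safe x (b + N.eff w x) w' := by
  induction w generalizing b with
  | nil =>
    cases w' with
    | nil => simp [Safe]
    | cons e w' => simp +contextual [Safe]
  | cons e w ih => simp only [List.cons_append, Safe, ih, eff_cons, and_assoc, add_assoc]

theorem Safe.mono (hab : a ≤ b) (h : N.Safe x a w) : N.Safe x b w := by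
  induction w generalizing a b with
  | nil => exact le_trans h hab
  | cons e w ih => exact ⟨h.1.trans hab, ih (by omega) h.2⟩

theorem Safe.nonneg (h : N.Safe x b w) : 0 ≤ b := by
  cases w with
  | nil => exact h
  | cons e w => exact h.1

theorem Safe.final (h : N.Safe x b w) : 0 ≤ b + N.eff w x := by
  rw [← w.append_nil, safe_append] at h
  exact h.2

/-! ### The upper bound -/

/-- A run of the net from `p` to `q`: a walk along which all counters stay nonnegative, starting
from values `y x` at most `n ^ v x`. -/
structure IsRun (N : Net Q E ι) (n : ℕ) (p : Q) (y : ι → ℤ) (w : List E) (q : Q) : Prop where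
  walk : N.Walk p w q
  safe : ∀ x, N.Safe x (y x) w
  le : ∀ x, y x ≤ n ^ N.v x

theorem IsRun.of_concat {n : ℕ} {y : ι → ℤ} {e : E} (h : N.IsRun n p y (w ++ [e]) q) :
    N.IsRun n p y w (N.src e) ∧ N.tgt e = q :=
  have hw := walk_concat.1 h.walk
  ⟨⟨hw.1, fun x => (safe_append.1 (h.safe x)).1, h.le⟩, hw.2⟩

section UpperBound

variable [Fintype E] (N) (l : ℕ)

/-- A linear ranking function `q, y ↦ ∑ x, R x q * y x + z q` for layer `l`: along the edges that
belong to all earlier layers it does not increase, and outside `G l` it decreases. -/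
structure IsRank [Fintype ι] (R : ι → Q → ℚ) (z : Q → ℚ) : Prop where
  nonneg : ∀ x q, 0 ≤ R x q
  eq_zero : ∀ x q, l < N.v x → R x q = 0
  eq_of_rowSetoid : ∀ x p q, N.rowSetoid l x p q → R x p = R x q
  one_le : ∀ x ∈ N.B l, ∀ q, 1 ≤ R x q
  step : ∀ e, (∀ j < l, e ∈ N.G j) →
    (if e ∈ N.G l then 0 else 1) + ∑ x, R x (N.src e) * N.u e x + z (N.tgt e) ≤ z (N.src e)

/-- The constant `C` witnesses the bounds claimed by layer `l`. -/
def IsBound (C : ℚ) : Prop :=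
  ∀ n ≥ 1, ∀ p y w q, N.IsRun n p y w q → (w.countP (· ∉ N.G l) : ℚ) ≤ C * n ^ l ∧
    ∀ x ∈ N.B l, ((y x + N.eff w x : ℤ) : ℚ) ≤ C * n ^ l

/-- The objective whose maximum over the circulations feasible in layer `l` is zero. -/
def objective [Fintype ι] (e : E) : ℤ :=
  (if e ∈ N.G l then 0 else 1) + ∑ x with x ∈ N.B l, N.u e x

variable {N l}

theorem Feasible.sum_objective_nonpos [Fintype ι] {m : E → ℕ} (h : N.Feasible l m) :
    ∑ e, m e * N.objective l e ≤ 0 := by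
  simp only [objective, mul_add, Finset.sum_add_distrib, Finset.mul_sum]
  rw [Finset.sum_comm]
  refine add_nonpos (Finset.sum_nonpos fun e _ => ?_) (Finset.sum_nonpos fun x hx => ?_)
  · by_cases he : m e = 0
    · simp [he]
    · simp [mem_G.2 ⟨m, h, he⟩]
  · exact (mem_B.1 (Finset.mem_filter.1 hx).2).2 m h

variable (N l) in
/-- The coefficients of the inequalities that define `Net.Feasible`. -/
def rowCoeff (i : ι × Q) (e : E) : ℤ :=
  if N.v i.1 ≤ l ∧ N.rowSetoid l i.1 i.2 (N.src e) then N.u e i.1 else 0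

variable (N l) in
/-- The coefficients of the equations that define `Net.Feasible`: conservation of flow, and the
exclusion of the edges missing in an earlier layer. -/
def flowCoeff : Q ⊕ Unit → E → ℤ :=
  Sum.elim (fun q e => (if N.tgt e = q then 1 else 0) - if N.src e = q then 1 else 0)
    fun _ e => if ∀ j < l, e ∈ N.G j then 0 else 1

theorem feasible_of_coeff {m : E → ℕ} (hrow : ∀ i, 0 ≤ ∑ e, m e * N.rowCoeff l i e)
    (hflow : ∀ j, ∑ e, m e * N.flowCoeff l j e = 0) : N.Feasible l m := by
  refine ⟨fun q => ?_, fun j hj e he => ?_, fun x hx p => ?_⟩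
  · have hq := hflow (.inl q)
    simp only [flowCoeff, Sum.elim_inl, mul_sub, mul_ite, mul_one, mul_zero,
      Finset.sum_sub_distrib, ← Finset.sum_filter, sub_eq_zero] at hq
    exact_mod_cast hq
  · have h0 := (Finset.sum_eq_zero_iff_of_nonneg fun e _ => by
      simp only [flowCoeff, Sum.elim_inr]; positivity).1 (hflow (.inr ())) e (Finset.mem_univ e)
    by_contra hej
    exact he (by simpa [flowCoeff, show ¬∀ j < l, e ∈ N.G j from fun h => hej (h j hj)] using h0)
  · have hx' := hrow (x, p)
    simp only [rowCoeff, hx, true_and, mul_ite, mul_zero, ← Finset.sum_filter] at hx'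
    exact hx'

/-- Farkas' lemma: the multipliers of the constraints that define `Net.Feasible` form a ranking
function. -/
theorem exists_isRank [Finite Q] [Fintype ι] : ∃ R z, N.IsRank l R z := by
  have := Fintype.ofFinite Q
  obtain ⟨t, z, ht, htz⟩ := exists_dual_of_forall_nat_eq (N.rowCoeff l) (N.flowCoeff l)
    (N.objective l) fun m hrow hflow => (feasible_of_coeff hrow hflow).sum_objective_nonpos
  refine ⟨fun x q => (if x ∈ N.B l then 1 else 0) +
    ∑ p, if N.v x ≤ l ∧ N.rowSetoid l x p q then t (x, p) else 0,
    fun q => z (.inl q), ?_, ?_, ?_, ?_, ?_⟩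
  · exact fun x q => add_nonneg (by positivity) <|
      Finset.sum_nonneg fun p _ => by split_ifs <;> simp [ht]
  · intro x q hx
    have hxB : x ∉ N.B l := fun h => not_le.2 hx (mem_B.1 h).1
    simp [not_le.2 hx, hxB]
  · intro x p q hpq
    have hiff (r) : N.rowSetoid l x r p ↔ N.rowSetoid l x r q :=
      ⟨fun h => (N.rowSetoid l x).trans h hpq,
        fun h => (N.rowSetoid l x).trans h ((N.rowSetoid l x).symm hpq)⟩
    simp only [hiff]
  · intro x hx q
    simp only [if_pos hx, le_add_iff_nonneg_right]
    exact Finset.sum_nonneg fun p _ => by split_ifs <;> simp [ht]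
  · intro e he
    have h := htz e
    simp only [objective, rowCoeff, flowCoeff, Fintype.sum_prod_type, Fintype.sum_sum_type,
      Sum.elim_inl, Sum.elim_inr, if_pos he, Finset.sum_filter] at h
    simp only [add_mul, Finset.sum_add_distrib, Finset.sum_mul]
    push_cast [mul_sub, Finset.sum_sub_distrib] at h
    simp only [mul_ite, ite_mul, one_mul, zero_mul, mul_one, mul_zero, Finset.sum_ite_eq,
      Finset.mem_univ, if_true, Finset.sum_const_zero] at h ⊢
    linarith

variable (N l) in
/-- An upper bound, up to a constant, for the increase of a ranking function of layer `l` at the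
edge `e`: if `e` is missing in layer `j`, the weight of a counter of order `n ^ (l - j)` may
change. -/
def price (n : ℕ) (e : E) : ℚ := ∑ j ∈ Finset.range l with e ∉ N.G j, (n : ℚ) ^ (l - j)

variable {C : ℚ} {n : ℕ}

theorem price_nonneg {e : E} : 0 ≤ N.price l n e :=
  Finset.sum_nonneg fun _ _ => by positivity

theorem pow_le_price {j : ℕ} {e : E} (hj : j < l) (he : e ∉ N.G j) :
    (n : ℚ) ^ (l - j) ≤ N.price l n e :=
  Finset.single_le_sum (f := fun j => (n : ℚ) ^ (l - j)) (fun _ _ => by positivity)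
    (Finset.mem_filter.2 ⟨Finset.mem_range.2 hj, he⟩)

theorem sum_price_eq (w : List E) : (w.map (N.price l n)).sum =
    ∑ j ∈ Finset.range l, (w.countP (· ∉ N.G j) : ℚ) * n ^ (l - j) := by
  induction w with
  | nil => simp
  | cons e w ih =>
    simp only [List.map_cons, List.sum_cons, ih, price, Finset.sum_filter, List.countP_cons,
      Nat.cast_add, add_mul, Finset.sum_add_distrib]
    rw [add_comm]
    simp

theorem sum_price_le {p q : Q} {y : ι → ℤ} {w : List E} (hb : ∀ i < l, N.IsBound i C)
    (hn : n ≥ 1) (hw : N.IsRun n p y w q) : (w.map (N.price l n)).sum ≤ l * C * n ^ l := by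
  rw [sum_price_eq]
  calc _ ≤ ∑ _ ∈ Finset.range l, C * (n : ℚ) ^ l := Finset.sum_le_sum fun j hj => by
        rw [Finset.mem_range] at hj
        calc _ ≤ C * (n : ℚ) ^ j * n ^ (l - j) := by
              gcongr
              exact (hb j hj n hn p y w q hw).1
          _ = C * (n : ℚ) ^ l := by rw [mul_assoc, ← pow_add, Nat.add_sub_cancel' hj.le]
    _ = l * C * n ^ l := by rw [Finset.sum_const, Finset.card_range, nsmul_eq_mul, mul_assoc]

theorem IsBound.mono {C' : ℚ} (h : N.IsBound l C) (hC : C ≤ C') : N.IsBound l C' :=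
  fun n hn p y w q hw =>
    have hle : C * (n : ℚ) ^ l ≤ C' * n ^ l := by gcongr
    have hb := h n hn p y w q hw
    ⟨hb.1.trans hle, fun x hx => (hb.2 x hx).trans hle⟩

/-- The value of a ranking function. -/
def potential [Fintype ι] (R : ι → Q → ℚ) (z : Q → ℚ) (q : Q) (y : ι → ℤ) : ℚ :=
  ∑ x, R x q * y x + z q

variable [Fintype ι] {R : ι → Q → ℚ} {z : Q → ℚ}

theorem IsRank.sub_mul_le (h : N.IsRank l R z) (hC : 0 ≤ C) (e : E) (x : ι) {y : ℤ} (hy : 0 ≤ y)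
    (hyC : ∀ i < l, x ∈ N.B i → y ≤ C * n ^ i) :
    (R x (N.tgt e) - R x (N.src e)) * y ≤ R x (N.tgt e) * C * N.price l n e := by
  have hR : 0 ≤ R x (N.tgt e) := h.nonneg x _
  by_cases hst : N.rowSetoid l x (N.src e) (N.tgt e)
  · rw [h.eq_of_rowSetoid x _ _ hst, sub_self, zero_mul]
    exact mul_nonneg (mul_nonneg hR hC) price_nonneg
  · simp only [rowSetoid_apply, not_forall] at hst
    obtain ⟨i, j, hi, hj, hij, hx, hG⟩ := hst
    calc (R x (N.tgt e) - R x (N.src e)) * y ≤ R x (N.tgt e) * y := by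
          gcongr
          exact sub_le_self _ (h.nonneg x _)
      _ ≤ R x (N.tgt e) * (C * n ^ (l - j)) := by
          rw [show l - j = i by omega]
          gcongr
          exact hyC i hi hx
      _ ≤ R x (N.tgt e) * (C * N.price l n e) := by
          gcongr
          exact pow_le_price hj fun he => hG (N.classes_edge he)
      _ = _ := (mul_assoc _ _ _).symm

theorem IsRank.exists_potential_step_le (h : N.IsRank l R z) (hC : 0 ≤ C) : ∃ D ≥ 0,
    ∀ n : ℕ, 1 ≤ n → ∀ e (y : ι → ℤ), (∀ x, 0 ≤ y x) →
      (∀ i < l, ∀ x ∈ N.B i, y x ≤ C * n ^ i) →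
      potential R z (N.tgt e) y + (if e ∈ N.G l then 0 else 1) ≤
        potential R z (N.src e) (fun x => y x - N.u e x) + D * N.price l n e := by
  let a (e : E) : ℚ := (if e ∈ N.G l then 0 else 1) + ∑ x, R x (N.src e) * N.u e x +
    z (N.tgt e) - z (N.src e)
  let D (e : E) : ℚ := |a e| + ∑ x, R x (N.tgt e) * C
  have hD (e : E) : 0 ≤ D e :=
    add_nonneg (abs_nonneg _) (Finset.sum_nonneg fun x _ => mul_nonneg (h.nonneg x _) hC)
  refine ⟨∑ e, D e, Finset.sum_nonneg fun e _ => hD e, fun n hn e y hy hyC => ?_⟩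
  have ha : a e ≤ |a e| * N.price l n e := by
    by_cases he : ∀ j < l, e ∈ N.G j
    · have := h.step e he
      exact (show a e ≤ 0 by simp only [a]; linarith).trans (mul_nonneg (abs_nonneg _) price_nonneg)
    · push Not at he
      obtain ⟨j, hj, hej⟩ := he
      have h1 : 1 ≤ N.price l n e :=
        (one_le_pow₀ (by exact_mod_cast hn)).trans (pow_le_price hj hej)
      exact (le_abs_self _).trans (le_mul_of_one_le_right (abs_nonneg _) h1)
  have hR : ∑ x, (R x (N.tgt e) - R x (N.src e)) * y x ≤
      (∑ x, R x (N.tgt e) * C) * N.price l n e := by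
    rw [Finset.sum_mul]
    exact Finset.sum_le_sum fun x _ => h.sub_mul_le hC e x (hy x) fun i hi hx => hyC i hi x hx
  have hDe : D e * N.price l n e ≤ (∑ e, D e) * N.price l n e :=
    mul_le_mul_of_nonneg_right (Finset.single_le_sum (fun e _ => hD e) (Finset.mem_univ e))
      price_nonneg
  simp only [potential, a, D, sub_mul, add_mul, Int.cast_sub, mul_sub,
    Finset.sum_sub_distrib] at *
  linarith

theorem IsRank.exists_potential_le (h : N.IsRank l R z) (hC : 0 ≤ C)
    (hb : ∀ i < l, N.IsBound i C) : ∃ D ≥ 0, ∀ n : ℕ, 1 ≤ n → ∀ p y w q, N.IsRun n p y w q →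
      potential R z q (fun x => y x + N.eff w x) + w.countP (· ∉ N.G l) ≤
        potential R z p y + D * (w.map (N.price l n)).sum := by
  obtain ⟨D, hD, hstep⟩ := h.exists_potential_step_le hC
  refine ⟨D, hD, fun n hn p y w => ?_⟩
  induction w using List.reverseRecOn with
  | nil =>
    intro q hw
    have hpq : p = q := hw.walk
    simp [hpq]
  | append_singleton w e ih =>
    intro q hw
    obtain ⟨hw', rfl⟩ := hw.of_concat
    have hprefix := ih _ hw'
    have hlast := hstep n hn e (fun x => y x + N.eff (w ++ [e]) x) (fun x => (hw.safe x).final)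
      fun i hi x hx => (hb i hi n hn p y _ _ hw).2 x hx
    have hsub (x) : y x + N.eff (w ++ [e]) x - N.u e x = y x + N.eff w x := by simp; ring
    simp only [hsub] at hlast
    simp only [List.countP_append, List.countP_singleton, List.map_append, List.sum_append,
      List.map_singleton, List.sum_singleton, decide_not, Bool.not_eq_true',
      decide_eq_false_iff_not, ite_not, Nat.cast_add, mul_add] at *
    push_cast
    linarith

theorem IsRank.exists_potential_abs_le [Finite Q] (h : N.IsRank l R z) :
    ∃ K ≥ 0, ∀ n : ℕ, 1 ≤ n → ∀ p, |z p| ≤ K * n ^ l ∧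
      ∀ y : ι → ℤ, (∀ x, y x ≤ n ^ N.v x) → potential R z p y ≤ K * n ^ l := by
  have := Fintype.ofFinite Q
  let K (p : Q) : ℚ := ∑ x, R x p + |z p|
  have hK (p : Q) : 0 ≤ K p :=
    add_nonneg (Finset.sum_nonneg fun x _ => h.nonneg x p) (abs_nonneg _)
  refine ⟨∑ p, K p, Finset.sum_nonneg fun p _ => hK p, fun n hn p => ?_⟩
  have hn1 : (1 : ℚ) ≤ n := by exact_mod_cast hn
  have hnl : (1 : ℚ) ≤ n ^ l := one_le_pow₀ hn1
  have hKp : K p * n ^ l ≤ (∑ p, K p) * n ^ l := by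
    gcongr
    exact Finset.single_le_sum (fun p _ => hK p) (Finset.mem_univ p)
  have hz : |z p| ≤ |z p| * n ^ l := le_mul_of_one_le_right (abs_nonneg _) hnl
  refine ⟨le_trans ?_ hKp, fun y hyn => le_trans ?_ hKp⟩
  · refine hz.trans ?_
    gcongr
    exact le_add_of_nonneg_left (Finset.sum_nonneg fun x _ => h.nonneg x p)
  · rw [potential, add_mul, Finset.sum_mul]
    refine add_le_add (Finset.sum_le_sum fun x _ => ?_) ((le_abs_self _).trans hz)
    by_cases hx : l < N.v x
    · simp [h.eq_zero x p hx]
    · refine mul_le_mul_of_nonneg_left ?_ (h.nonneg x p)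
      have hyx : (y x : ℚ) ≤ n ^ N.v x := by exact_mod_cast hyn x
      exact hyx.trans (pow_le_pow_right₀ hn1 (not_lt.1 hx))

theorem IsRank.exists_isBound [Finite Q] (h : N.IsRank l R z) (hC : 0 ≤ C)
    (hb : ∀ i < l, N.IsBound i C) : ∃ C' ≥ 0, N.IsBound l C' := by
  obtain ⟨D, hD, hdec⟩ := h.exists_potential_le hC hb
  obtain ⟨K, hK, hbd⟩ := h.exists_potential_abs_le
  refine ⟨2 * K + D * (l * C), by positivity, fun n hn p y w q hw => ?_⟩
  have hpot := hdec n hn p y w q hw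
  have hstart := (hbd n hn p).2 y hw.le
  have hprice := mul_le_mul_of_nonneg_left (sum_price_le hb hn hw) hD
  have hz := neg_le_of_abs_le (hbd n hn q).1
  have hterm (x) : 0 ≤ R x q * ((y x + N.eff w x : ℤ) : ℚ) :=
    mul_nonneg (h.nonneg x q) (by exact_mod_cast (hw.safe x).final)
  simp only [potential] at hpot hstart
  refine ⟨?_, fun x hx => ?_⟩
  · have hsum := Finset.sum_nonneg fun x (_ : x ∈ Finset.univ) => hterm x
    linarith
  · have hx_le := Finset.single_le_sum (fun x _ => hterm x) (Finset.mem_univ x)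
    have hR := le_mul_of_one_le_left (by exact_mod_cast (hw.safe x).final :
      (0 : ℚ) ≤ ((y x + N.eff w x : ℤ) : ℚ)) (h.one_le x hx q)
    linarith

end UpperBound

theorem exists_isBound [Fintype E] [Finite Q] [Finite ι] (l : ℕ) : ∃ C ≥ 0, N.IsBound l C := by
  have := Fintype.ofFinite ι
  induction l using Nat.strong_induction_on with | _ l ih
  choose! C hC hb using ih
  obtain ⟨R, z, h⟩ := N.exists_isRank (l := l)
  refine h.exists_isBound (C := ∑ i ∈ Finset.range l, C i) (Finset.sum_nonneg fun i hi =>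
    hC i (Finset.mem_range.1 hi)) fun i hi => (hb i hi).mono ?_
  exact Finset.single_le_sum (fun i hi => hC i (Finset.mem_range.1 hi)) (Finset.mem_range.2 hi)

end Net

/-! ### Euler circuits -/

namespace Net

variable {Q E ι : Type*} {N : Net Q E ι} {p q : Q} {w : List E}

theorem Walk.classes {S : Set E} (h : N.Walk p w q) (hS : ∀ e ∈ w, e ∈ S) : N.classes S p q := by
  induction w generalizing p with
  | nil => exact Eq.rec ((N.classes S).refl p) (show p = q from h)
  | cons e w ih =>
    refine (N.classes S).trans ?_ (ih h.2 fun e' he' => hS e' (List.mem_cons_of_mem _ he'))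
    exact h.1 ▸ N.classes_edge (hS e List.mem_cons_self)

theorem Walk.right_unique {r : Q} (h : N.Walk p w q) (h' : N.Walk p w r) : q = r := by
  induction w generalizing p with
  | nil => exact h.symm.trans h'
  | cons e w ih => exact ih h.2 h'.2

/-- `w`, started at `p`, passes through `q`. -/
def Visits (N : Net Q E ι) (p : Q) (w : List E) (q : Q) : Prop :=
  ∃ w₁ w₂, w = w₁ ++ w₂ ∧ N.Walk p w₁ q

theorem Walk.visits_of_mem (h : N.Walk p w q) {e : E} (he : e ∈ w) :
    N.Visits p w (N.src e) ∧ N.Visits p w (N.tgt e) := by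
  obtain ⟨w₁, w₂, rfl⟩ := List.append_of_mem he
  obtain ⟨_, h₁, rfl, -⟩ := walk_append.1 h
  exact ⟨⟨w₁, e :: w₂, rfl, h₁⟩, w₁ ++ [e], w₂, by simp, walk_concat.2 ⟨h₁, rfl⟩⟩

theorem length_eq_sum_count [Fintype E] (w : List E) : w.length = ∑ e, w.count e := by
  rw [← List.sum_toFinset_count_eq_length]
  refine Finset.sum_subset (Finset.subset_univ _) fun e _ he => ?_
  exact List.count_eq_zero.2 fun h => he (List.mem_toFinset.2 h)

/-- Bounding the multiplicities of the edges bounds the length, so a longest list exists. -/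
theorem exists_longest [Finite E] {P : List E → Prop} {m : E → ℕ}
    (hP : ∃ w, P w) (hm : ∀ w, P w → ∀ e, w.count e ≤ m e) :
    ∃ w, P w ∧ ∀ w', P w' → w'.length ≤ w.length := by
  have := Fintype.ofFinite E
  let lengths := {k | ∃ w, P w ∧ w.length = k}
  have hbdd : BddAbove lengths := ⟨∑ e, m e, by
    rintro _ ⟨w, hw, rfl⟩
    exact (length_eq_sum_count w).trans_le (Finset.sum_le_sum fun e _ => hm w hw e)⟩
  obtain ⟨w, hw, hlen⟩ := Nat.sSup_mem (s := lengths) (hP.imp' _ fun w hw => ⟨w, hw, rfl⟩) hbdd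
  exact ⟨w, hw, fun w' hw' => hlen ▸ le_csSup hbdd ⟨w', hw', rfl⟩⟩

variable [Fintype E]

theorem sum_count_cons (P : E → Prop) (e : E) (w : List E) :
    ∑ e' with P e', (e :: w).count e' = ∑ e' with P e', w.count e' + if P e then 1 else 0 := by
  simp only [List.count_cons, Finset.sum_add_distrib, beq_iff_eq, Finset.sum_ite_eq,
    Finset.mem_filter_univ]

theorem Walk.sum_count_tgt (h : N.Walk p w q) (r : Q) :
    ∑ e with N.tgt e = r, w.count e + (if p = r then 1 else 0) =
      ∑ e with N.src e = r, w.count e + if q = r then 1 else 0 := by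
  induction w generalizing p with
  | nil => rw [show p = q from h]; simp
  | cons e w ih =>
    obtain ⟨rfl, h⟩ := h
    have := ih h
    rw [sum_count_cons, sum_count_cons]
    omega

theorem IsCirculation.sub_count {m : E → ℕ} (hm : N.IsCirculation m) (hw : N.Walk p w p)
    (hwm : ∀ e, w.count e ≤ m e) : N.IsCirculation fun e => m e - w.count e := by
  intro q
  have h := hw.sum_count_tgt q
  rw [Finset.sum_tsub_distrib _ fun e _ => hwm e, Finset.sum_tsub_distrib _ fun e _ => hwm e, hm q]
  omega

theorem IsCirculation.exists_closed_trail {m : E → ℕ} (hm : N.IsCirculation m) {e : E}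
    (he : m e ≠ 0) : ∃ w, w ≠ [] ∧ N.Walk (N.src e) w (N.src e) ∧ ∀ e', w.count e' ≤ m e' := by
  obtain ⟨w, ⟨q, hw, hne, hwm⟩, hmax⟩ := exists_longest
    (P := fun w => ∃ q, N.Walk (N.src e) w q ∧ w ≠ [] ∧ ∀ e', w.count e' ≤ m e') (m := m)
    ⟨[e], N.tgt e, ⟨rfl, rfl⟩, by simp, fun e' => by
      by_cases h : e = e'
      · subst h; simpa using Nat.one_le_iff_ne_zero.2 he
      · simp [h]⟩ fun w ⟨_, _, _, hwm⟩ => hwm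
  suffices hq : N.src e = q from ⟨w, hne, hq ▸ hw, hwm⟩
  -- otherwise the walk has entered `q` once more than it has left it, and can be prolonged
  by_contra hq
  have hcount := hw.sum_count_tgt q
  rw [if_neg hq, if_pos rfl, add_zero] at hcount
  have hlt : ∑ e with N.src e = q, w.count e < ∑ e with N.src e = q, m e := by
    rw [← hm q, Nat.lt_iff_add_one_le, ← hcount]
    exact Finset.sum_le_sum fun e _ => hwm e
  obtain ⟨e', he', hlt⟩ := Finset.exists_lt_of_sum_lt hlt
  have hsrc := (Finset.mem_filter.1 he').2
  have hlen := hmax (w ++ [e']) ⟨N.tgt e', walk_concat.2 ⟨hsrc ▸ hw, rfl⟩, by simp, fun e'' => by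
    by_cases h : e' = e''
    · subst h; simpa using hlt
    · simpa [h] using hwm e''⟩
  simp at hlen

/-- A longest closed walk exhausts all edges at the states it visits, since a closed trail of unused
edges could be inserted there. -/
theorem IsCirculation.exists_exhausting_walk {m : E → ℕ} (hm : N.IsCirculation m) (p : Q) :
    ∃ w, N.Walk p w p ∧ (∀ e, w.count e ≤ m e) ∧
      ∀ e, N.Visits p w (N.src e) ∨ N.Visits p w (N.tgt e) → w.count e = m e := by
  obtain ⟨w, ⟨hw, hwm⟩, hmax⟩ := exists_longest
    (P := fun w => N.Walk p w p ∧ ∀ e, w.count e ≤ m e) (m := m)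
    ⟨[], rfl, by simp⟩ fun w hw => hw.2
  have hm' := hm.sub_count hw hwm
  have hsrc (e : E) (he : N.Visits p w (N.src e)) : m e - w.count e = 0 := by
    by_contra hne
    obtain ⟨t, htne, ht, htm⟩ := hm'.exists_closed_trail hne
    obtain ⟨w₁, w₂, rfl, hw₁⟩ := he
    obtain ⟨q, hq, hw₂⟩ := walk_append.1 hw
    rw [hq.right_unique hw₁] at hw₂
    have hlen := hmax (w₁ ++ (t ++ w₂)) ⟨hw₁.append (ht.append hw₂), fun e' => by
      have h₁ := hwm e'
      have h₂ := htm e'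
      simp only [List.count_append] at h₁ h₂ ⊢
      omega⟩
    have := List.length_pos_of_ne_nil htne
    simp only [List.length_append] at hlen
    omega
  have htgt (e : E) (he : N.Visits p w (N.tgt e)) : m e - w.count e = 0 := by
    have hin := hm' (N.tgt e)
    rw [Finset.sum_eq_zero (s := {e' | N.src e' = N.tgt e}) fun e' he' =>
      hsrc e' ((Finset.mem_filter.1 he').2 ▸ he), Finset.sum_eq_zero_iff] at hin
    exact hin e (Finset.mem_filter.2 ⟨Finset.mem_univ e, rfl⟩)
  exact ⟨w, hw, hwm, fun e he =>
    le_antisymm (hwm e) (Nat.sub_eq_zero_iff_le.1 (he.elim (hsrc e) (htgt e)))⟩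

theorem IsCirculation.exists_euler_circuit {m : E → ℕ} (hm : N.IsCirculation m) (p : Q) :
    ∃ w, N.Walk p w p ∧
      ∀ e, w.count e = if N.classes {e | m e ≠ 0} p (N.src e) then m e else 0 := by
  obtain ⟨w, hw, hwm, hex⟩ := hm.exists_exhausting_walk p
  have hsupp (e : E) (he : e ∈ w) : m e ≠ 0 :=
    fun h => (List.count_pos_iff.2 he).not_ge (h ▸ hwm e)
  have hvisits (q : Q) (hq : N.classes {e | m e ≠ 0} p q) : N.Visits p w q := by
    have hmem (e : E) (hme : m e ≠ 0) (h : N.Visits p w (N.src e) ∨ N.Visits p w (N.tgt e)) :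
        e ∈ w := List.count_pos_iff.1 (hex e h ▸ Nat.pos_of_ne_zero hme)
    have hs : N.classes {e | m e ≠ 0} ≤ Setoid.comap (N.Visits p w) ⊥ :=
      N.classes_le fun e he => propext
        ⟨fun h => (hw.visits_of_mem (hmem e he (.inl h))).2,
          fun h => (hw.visits_of_mem (hmem e he (.inr h))).1⟩
    exact (show N.Visits p w p = N.Visits p w q from hs hq) ▸ ⟨[], w, rfl, rfl⟩
  refine ⟨w, hw, fun e => ?_⟩
  split_ifs with he
  · exact hex e (.inl (hvisits _ he))
  · refine List.count_eq_zero.2 fun hew => he ?_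
    obtain ⟨w₁, w₂, rfl, hw₁⟩ := (hw.visits_of_mem hew).1
    exact hw₁.classes fun e' he' => hsupp e' (List.mem_append_left _ he')

end Net

/-! ### Nested walks -/

namespace Net

variable {Q E ι : Type*} {N : Net Q E ι} {p q : Q} {w w' : List E} {x : ι}

theorem Walk.flatten_replicate (h : N.Walk p w p) (n : ℕ) :
    N.Walk p (List.replicate n w).flatten p := by
  induction n with
  | zero => rfl
  | succ n ih => exact h.append ih

theorem eff_flatten_replicate (n : ℕ) : N.eff (List.replicate n w).flatten x = n * N.eff w x := by
  induction n with
  | zero => simp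
  | succ n ih =>
    rw [List.replicate_succ, List.flatten_cons, eff_append, ih]
    push_cast
    ring

/-- `A` pays for the drift of the complete rounds, and `B` for the dip inside one round. -/
theorem Safe.flatten_replicate {n : ℕ} {A B : ℤ} (hA : ∀ r ≤ n, -A ≤ r * N.eff w x)
    (hB : N.Safe x B w) : N.Safe x (A + B) (List.replicate n w).flatten := by
  induction n with
  | zero =>
    have hA0 := hA 0 le_rfl
    rw [Nat.cast_zero, zero_mul] at hA0
    exact add_nonneg (by omega) hB.nonneg
  | succ n ih =>
    rw [List.replicate_succ', List.flatten_append, List.flatten_singleton, safe_append]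
    refine ⟨ih fun r hr => hA r (by omega), hB.mono ?_⟩
    have hAn := hA n n.le_succ
    rw [eff_flatten_replicate]
    omega

section Weave

variable (N) (s : Setoid Q) (W : Q → List E)

/-- The list of edges `w` with the closed walk `W q` inserted at the first state `q` of each class
of `s` that `w` visits. It is built from the end of `w`, and the edges of `w` before the current one
decide which classes have been visited. -/
inductive Weave : List E → List E → Prop
  | nil : Weave [] []
  | seen {w w' : List E} {a : E} : Weave w w' → (∃ b ∈ w, s (N.src b) (N.src a)) →
      Weave (w ++ [a]) (w' ++ [a])
  | new {w w' : List E} {a : E} : Weave w w' → (¬∃ b ∈ w, s (N.src b) (N.src a)) →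
      Weave (w ++ [a]) (w' ++ (W (N.src a) ++ [a]))

variable {N s W}

theorem exists_weave (w : List E) : ∃ w', N.Weave s W w w' := by
  induction w using List.reverseRecOn with
  | nil => exact ⟨[], .nil⟩
  | append_singleton w a ih =>
    obtain ⟨w', h⟩ := ih
    by_cases ha : ∃ b ∈ w, s (N.src b) (N.src a)
    · exact ⟨_, h.seen ha⟩
    · exact ⟨_, h.new ha⟩

theorem Weave.walk (h : N.Weave s W w w') (hW : ∀ q, N.Walk q (W q) q) (hw : N.Walk p w q) :
    N.Walk p w' q := by
  induction h generalizing q with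
  | nil => exact hw
  | seen _ _ ih =>
    obtain ⟨hp, hq⟩ := walk_concat.1 hw
    exact walk_concat.2 ⟨ih hp, hq⟩
  | new _ _ ih =>
    obtain ⟨hp, hq⟩ := walk_concat.1 hw
    exact (ih hp).append (walk_concat.2 ⟨hW _, hq⟩)

theorem Weave.count {c : E → ℕ} (h : N.Weave s W w w')
    (hc : ∀ q e, (W q).count e = if s q (N.src e) then c e else 0) (e : E) :
    w'.count e = w.count e + if ∃ a ∈ w, s (N.src a) (N.src e) then c e else 0 := by
  have hex (w : List E) (a : E) : (∃ b ∈ w ++ [a], s (N.src b) (N.src e)) ↔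
      (∃ b ∈ w, s (N.src b) (N.src e)) ∨ s (N.src a) (N.src e) := by
    simp [or_and_right, exists_or]
  induction h with
  | nil => simp
  | @seen w w' a _ ha ih =>
    have hae : s (N.src a) (N.src e) → ∃ b ∈ w, s (N.src b) (N.src e) := fun hae =>
      ha.imp fun b hb => ⟨hb.1, s.trans hb.2 hae⟩
    simp only [List.count_append, ih, hex, or_iff_left_of_imp hae]
    omega
  | @new w w' a _ ha ih =>
    have hae (hae : s (N.src a) (N.src e)) : ¬∃ b ∈ w, s (N.src b) (N.src e) := fun hb =>
      ha (hb.imp fun b hb => ⟨hb.1, s.trans hb.2 (s.symm hae)⟩)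
    simp only [List.count_append, ih, hex, hc]
    by_cases hs : s (N.src a) (N.src e)
    · simp only [hs, hae hs, or_true, if_true, if_false]
      omega
    · simp only [hs, or_false, if_false]
      omega

theorem Weave.safe {A U : ℤ} (h : N.Weave s W w w') (hU : ∀ e, |N.u e x| ≤ U)
    (hA : ∀ q, N.Safe x A (W q)) : N.Safe x (w.length * (A + U)) w' := by
  induction h with
  | nil => simp [Safe]
  | @seen w w' a _ _ ih =>
    have hA0 := (hA (N.src a)).nonneg
    have ha := abs_le.1 (hU a)
    have hfin := ih.final
    rw [List.length_append, List.length_singleton, Nat.cast_succ, add_one_mul, safe_append]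
    refine ⟨ih.mono (by omega), by omega, ?_⟩
    change 0 ≤ _
    omega
  | @new w w' a _ _ ih =>
    have hA0 := (hA (N.src a)).nonneg
    have ha := abs_le.1 (hU a)
    have hfin := ih.final
    have hWfin := (hA (N.src a)).final
    rw [List.length_append, List.length_singleton, Nat.cast_succ, add_one_mul, safe_append,
      safe_append]
    refine ⟨ih.mono (by omega), (hA _).mono (by omega), by omega, ?_⟩
    change 0 ≤ _
    omega

end Weave

end Net

/-! ### The lower bound -/

namespace Net

variable {Q E ι : Type*} {N : Net Q E ι}

section Generic

variable [Fintype E]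

/-- A circulation that is feasible in layer `l`, uses all edges of `G l` and increases all counters
that could be, but are not bounded in layer `l`. -/
structure IsGeneric (N : Net Q E ι) (l : ℕ) (m : E → ℕ) : Prop where
  feasible : N.Feasible l m
  ne_zero_iff : ∀ e, m e ≠ 0 ↔ e ∈ N.G l
  pos : ∀ x, N.v x ≤ l → x ∉ N.B l → 0 < ∑ e, m e * N.u e x

theorem exists_isGeneric [Finite ι] (l : ℕ) : ∃ m, N.IsGeneric l m := by
  have := Fintype.ofFinite ι
  have hedge (e : E) : ∃ m, N.Feasible l m ∧ (e ∈ N.G l → m e ≠ 0) := by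
    by_cases he : e ∈ N.G l
    · exact (mem_G.1 he).imp fun m hm => ⟨hm.1, fun _ => hm.2⟩
    · exact ⟨0, .zero, fun h => absurd h he⟩
  have hcounter (x : ι) :
      ∃ m, N.Feasible l m ∧ (N.v x ≤ l → x ∉ N.B l → 0 < ∑ e, m e * N.u e x) := by
    by_cases hx : N.v x ≤ l ∧ x ∉ N.B l
    · have hm := hx.2
      simp only [mem_B, hx.1, true_and, not_forall, not_le] at hm
      obtain ⟨m, hm, hpos⟩ := hm
      exact ⟨m, hm, fun _ _ => hpos⟩
    · exact ⟨0, .zero, fun h h' => absurd ⟨h, h'⟩ hx⟩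
  choose m₁ hm₁ hne using hedge
  choose m₂ hm₂ hpos using hcounter
  have hm : ∀ i, N.Feasible l (Sum.elim m₁ m₂ i) := Sum.rec hm₁ hm₂
  have hsum := Feasible.sum Finset.univ (m := Sum.elim m₁ m₂) fun i _ => hm i
  refine ⟨_, hsum, fun e => ⟨fun he => mem_G.2 ⟨_, hsum, he⟩, fun he h0 => hne e he ?_⟩,
    fun x hx hxB => ?_⟩
  · rw [Finset.sum_apply, Finset.sum_eq_zero_iff] at h0
    exact h0 (.inl e) (Finset.mem_univ _)
  · simp only [Finset.sum_apply, Nat.cast_sum, Finset.sum_mul]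
    rw [Finset.sum_comm]
    exact Finset.sum_pos' (fun i _ => (hm i).sum_nonneg hx)
      ⟨.inr x, Finset.mem_univ _, hpos x hx hxB⟩

/-- No counter constrains layer `0`, and every edge of a strongly connected net lies on a closed
walk. -/
theorem mem_G_zero (hv : ∀ x, 1 ≤ N.v x) (hconn : ∀ p q, ∃ w, N.Walk p w q) (e : E) :
    e ∈ N.G 0 := by
  obtain ⟨w, hw⟩ := hconn (N.tgt e) (N.src e)
  have hclosed : N.Walk (N.src e) (e :: w) (N.src e) := ⟨rfl, hw⟩
  refine mem_G.2 ⟨(e :: w).count, ⟨fun q => ?_, fun j hj => absurd hj j.not_lt_zero,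
    fun x hx => absurd ((hv x).trans hx) (by omega)⟩, by simp⟩
  exact Nat.add_right_cancel (hclosed.sum_count_tgt q)

theorem classes_G_zero (hv : ∀ x, 1 ≤ N.v x) (hconn : ∀ p q, ∃ w, N.Walk p w q) (p q : Q) :
    N.classes (N.G 0) p q :=
  have ⟨_, hw⟩ := hconn p q
  hw.classes fun e _ => mem_G_zero hv hconn e

end Generic

section Order

variable [Fintype E]

/-- The exponent of the counter `x`: the first layer in which it is bounded. -/
def exponent (N : Net Q E ι) (x : ι) : ℕ∞ := sInf ((↑) '' {k : ℕ | x ∈ N.B k})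

/-- The exponent that the first `K` layers provide for the counter `x`. -/
def order (N : Net Q E ι) (K : ℕ) (x : ι) : ℕ := sInf {j | N.v x ≤ j ∧ (x ∈ N.B j ∨ K ≤ j)}

theorem v_le_exponent (x : ι) : N.v x ≤ N.exponent x := by
  refine le_sInf ?_
  rintro _ ⟨k, hk, rfl⟩
  exact_mod_cast (mem_B.1 hk).1

theorem mem_B_of_exponent_eq {x : ι} {k : ℕ} (h : N.exponent x = k) : x ∈ N.B k := by
  have hne : ((↑) '' {k : ℕ | x ∈ N.B k} : Set ℕ∞).Nonempty := by
    by_contra hne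
    rw [exponent, Set.not_nonempty_iff_eq_empty.1 hne, sInf_empty] at h
    exact ENat.top_ne_natCast k h
  obtain ⟨j, hj, hjk⟩ := csInf_mem hne
  rwa [Nat.cast_injective (hjk.trans h)] at hj

theorem order_spec (K : ℕ) (x : ι) :
    N.v x ≤ N.order K x ∧ (x ∈ N.B (N.order K x) ∨ K ≤ N.order K x) :=
  Nat.sInf_mem (s := {j | N.v x ≤ j ∧ (x ∈ N.B j ∨ K ≤ j)})
    ⟨max (N.v x) K, le_max_left .., .inr (le_max_right ..)⟩

theorem order_le {K j : ℕ} {x : ι} (hv : N.v x ≤ j) (hj : x ∈ N.B j ∨ K ≤ j) : N.order K x ≤ j :=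
  Nat.sInf_le ⟨hv, hj⟩

theorem order_zero (x : ι) : N.order 0 x = N.v x :=
  (order_le le_rfl (.inr (Nat.zero_le _))).antisymm (order_spec 0 x).1

theorem order_le_order_succ (K : ℕ) (x : ι) : N.order K x ≤ N.order (K + 1) x :=
  have ⟨hv, h⟩ := N.order_spec (K + 1) x
  order_le hv (h.imp_right (Nat.le_succ K).trans)

theorem order_succ (K : ℕ) (x : ι) : N.order (K + 1) x = N.order K x ∨
    N.order (K + 1) x = K + 1 ∧ N.v x ≤ K ∧ x ∉ N.B K := by
  obtain ⟨hv, h⟩ := N.order_spec K x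
  by_cases hK : x ∈ N.B (N.order K x) ∨ K + 1 ≤ N.order K x
  · exact .inl ((order_le hv hK).antisymm (order_le_order_succ K x))
  · obtain ⟨hB, hlt⟩ := not_or.1 hK
    have hord : N.order K x = K := by have := h.resolve_left hB; omega
    rw [hord] at hv hB
    have hle := order_le (hv.trans (Nat.le_add_right K 1)) (.inr le_rfl : x ∈ N.B (K + 1) ∨ _)
    have hne : N.order (K + 1) x ≠ K := fun h' => by
      have hspec := (N.order_spec (K + 1) x).2
      rw [h'] at hspec
      exact hspec.elim hB (by omega)
    have hge := order_le_order_succ (N := N) K x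
    exact .inr ⟨by omega, hv, hB⟩

theorem le_order {K k : ℕ} {x : ι} (hkK : k ≤ K) (hk : k ≤ N.exponent x) : k ≤ N.order K x :=
  (N.order_spec K x).2.elim
    (fun hB => by exact_mod_cast hk.trans (sInf_le ⟨_, hB, rfl⟩)) hkK.trans

theorem Feasible.nonnegOnClasses (hv : ∀ x, 1 ≤ N.v x) (hconn : ∀ p q, ∃ w, N.Walk p w q)
    {j l K : ℕ} {m : E → ℕ} (hm : N.Feasible j m) (hjK : j ≤ K) {x : ι}
    (hx : N.order K x + l ≤ j) :
    N.NonnegOnClasses (N.classes (N.G l)) fun e => m e * N.u e x := by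
  obtain ⟨hvx, hB⟩ := N.order_spec K x
  obtain heq | hlt := (Nat.le_of_add_right_le hx).eq_or_lt
  · obtain rfl : l = 0 := by omega
    intro p
    rw [Finset.filter_true_of_mem fun e _ => classes_G_zero hv hconn p (N.src e)]
    exact hm.sum_nonneg (by omega)
  · refine (hm.nonneg x (by omega)).mono ?_
    exact (rowSetoid_le ((hv x).trans hvx) (Nat.sub_pos_of_lt hlt) (by omega)
      (hB.resolve_right (by omega))).trans (N.classes_mono (G_anti (by omega)))

end Order

section Nested

variable [Fintype E]

/-- `D` bounds the updates, the total multiplicity of the circulations `mu j` for `j ≤ K`, and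
their effect on any set of states. -/
structure IsCostBound (N : Net Q E ι) (mu : ℕ → E → ℕ) (K D : ℕ) : Prop where
  abs_le : ∀ e x, |N.u e x| ≤ D
  sum_le : ∀ j ≤ K, ∑ e, mu j e ≤ D
  sum_mul_abs_le : ∀ j ≤ K, ∀ x, ∑ e, mu j e * |N.u e x| ≤ D

theorem exists_isCostBound [Finite ι] (mu : ℕ → E → ℕ) (K : ℕ) : ∃ D, N.IsCostBound mu K D := by
  obtain ⟨D₁, h₁⟩ := Finite.exists_le fun i : E × ι => (N.u i.1 i.2).natAbs
  obtain ⟨D₂, h₂⟩ := Finite.exists_le fun j : Fin (K + 1) => ∑ e, mu j e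
  obtain ⟨D₃, h₃⟩ := Finite.exists_le fun i : Fin (K + 1) × ι =>
    ∑ e, mu i.1 e * (N.u e i.2).natAbs
  refine ⟨D₁ + D₂ + D₃, fun e x => ?_, fun j hj => ?_, fun j hj x => ?_⟩
  · have hux := h₁ (e, x)
    simp only at hux
    rw [Int.abs_eq_natAbs]
    norm_cast
    omega
  · exact (h₂ ⟨j, Nat.lt_succ_of_le hj⟩).trans (by omega)
  · simp only [Int.abs_eq_natAbs]
    norm_cast
    exact (h₃ (⟨j, Nat.lt_succ_of_le hj⟩, x)).trans (by omega)

variable {mu : ℕ → E → ℕ} {K D : ℕ}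

theorem IsCostBound.neg_le_sum (hD : N.IsCostBound mu K D) {j : ℕ} (hj : j ≤ K) (x : ι)
    (s : Finset E) : -(D : ℤ) ≤ ∑ e ∈ s, mu j e * N.u e x := by
  refine (_root_.abs_le.1 ((Finset.abs_sum_le_sum_abs _ _).trans ?_)).1
  simp only [abs_mul, Nat.abs_cast]
  exact (Finset.sum_le_sum_of_subset_of_nonneg (Finset.subset_univ s) fun e _ _ => by
    positivity).trans (hD.sum_mul_abs_le j hj x)

theorem eff_eq_sum_of_count {J : Finset ℕ} {a : ℕ → ℕ} {w : List E} {P : E → Prop}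
    (hw : ∀ e, w.count e = if P e then ∑ j ∈ J, a j * mu j e else 0) (x : ι) :
    N.eff w x = ∑ j ∈ J, (a j : ℤ) * ∑ e with P e, mu j e * N.u e x := by
  simp only [eff_eq_sum_count, hw, Finset.mul_sum]
  rw [Finset.sum_comm, Finset.sum_filter]
  refine Finset.sum_congr rfl fun e _ => ?_
  split_ifs
  · push_cast
    rw [Finset.sum_mul]
    exact Finset.sum_congr rfl fun j _ => mul_assoc ..
  · simp

/-- The closed walks `W p` of level `l`, described by their edge counts: these are the counts of `n`
rounds of an Eulerian circuit of `mu l` on the class of `p`, with the walks of level `l + 1` woven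
into each of them. -/
structure IsNested (N : Net Q E ι) (mu : ℕ → E → ℕ) (K n l : ℕ) (W : Q → List E) : Prop where
  walk : ∀ p, N.Walk p (W p) p
  count : ∀ p e, (W p).count e = if N.classes (N.G l) p (N.src e)
    then ∑ j ∈ Finset.Ico l (K + 1), n ^ (j + 1 - l) * mu j e else 0

/-- One of the `n` rounds that make up the walk `W p` of level `l`. -/
structure IsRound (N : Net Q E ι) (mu : ℕ → E → ℕ) (K n l : ℕ) (p : Q) (w : List E) : Prop where
  walk : N.Walk p w p
  count : ∀ e, w.count e = if N.classes (N.G l) p (N.src e)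
    then ∑ j ∈ Finset.Ico l (K + 1), n ^ (j - l) * mu j e else 0

theorem isNested_of_isRound {n l : ℕ} {ρ : Q → List E} (hρ : ∀ p, N.IsRound mu K n l p (ρ p)) :
    N.IsNested mu K n l fun p => (List.replicate n (ρ p)).flatten where
  walk p := (hρ p).walk.flatten_replicate n
  count p e := by
    rw [List.count_flatten, List.map_replicate, List.sum_replicate, (hρ p).count, smul_eq_mul,
      mul_ite, mul_zero, Finset.mul_sum]
    congr 1
    refine Finset.sum_congr rfl fun j hj => ?_
    rw [Nat.sub_add_comm (Finset.mem_Ico.1 hj).1, pow_succ', mul_assoc]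

theorem Weave.isRound {n l : ℕ} (hmu : ∀ j, N.IsGeneric j (mu j)) (hl : l ≤ K) {W : Q → List E}
    (hW : N.IsNested mu K n (l + 1) W) {p : Q} {w w' : List E} (hw : N.Walk p w p)
    (hcount : ∀ e, w.count e = if N.classes (N.G l) p (N.src e) then mu l e else 0)
    (h : N.Weave (N.classes (N.G (l + 1))) W w w') : N.IsRound mu K n l p w' := by
  refine ⟨h.walk hW.walk hw, fun e => ?_⟩
  have hsum := (Finset.sum_eq_sum_Ico_succ_bot (by omega : l < K + 1)
    fun j => n ^ (j - l) * mu j e).symm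
  rw [Nat.sub_self, pow_zero, one_mul] at hsum
  rw [h.count hW.count, hcount]
  by_cases he : N.classes (N.G l) p (N.src e)
  · rw [if_pos he, if_pos he]
    split_ifs with hnear
    · simpa only [Nat.add_sub_add_right] using hsum
    · rw [← hsum, Finset.sum_eq_zero fun j hj => ?_]
      rw [mul_eq_zero]
      refine .inr (by_contra fun hje => hnear ⟨e, ?_, (N.classes _).refl _⟩)
      have hel := G_anti (Nat.le_of_succ_le (Finset.mem_Ico.1 hj).1) (((hmu j).ne_zero_iff e).1 hje)
      rw [← List.count_pos_iff, hcount, if_pos he]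
      exact Nat.pos_of_ne_zero (((hmu l).ne_zero_iff e).2 hel)
  · rw [if_neg he, if_neg he, if_neg]
    rintro ⟨a, ha, hae⟩
    have hpa : N.classes (N.G l) p (N.src a) := by
      by_contra hpa
      exact (List.count_pos_iff.2 ha).ne' ((hcount a).trans (if_neg hpa))
    exact he ((N.classes _).trans hpa (N.classes_mono (G_anti l.le_succ) hae))

theorem exists_isRound {n l : ℕ} (hmu : ∀ j, N.IsGeneric j (mu j)) (hD : N.IsCostBound mu K D)
    (hl : l ≤ K) {W : Q → List E} (hW : N.IsNested mu K n (l + 1) W) (p : Q) :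
    ∃ w, N.IsRound mu K n l p w ∧
      ∀ x (A : ℤ), (∀ q, N.Safe x A (W q)) → N.Safe x (D * (A + D)) w := by
  obtain ⟨w, hw, hcount⟩ := (hmu l).feasible.isCirculation.exists_euler_circuit p
  rw [show {e | mu l e ≠ 0} = N.G l from Set.ext (hmu l).ne_zero_iff] at hcount
  obtain ⟨w', hw'⟩ := exists_weave (N := N) (s := N.classes (N.G (l + 1))) (W := W) w
  refine ⟨w', hw'.isRound hmu hl hW hw hcount, fun x A hA => ?_⟩
  have hlen : w.length ≤ D := by
    rw [length_eq_sum_count]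
    refine (Finset.sum_le_sum fun e _ => ?_).trans (hD.sum_le l hl)
    rw [hcount]
    split_ifs <;> simp
  have hA0 := (hA p).nonneg
  exact (hw'.safe (hD.abs_le · x) hA).mono (by gcongr)

/-- High layers do not decrease `x` on a class, by feasibility; low layers are not repeated often
enough to lose more than `n ^ order K x`. -/
theorem IsRound.neg_le_eff (hv : ∀ x, 1 ≤ N.v x) (hconn : ∀ p q, ∃ w, N.Walk p w q)
    (hmu : ∀ j, N.IsGeneric j (mu j)) (hD : N.IsCostBound mu K D) {n l r : ℕ} {p : Q}
    {w : List E} (hw : N.IsRound mu K n l p w) (hn : 1 ≤ n) (hr : r ≤ n) (x : ι) :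
    -((K + 1) * D * n ^ N.order K x : ℤ) ≤ r * N.eff w x := by
  have hterm : ∀ j ∈ Finset.Ico l (K + 1), -(D * n ^ N.order K x : ℤ) ≤
      r * ((n ^ (j - l) : ℕ) * ∑ e with N.classes (N.G l) p (N.src e), mu j e * N.u e x) := by
    intro j hj
    obtain ⟨hlj, hjK⟩ := Finset.mem_Ico.1 hj
    by_cases hhigh : N.order K x + l ≤ j
    · have hnonneg := (hmu j).feasible.nonnegOnClasses hv hconn (by omega) hhigh p
      exact (neg_nonpos.2 (by positivity)).trans (by positivity)
    · have hrn : (r * n ^ (j - l) : ℤ) ≤ n ^ N.order K x := by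
        calc (r * n ^ (j - l) : ℤ) ≤ n * n ^ (j - l) := by gcongr
          _ = n ^ (j - l + 1) := (pow_succ' ..).symm
          _ ≤ n ^ N.order K x := pow_le_pow_right₀ (by exact_mod_cast hn) (by omega)
      calc -(D * n ^ N.order K x : ℤ) ≤ -(D * (r * n ^ (j - l))) :=
            neg_le_neg (mul_le_mul_of_nonneg_left hrn (by positivity))
        _ = r * n ^ (j - l) * -D := by ring
        _ ≤ r * n ^ (j - l) * ∑ e with N.classes (N.G l) p (N.src e), mu j e * N.u e x :=
            mul_le_mul_of_nonneg_left (hD.neg_le_sum (by omega) x _) (by positivity)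
        _ = _ := by push_cast; ring
  rw [eff_eq_sum_of_count hw.count, Finset.mul_sum]
  refine le_trans ?_ (Finset.card_nsmul_le_sum _ _ _ hterm)
  rw [nsmul_eq_mul, mul_neg, mul_assoc]
  gcongr
  rw [Nat.card_Ico]
  omega

theorem exists_isNested (hv : ∀ x, 1 ≤ N.v x) (hconn : ∀ p q, ∃ w, N.Walk p w q)
    (hmu : ∀ j, N.IsGeneric j (mu j)) (hD : N.IsCostBound mu K D) {l : ℕ} (hl : l ≤ K + 1) :
    ∃ C : ℕ, ∀ n ≥ 1, ∃ W, N.IsNested mu K n l W ∧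
      ∀ p x, N.Safe x (C * n ^ N.order K x) (W p) := by
  induction hl using Nat.decreasingInduction with
  | self => exact ⟨0, fun n _ => ⟨fun _ => [], ⟨fun _ => rfl, by simp⟩, by simp [Safe]⟩⟩
  | of_succ l hl ih =>
    obtain ⟨C, ih⟩ := ih
    refine ⟨(K + 1) * D + D * (C + D), fun n hn => ?_⟩
    obtain ⟨W, hW, hsafe⟩ := ih n hn
    choose ρ hρ hcost using exists_isRound hmu hD (by omega) hW
    refine ⟨_, isNested_of_isRound hρ, fun p x => ?_⟩
    have hround : N.Safe x (D * (C + D) * n ^ N.order K x) (ρ p) := by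
      refine (hcost p x _ (hsafe · x)).mono ?_
      have hpow : (D : ℤ) ≤ D * n ^ N.order K x :=
        le_mul_of_one_le_right (by positivity) (one_le_pow₀ (by exact_mod_cast hn))
      calc (D * (C * n ^ N.order K x + D) : ℤ)
          ≤ D * (C * n ^ N.order K x + D * n ^ N.order K x) := by gcongr
        _ = _ := by ring
    refine (Safe.flatten_replicate
      (fun r hr => (hρ p).neg_le_eff hv hconn hmu hD hn hr x) hround).mono (le_of_eq ?_)
    push_cast
    ring

end Nested

end Net

theorem exists_scale {M B n : ℕ} (hM : 0 < M) (hB : 0 < B) (hn : M * B ≤ n) :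
    ∃ m ≥ B, M * m ≤ n ∧ n ≤ 2 * M * m := by
  have hBm : B ≤ n / M := (Nat.le_div_iff_mul_le hM).2 (by rwa [mul_comm])
  refine ⟨n / M, hBm, Nat.mul_div_le n M, ?_⟩
  have hdiv := Nat.lt_mul_div_succ n hM
  nlinarith

theorem two_mul_le_of_pow_le {c C m n i : ℕ} {y : ℤ} (hi : i ≠ 0) (hm : 0 < m)
    (hmn : (2 * c * C + 1) * m ≤ n) (hy : (n ^ i : ℤ) ≤ c * y) : 2 * (C * m ^ i) ≤ y := by
  have hpow : (2 * c * C + 1) * m ^ i ≤ n ^ i :=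
    calc (2 * c * C + 1) * m ^ i ≤ (2 * c * C + 1) ^ i * m ^ i :=
          Nat.mul_le_mul_right _ (Nat.le_self_pow hi _)
      _ = ((2 * c * C + 1) * m) ^ i := (mul_pow ..).symm
      _ ≤ n ^ i := Nat.pow_le_pow_left hmn i
  have hlt : (c * (2 * (C * m ^ i)) : ℤ) < c * y := by
    refine lt_of_lt_of_le ?_ hy
    have hmi := pow_pos hm i
    have : c * (2 * (C * m ^ i)) < n ^ i := by nlinarith
    exact_mod_cast this
  exact (lt_of_mul_lt_mul_left hlt (Nat.cast_nonneg c)).le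

namespace Net

variable {Q E ι : Type*} {N : Net Q E ι} [Fintype E] {mu : ℕ → E → ℕ} {K D m : ℕ}
  {W : Q → List E}

theorem IsNested.count_top (hW : N.IsNested mu K m 0 W) (hv : ∀ x, 1 ≤ N.v x)
    (hconn : ∀ p q, ∃ w, N.Walk p w q) (p : Q) (e : E) :
    (W p).count e = ∑ j ∈ Finset.range (K + 1), m ^ (j + 1) * mu j e := by
  rw [hW.count, if_pos (classes_G_zero hv hconn p _), Finset.range_eq_Ico]
  rfl

theorem length_le_of_count (hD : N.IsCostBound mu K D) (hm : 0 < m) {w : List E}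
    (hw : ∀ e, w.count e = ∑ j ∈ Finset.range (K + 1), m ^ (j + 1) * mu j e) :
    w.length ≤ (K + 1) * D * m ^ (K + 1) := by
  simp only [length_eq_sum_count, hw]
  rw [Finset.sum_comm, mul_assoc]
  simp only [← Finset.mul_sum]
  refine (Finset.sum_le_card_nsmul _ _ (D * m ^ (K + 1)) fun j hj => ?_).trans_eq (by simp)
  have hjK := Finset.mem_range.1 hj
  rw [mul_comm]
  exact Nat.mul_le_mul (hD.sum_le j (by omega)) (Nat.pow_le_pow_right hm (by omega))

/-- The term `m ^ (K + 1) * mu K` dominates the effect of the walk. -/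
theorem pow_le_two_mul_eff (hmu : N.IsGeneric K (mu K)) (hD : N.IsCostBound mu K D)
    (hm0 : 0 < m) (hm : 2 * (K * D) ≤ m) {w : List E}
    (hw : ∀ e, w.count e = ∑ j ∈ Finset.range (K + 1), m ^ (j + 1) * mu j e) {x : ι}
    (hvx : N.v x ≤ K) (hxB : x ∉ N.B K) : (m ^ (K + 1) : ℤ) ≤ 2 * N.eff w x := by
  have hterm : ∀ j ∈ Finset.range K, -(D * m ^ K : ℤ) ≤
      (m ^ (j + 1) : ℕ) * ∑ e, mu j e * N.u e x := by
    intro j hj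
    have hjK := Finset.mem_range.1 hj
    have hpow : (m ^ (j + 1) : ℤ) ≤ m ^ K :=
      pow_le_pow_right₀ (by exact_mod_cast hm0) hjK
    calc -(D * m ^ K : ℤ) ≤ -(D * m ^ (j + 1)) :=
          neg_le_neg (mul_le_mul_of_nonneg_left hpow (by positivity))
      _ = m ^ (j + 1) * -D := by ring
      _ ≤ m ^ (j + 1) * ∑ e, mu j e * N.u e x :=
          mul_le_mul_of_nonneg_left (hD.neg_le_sum hjK.le x _) (by positivity)
      _ = _ := by push_cast; rfl
  have hlow := Finset.card_nsmul_le_sum _ _ _ hterm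
  have hlead : (m ^ (K + 1) : ℤ) ≤ (m ^ (K + 1) : ℕ) * ∑ e, mu K e * N.u e x := by
    push_cast
    exact le_mul_of_one_le_right (by positivity) (hmu.pos x hvx hxB)
  have heff := eff_eq_sum_of_count (N := N) (P := fun _ => True) (by simpa using hw) x
  simp only [Finset.filter_true, Finset.sum_range_succ] at heff
  have hhalf : (2 * (K * D) * m ^ K : ℤ) ≤ m ^ (K + 1) := by
    rw [pow_succ']
    exact mul_le_mul_of_nonneg_right (by exact_mod_cast hm) (by positivity)
  rw [Finset.card_range, nsmul_eq_mul] at hlow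
  linarith

/-- A closed walk of length `O(n ^ K)` that raises every counter `x` to the order
`n ^ order K x`. -/
structure IsPump (N : Net Q E ι) (K c n : ℕ) (p : Q) (w : List E) : Prop where
  walk : N.Walk p w p
  length_le : w.length ≤ c * n ^ K
  safe : ∀ x, N.Safe x (n ^ N.v x) w
  pow_order_le : ∀ x, (n ^ N.order K x : ℤ) ≤ c * (n ^ N.v x + N.eff w x)

variable {c C L n : ℕ} {p : Q} {w w' : List E}

theorem isPump_zero (n : ℕ) (p : Q) : N.IsPump 0 1 n p [] where
  walk := rfl
  length_le := by simp
  safe x := by simp [Safe]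
  pow_order_le x := by simp [order_zero]

/-- The walk `w` pays for `w'`, which is run at the smaller scale `m`. -/
theorem IsPump.append (hv : ∀ x, 1 ≤ N.v x) (hw : N.IsPump K c n p w) (hm : 0 < m)
    (hmn : (2 * c * C + 1) * m ≤ n) (hnm : n ≤ 2 * (2 * c * C + 1) * m) (hw' : N.Walk p w' p)
    (hlen : w'.length ≤ L * m ^ (K + 1)) (hsafe : ∀ x, N.Safe x (C * m ^ N.order K x) w')
    (hlead : ∀ x, N.v x ≤ K → x ∉ N.B K → (m ^ (K + 1) : ℤ) ≤ 2 * N.eff w' x) :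
    N.IsPump (K + 1) (2 * c + L + 2 * (2 * (2 * c * C + 1)) ^ (K + 1)) n p (w ++ w') := by
  set M := 2 * c * C + 1
  have hmn' : m ≤ n := (Nat.le_mul_of_pos_left m (by omega)).trans hmn
  have hhalf (x) : 2 * (C * m ^ N.order K x) ≤ n ^ N.v x + N.eff w x :=
    two_mul_le_of_pow_le (by have := hv x; have := (N.order_spec K x).1; omega) hm hmn
      (hw.pow_order_le x)
  have hcost (x) : 0 ≤ (C * m ^ N.order K x : ℤ) := by positivity
  have hfin (x) := (hsafe x).final
  refine ⟨hw.walk.append hw', ?_, fun x => ?_, fun x => ?_⟩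
  · have hK : c * n ^ K ≤ 2 * c * n ^ (K + 1) :=
      Nat.mul_le_mul (by omega) (Nat.pow_le_pow_right (by omega) K.le_succ)
    have hL : L * m ^ (K + 1) ≤ L * n ^ (K + 1) := by gcongr
    have hlenw := hw.length_le
    rw [List.length_append, add_mul, add_mul]
    omega
  · exact safe_append.2 ⟨hw.safe x, (hsafe x).mono (by linarith [hhalf x, hcost x])⟩
  · have hy : 0 ≤ n ^ N.v x + N.eff (w ++ w') x := by
      rw [eff_append]
      linarith [hhalf x, hcost x, hfin x]
    have hbound (k : ℕ) (hk : k ≤ 2 * c + L + 2 * (2 * M) ^ (K + 1)) :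
        k * (n ^ N.v x + N.eff (w ++ w') x) ≤
          (2 * c + L + 2 * (2 * M) ^ (K + 1) : ℕ) * (n ^ N.v x + N.eff (w ++ w') x) :=
      mul_le_mul_of_nonneg_right (by exact_mod_cast hk) hy
    obtain hord | ⟨hord, hvK, hxB⟩ := N.order_succ K x <;> rw [hord]
    · refine (hw.pow_order_le x).trans (le_trans ?_ (hbound (2 * c) (by omega)))
      rw [eff_append, Nat.cast_mul, mul_comm (Nat.cast 2 : ℤ), mul_assoc]
      exact mul_le_mul_of_nonneg_left (by push_cast; linarith [hhalf x, hcost x, hfin x])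
        (Nat.cast_nonneg c)
    · refine le_trans ?_ (hbound (2 * (2 * M) ^ (K + 1)) (by omega))
      calc (n ^ (K + 1) : ℤ) ≤ (2 * M * m : ℕ) ^ (K + 1) := by gcongr
        _ = (2 * M : ℕ) ^ (K + 1) * m ^ (K + 1) := by push_cast; ring
        _ ≤ (2 * M : ℕ) ^ (K + 1) * (2 * (n ^ N.v x + N.eff (w ++ w') x)) := by
          gcongr
          rw [eff_append]
          linarith [hhalf x, hcost x, hlead x hvK hxB]
        _ = _ := by push_cast; ring

theorem exists_isPump [Finite ι] (hv : ∀ x, 1 ≤ N.v x) (hconn : ∀ p q, ∃ w, N.Walk p w q)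
    (K : ℕ) : ∃ c N₀ : ℕ, ∀ n ≥ N₀, ∀ p, ∃ w, N.IsPump K c n p w := by
  induction K with
  | zero => exact ⟨1, 0, fun n _ p => ⟨[], isPump_zero n p⟩⟩
  | succ K ih =>
    obtain ⟨c, N₀, ih⟩ := ih
    choose mu hmu using N.exists_isGeneric
    obtain ⟨D, hD⟩ := N.exists_isCostBound mu K
    obtain ⟨C, hC⟩ := exists_isNested hv hconn hmu hD (Nat.zero_le (K + 1))
    let M := 2 * c * C + 1
    refine ⟨2 * c + (K + 1) * D + 2 * (2 * M) ^ (K + 1), max N₀ (M * (2 * (K * D) + 1)),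
      fun n hn p => ?_⟩
    obtain ⟨w, hw⟩ := ih n (le_of_max_le_left hn) p
    obtain ⟨m, hm, hmn, hnm⟩ := exists_scale (by positivity) (by positivity) (le_of_max_le_right hn)
    obtain ⟨W, hW, hsafe⟩ := hC m (by omega)
    have hcount := hW.count_top hv hconn p
    exact ⟨_, hw.append hv (by omega) hmn hnm (hW.walk p) (length_le_of_count hD (by omega) hcount)
      (hsafe p) fun x => pow_le_two_mul_eff (hmu K) hD (by omega) (by omega) hcount⟩

theorem exists_pumping_walk [Finite ι] (hv : ∀ x, 1 ≤ N.v x)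
    (hconn : ∀ p q, ∃ w, N.Walk p w q) (K : ℕ) :
    ∃ c N₀ : ℕ, ∀ n ≥ N₀, ∀ p, ∃ w, N.Walk p w p ∧ w.length ≤ c * n ^ K ∧
      ∀ x, N.Safe x (n ^ N.v x) w ∧ ∀ k ≤ K, k ≤ N.exponent x →
        (n ^ k : ℤ) ≤ c * (n ^ N.v x + N.eff w x) := by
  obtain ⟨c, N₀, hpump⟩ := exists_isPump hv hconn K
  refine ⟨c, max N₀ 1, fun n hn p => ?_⟩
  obtain ⟨w, hw⟩ := hpump n (le_of_max_le_left hn) p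
  refine ⟨w, hw.walk, hw.length_le, fun x => ⟨hw.safe x, fun k hkK hk => ?_⟩⟩
  exact (pow_le_pow_right₀ (by exact_mod_cast le_of_max_le_right hn) (le_order hkK hk)).trans
    (hw.pow_order_le x)

theorem exists_bound_of_exponent_eq [Finite Q] [Finite ι] {x : ι} {k : ℕ}
    (hx : N.exponent x = k) :
    ∃ C : ℕ, ∀ n ≥ 1, ∀ p y w q, N.IsRun n p y w q → y x + N.eff w x ≤ C * n ^ k := by
  obtain ⟨C, -, hC⟩ := N.exists_isBound k
  refine ⟨⌈C⌉₊, fun n hn p y w q hw => ?_⟩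
  have hle : ((y x + N.eff w x : ℤ) : ℚ) ≤ ⌈C⌉₊ * n ^ k :=
    ((hC n hn p y w q hw).2 x (mem_B_of_exponent_eq hx)).trans (by gcongr; exact Nat.le_ceil C)
  exact_mod_cast hle

end Net

/-! ### Computations and counter values -/

/-- One step of a computation, whoever owns the control state. -/
def VASS.Step (V : VASS d) (c c' : V.Config) : Prop := ∃ t, V.enabled c t ∧ c' = V.applyT c t

/-- Reachability between configurations. -/
abbrev VASS.Reach (V : VASS d) : V.Config → V.Config → Prop := Relation.ReflTransGen V.Step

theorem VASS.Reach.exists_seq {V : VASS d} {c c' : V.Config} (h : V.Reach c c') :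
    ∃ (n : ℕ) (f : ℕ → V.Config), f 0 = c ∧ f n = c' ∧ ∀ k < n, V.Step (f k) (f (k + 1)) := by
  induction h using Relation.ReflTransGen.head_induction_on with
  | refl => exact ⟨0, fun _ => c', rfl, rfl, fun k hk => absurd hk k.not_lt_zero⟩
  | @head a _ hstep _ ih =>
    obtain ⟨n, f, rfl, hn, hf⟩ := ih
    refine ⟨n + 1, fun k => k.casesOn a f, rfl, hn, fun k hk => ?_⟩
    cases k with
    | zero => exact hstep
    | succ k => exact hf k (Nat.lt_of_succ_lt_succ hk)

/-- The strategy following the sequence `f`: with history `h`, take a transition to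
`f (h.length + 1)` if there is one, otherwise any enabled transition, otherwise any outgoing one.
The last branch is a junk value for states without outgoing transitions. -/
def followStrategy (V : VASS d) (own : V.Q → Prop) (f : ℕ → V.Config) : Strategy V own where
  choose h c :=
    if hf : ∃ t, V.enabled c t ∧ f (h.length + 1) = V.applyT c t then hf.choose
    else if he : ∃ t, V.enabled c t then he.choose
    else if ht : ∃ t ∈ V.Tran, t.1 = c.1 then ht.choose
    else (c.1, 0, c.1)
  choose_mem h c _ ht := by
    split_ifs with hf he
    · exact ⟨hf.choose_spec.1.1, hf.choose_spec.1.2.1⟩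
    · exact ⟨he.choose_spec.1, he.choose_spec.2.1⟩
    · exact ht.choose_spec
  choose_enabled h c _ he := by
    split_ifs with hf
    · exact hf.choose_spec.1
    · exact he.choose_spec

theorem playAux_followStrategy {V : VASS d} (hD : V.demonic) (σ : AngelStrategy V)
    {f : ℕ → V.Config} {n : ℕ} (hf : ∀ k < n, V.Step (f k) (f (k + 1))) :
    ∃ h : List V.Config, h.length = n ∧
      playAux σ (followStrategy V (fun q => ¬ V.angelic q) f) (f 0) n = some (h, f n) := by
  induction n with
  | zero => exact ⟨[], rfl, rfl⟩
  | succ n ih =>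
    obtain ⟨h, rfl, hplay⟩ := ih fun k hk => hf k (hk.trans n.lt_succ_self)
    refine ⟨h ++ [f h.length], by simp, ?_⟩
    have hstep : ∃ t, V.enabled (f h.length) t ∧ f (h.length + 1) = V.applyT (f h.length) t :=
      hf h.length h.length.lt_succ_self
    have hchoose : (followStrategy V (fun q => ¬ V.angelic q) f).choose h (f h.length) =
        hstep.choose := dif_pos hstep
    simp only [playAux, hplay, Option.bind_some, if_neg (hD _), hchoose,
      if_pos hstep.choose_spec.1]
    rw [← hstep.choose_spec.2]

theorem le_Cval {V : VASS d} (hD : V.demonic) (i : Fin d) {c c' : V.Config}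
    (h : V.Reach c c') : (c'.2 i : ℕ∞) ≤ Cval V i c := by
  obtain ⟨n, f, rfl, rfl, hf⟩ := VASS.Reach.exists_seq h
  refine le_iInf fun σ => le_iSup_of_le (followStrategy V _ f) (le_iSup₂_of_le (f n) ?_ le_rfl)
  obtain ⟨h, -, hplay⟩ := playAux_followStrategy hD σ hf
  exact ⟨n, h, hplay⟩

theorem reach_of_playAux {V : VASS d} {σ : AngelStrategy V} {π : DemonStrategy V}
    {c c' : V.Config} {n : ℕ} {h : List V.Config} (hplay : playAux σ π c n = some (h, c')) :
    V.Reach c c' := by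
  induction n generalizing h c' with
  | zero =>
    simp only [playAux, Option.some.injEq, Prod.mk.injEq] at hplay
    rw [← hplay.2]
  | succ n ih =>
    simp only [playAux, Option.bind_eq_some_iff] at hplay
    obtain ⟨⟨h', c''⟩, hprev, hnext⟩ := hplay
    split_ifs at hnext
    all_goals
      simp only [Option.some.injEq, Prod.mk.injEq] at hnext
      exact (ih hprev).tail ⟨_, ‹_›, hnext.2.symm⟩

theorem Cval_le {V : VASS d} (i : Fin d) {c : V.Config} {b : ℕ∞}
    (h : ∀ c', V.Reach c c' → (c'.2 i : ℕ∞) ≤ b) : Cval V i c ≤ b :=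
  iInf_le_of_le (followStrategy V _ fun _ => c) <| iSup_le fun _ =>
    iSup₂_le fun c' ⟨_, _, hplay⟩ => h c' (reach_of_playAux hplay)

theorem exponent_le_of_bigO_bigOmega {f : ℕ → ℕ∞} {a b : ℕ} (hO : BigO f fun n => n ^ a)
    (hΩ : BigOmega f fun n => n ^ b) : b ≤ a := by
  obtain ⟨C, N, hC⟩ := hO
  obtain ⟨c, N', -, hc⟩ := hΩ
  by_contra! hlt
  set n := N + N' + c * C + 1
  have hle : n ^ b ≤ c * (C * n ^ a) := by
    have : ((n ^ b : ℕ) : ℕ∞) ≤ c * ((C * n ^ a : ℕ) : ℕ∞) :=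
      (by exact_mod_cast hc n (by omega) : ((n ^ b : ℕ) : ℕ∞) ≤ c * f n).trans
        (mul_le_mul_right (hC n (by omega)) _)
    exact_mod_cast this
  have : n * n ^ a ≤ c * C * n ^ a := by
    calc n * n ^ a = n ^ (a + 1) := (pow_succ' n a).symm
      _ ≤ n ^ b := Nat.pow_le_pow_right (by omega) hlt
      _ ≤ c * C * n ^ a := by rwa [mul_assoc]
  have := Nat.le_of_mul_le_mul_right this (Nat.pow_pos (by omega))
  omega

theorem BigTheta.exponent_unique {f : ℕ → ℕ∞} {a b : ℕ} (ha : BigTheta f fun n => n ^ a)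
    (hb : BigTheta f fun n => n ^ b) : a = b :=
  le_antisymm (exponent_le_of_bigO_bigOmega hb.1 ha.2) (exponent_le_of_bigO_bigOmega ha.1 hb.2)

/-! ### Components as nets -/

/-- The component `C` as a net, keeping only those counters that are finite in `v`. -/
def sccNet (V : VASS d) (C : Set V.Q) (v : Fin d → ℕ∞) :
    Net {q // q ∈ C} {t // t ∈ (V.restrictTo C).Tran} {x : Fin d // v x ≠ ⊤} where
  src t := ⟨t.1.1, (Finset.mem_filter.1 t.2).2.1⟩
  tgt t := ⟨t.1.2.2, (Finset.mem_filter.1 t.2).2.2⟩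
  u t x := t.1.2.1 x.1
  v x := (v x.1).toNat

theorem exists_walk_sccNet {V : VASS d} {C : Set V.Q} (hC : IsSCC V C) (v : Fin d → ℕ∞)
    (p q : {q // q ∈ C}) : ∃ w, (sccNet V C v).Walk p w q := by
  obtain ⟨r, rfl⟩ := hC
  obtain ⟨p, hp⟩ := p
  obtain ⟨q, hq⟩ := q
  have hpq : Relation.ReflTransGen V.edgeRel p q := hp.2.trans hq.1
  induction hpq using Relation.ReflTransGen.head_induction_on with
  | refl => exact ⟨[], rfl⟩
  | @head a b hab hbq ih =>
    have hb : b ∈ sccOf V r := ⟨hp.1.tail hab, hbq.trans hq.2⟩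
    obtain ⟨w, hw⟩ := ih hb
    obtain ⟨u, hu⟩ := hab
    exact ⟨⟨(a, u, b), Finset.mem_filter.2 ⟨hu, hp, hb⟩⟩ :: w, rfl, hw⟩

/-- A step along a transition inside `C` that is only required to respect the counters finite in
`v`. Both the steps of `V` inside `C` and those of the VASS with the other counters erased are of
this form. -/
def FinStep (V : VASS d) (C : Set V.Q) (v : Fin d → ℕ∞) (c c' : V.Config) : Prop :=
  ∃ t ∈ (V.restrictTo C).Tran, t.1 = c.1 ∧ c'.1 = t.2.2 ∧
    ∀ x, v x ≠ ⊤ → 0 ≤ (c.2 x : ℤ) + t.2.1 x ∧ (c'.2 x : ℤ) = (c.2 x : ℤ) + t.2.1 x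

/-- A step of `V` that stays inside `C`. -/
def VASS.StepIn (V : VASS d) (C : Set V.Q) (c c' : V.Config) : Prop :=
  V.Step c c' ∧ c.1 ∈ C ∧ c'.1 ∈ C

theorem VASS.StepIn.finStep {V : VASS d} {C : Set V.Q} {c c' : V.Config}
    (h : V.StepIn C c c') (v : Fin d → ℕ∞) : FinStep V C v c c' := by
  obtain ⟨⟨t, ⟨ht, hsrc, hnonneg⟩, rfl⟩, hc, hc'⟩ := h
  exact ⟨t, Finset.mem_filter.2 ⟨ht, hsrc ▸ hc, hc'⟩, hsrc, rfl, fun x _ =>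
    ⟨hnonneg x, Int.toNat_of_nonneg (hnonneg x)⟩⟩

theorem FinStep.of_step_modInf {V : VASS d} {C : Set V.Q} {v : Fin d → ℕ∞} {c c' : V.Config}
    (h : ((V.restrictTo C).modInf v).Step c c') : FinStep V C v c c' := by
  obtain ⟨_, ⟨hmem, hsrc, hnonneg⟩, rfl⟩ := h
  obtain ⟨t, ht, rfl⟩ := Finset.mem_image.1 hmem
  refine ⟨t, ht, hsrc, rfl, fun x hx => ?_⟩
  have hx' := hnonneg x
  simp only [if_neg hx] at hx'
  simp only [VASS.applyT, if_neg hx]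
  exact ⟨hx', Int.toNat_of_nonneg hx'⟩

theorem exists_walk_of_finStep {V : VASS d} {C : Set V.Q} {v : Fin d → ℕ∞} {c c' : V.Config}
    (hc : c.1 ∈ C) (h : Relation.ReflTransGen (FinStep V C v) c c') :
    ∃ (hc' : c'.1 ∈ C) (w : _), (sccNet V C v).Walk ⟨c.1, hc⟩ w ⟨c'.1, hc'⟩ ∧
      ∀ x : {x // v x ≠ ⊤}, (sccNet V C v).Safe x (c.2 x.1) w ∧
        (c'.2 x.1 : ℤ) = c.2 x.1 + (sccNet V C v).eff w x := by
  induction h using Relation.ReflTransGen.head_induction_on with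
  | refl => exact ⟨hc, [], rfl, fun x => ⟨Int.natCast_nonneg _, by simp⟩⟩
  | @head a b hab _ ih =>
    obtain ⟨t, ht, hsrc, htgt, hupd⟩ := hab
    obtain ⟨hc', w, hw, hsafe⟩ := ih (htgt ▸ (Finset.mem_filter.1 ht).2.2)
    refine ⟨hc', ⟨t, ht⟩ :: w, ⟨Subtype.ext hsrc, ?_⟩, fun x => ⟨⟨Int.natCast_nonneg _, ?_⟩, ?_⟩⟩
    · have : (⟨b.1, htgt ▸ (Finset.mem_filter.1 ht).2.2⟩ : {q // q ∈ C}) =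
          (sccNet V C v).tgt ⟨t, ht⟩ := Subtype.ext htgt
      rwa [← this]
    · have := (hsafe x).1
      rwa [(hupd x.1 x.2).2] at this
    · rw [(hsafe x).2, (hupd x.1 x.2).2, Net.eff_cons, add_assoc]
      rfl

theorem exists_bound_of_finStep {V : VASS d} {C : Set V.Q} {v : Fin d → ℕ∞}
    {x : {x // v x ≠ ⊤}} {k : ℕ} (hx : (sccNet V C v).exponent x = k) :
    ∃ B : ℕ, ∀ n ≥ 1, ∀ c c' : V.Config, c.1 ∈ C →
      (∀ y, v y ≠ ⊤ → c.2 y ≤ n ^ (v y).toNat) →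
      Relation.ReflTransGen (FinStep V C v) c c' → c'.2 x.1 ≤ B * n ^ k := by
  obtain ⟨B, hB⟩ := Net.exists_bound_of_exponent_eq hx
  refine ⟨B, fun n hn c c' hc hstart h => ?_⟩
  obtain ⟨hc', w, hw, hsafe⟩ := exists_walk_of_finStep hc h
  have := hB n hn _ _ w _ ⟨hw, fun y => (hsafe y).1, fun y => mod_cast hstart y.1 y.2⟩
  rw [← (hsafe x).2] at this
  exact_mod_cast this

/-- The transitions `T` lift those inside `C`: they agree with them on the counters finite in `v`
and lower each of the others by at most `U`. -/
def IsLift (V : VASS d) (C : Set V.Q) (v : Fin d → ℕ∞) (T : Finset (V.Q × (Fin d → ℤ) × V.Q))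
    (U : ℕ) : Prop :=
  ∀ t ∈ (V.restrictTo C).Tran, ∃ u, (t.1, u, t.2.2) ∈ T ∧
    (∀ x, v x ≠ ⊤ → u x = t.2.1 x) ∧ ∀ x, v x = ⊤ → -(U : ℤ) ≤ u x

theorem isLift_modInf (V : VASS d) (C : Set V.Q) (v : Fin d → ℕ∞) :
    IsLift V C v ((V.restrictTo C).modInf v).Tran 0 := fun t ht =>
  ⟨_, Finset.mem_image_of_mem _ ht, fun _ hx => if_neg hx, fun x hx => by simp [hx]⟩

theorem exists_abs_update_le (V : VASS d) :
    ∃ U : ℕ, ∀ t ∈ V.Tran, ∀ x, |t.2.1 x| ≤ (U : ℤ) := by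
  obtain ⟨U, hU⟩ := Finite.exists_le fun a : V.Tran × Fin d => (a.1.1.2.1 a.2).natAbs
  exact ⟨U, fun t ht x => by simpa using Int.ofNat_le.2 (hU (⟨t, ht⟩, x))⟩

theorem exists_isLift_self (V : VASS d) (C : Set V.Q) (v : Fin d → ℕ∞) :
    ∃ U, IsLift V C v V.Tran U :=
  (exists_abs_update_le V).imp fun _ hU t ht =>
    ⟨t.2.1, Finset.filter_subset _ _ ht, fun _ _ => rfl,
      fun x _ => (abs_le.1 (hU t (Finset.filter_subset _ _ ht) x)).1⟩

section Component

variable {V : VASS d} {C : Set V.Q} {v : Fin d → ℕ∞}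

theorem IsLift.exists_reach {T : Finset (V.Q × (Fin d → ℤ) × V.Q)} {U : ℕ}
    (hT : IsLift V C v T U) {w : List {t // t ∈ (V.restrictTo C).Tran}} {p q : {q // q ∈ C}}
    (hw : (sccNet V C v).Walk p w q) {y : Fin d → ℕ}
    (hsafe : ∀ x : {x // v x ≠ ⊤}, (sccNet V C v).Safe x (y x.1) w)
    (htop : ∀ x, v x = ⊤ → U * w.length ≤ y x) :
    ∃ z : Fin d → ℕ, VASS.Reach { V with Tran := T } (p.1, y) (q.1, z) ∧
      (∀ x : {x // v x ≠ ⊤}, (z x.1 : ℤ) = y x.1 + (sccNet V C v).eff w x) ∧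
      ∀ x, v x = ⊤ → y x ≤ z x + U * w.length := by
  induction w generalizing p y with
  | nil =>
    cases hw
    exact ⟨y, .refl, fun x => by simp, fun x _ => by simp⟩
  | cons t w ih =>
    obtain ⟨rfl, hw⟩ := hw
    obtain ⟨u, hu, hfin, hlower⟩ := hT t.1 t.2
    simp only [List.length_cons, mul_add_one] at htop ⊢
    have hy : ∀ x, 0 ≤ (y x : ℤ) + u x := by
      intro x
      by_cases hx : v x = ⊤
      · have := htop x hx
        have := hlower x hx
        omega
      · rw [hfin x hx]
        exact (hsafe ⟨x, hx⟩).2.nonneg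
    let y' : Fin d → ℕ := fun x => ((y x : ℤ) + u x).toNat
    have hy' : ∀ x, (y' x : ℤ) = y x + u x := fun x => Int.toNat_of_nonneg (hy x)
    obtain ⟨z, hreach, hz, hztop⟩ := ih hw (y := y')
      (fun x => by rw [hy', hfin x.1 x.2]; exact (hsafe x).2)
      (fun x hx => by have := htop x hx; have := hlower x hx; have := hy' x; omega)
    refine ⟨z, .head ⟨_, ⟨hu, rfl, hy⟩, rfl⟩ hreach, fun x => ?_, fun x hx => ?_⟩
    · rw [hz, hy', hfin x.1 x.2, Net.eff_cons, add_assoc]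
      rfl
    · have := hztop x hx
      have := hlower x hx
      have := hy' x
      omega

theorem one_le_sccNet_v (hv : ∀ x, 1 ≤ v x) (x : {x // v x ≠ ⊤}) : 1 ≤ (sccNet V C v).v x :=
  ENat.toNat_le_toNat (hv x.1) x.2

theorem IsLift.exists_pumping {T : Finset (V.Q × (Fin d → ℤ) × V.Q)} {U : ℕ}
    (hT : IsLift V C v T U) (hC : IsSCC V C) (hv : ∀ x, 1 ≤ v x) (K : ℕ) :
    ∃ b N₀ : ℕ, ∀ n ≥ N₀, ∀ p ∈ C, ∀ y : Fin d → ℕ,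
      (∀ x, v x ≠ ⊤ → n ^ (v x).toNat ≤ y x) → (∀ x, v x = ⊤ → U * (b * n ^ K) ≤ y x) →
      ∃ z, VASS.Reach { V with Tran := T } (p, y) (p, z) ∧
        (∀ (x : {x // v x ≠ ⊤}) (k : ℕ), k ≤ K → (k : ℕ∞) ≤ (sccNet V C v).exponent x →
          n ^ k ≤ b * z x.1) ∧
        ∀ x, v x = ⊤ → y x ≤ z x + U * (b * n ^ K) := by
  obtain ⟨b, N₀, hb⟩ :=
    Net.exists_pumping_walk (one_le_sccNet_v hv) (exists_walk_sccNet hC v) K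
  refine ⟨b, N₀, fun n hn p hp y hy htop => ?_⟩
  obtain ⟨w, hw, hlen, hwx⟩ := hb n hn ⟨p, hp⟩
  have hlen' : U * w.length ≤ U * (b * n ^ K) := Nat.mul_le_mul_left U hlen
  have hy' : ∀ x : {x // v x ≠ ⊤}, (n : ℤ) ^ (sccNet V C v).v x ≤ y x.1 := fun x =>
    mod_cast hy x.1 x.2
  obtain ⟨z, hreach, hz, hztop⟩ := hT.exists_reach hw (fun x => (hwx x).1.mono (hy' x))
    fun x hx => hlen'.trans (htop x hx)
  refine ⟨z, hreach, fun x k hk hkx => ?_, fun x hx => (hztop x hx).trans (by gcongr)⟩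
  have : (n ^ k : ℤ) ≤ b * z x.1 := by
    refine ((hwx x).2 k hk hkx).trans ?_
    rw [hz x]
    have := hy' x
    gcongr
  exact_mod_cast this

/-! ### The growth of the counters in a component -/

theorem vTrunc_of_ne_top {x : Fin d} (hx : v x ≠ ⊤) : vTrunc v x = (v x).toNat := if_neg hx

theorem bigO_CInf (x : {x // v x ≠ ⊤}) {k : ℕ} (hx : (sccNet V C v).exponent x = k) :
    BigO (CInf (V.restrictTo C) x.1 v) fun n => n ^ k := by
  obtain ⟨B, hB⟩ := exists_bound_of_finStep hx
  have hvk : vTrunc v x.1 ≤ k := by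
    have := (sccNet V C v).v_le_exponent x
    rw [hx, Nat.cast_le] at this
    rwa [vTrunc_of_ne_top x.2]
  refine ⟨B + 1, 1, fun n hn => iSup_le fun p => Cval_le _ fun c' hreach => ?_⟩
  have hfin : Relation.ReflTransGen (FinStep V C v) (p, fun i => n ^ vTrunc v i) c' :=
    Relation.ReflTransGen.lift (p := FinStep V C v) id (fun _ _ => FinStep.of_step_modInf) _ _
      hreach
  rw [Nat.cast_le]
  by_cases hp : p ∈ C
  · calc c'.2 x.1 ≤ B * n ^ k :=
          hB n hn _ c' hp (fun y hy => by rw [← vTrunc_of_ne_top hy]) hfin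
      _ ≤ (B + 1) * n ^ k := Nat.mul_le_mul_right _ B.le_succ
  · obtain rfl | ⟨_, ⟨t, ht, rfl, -⟩, -⟩ := hfin.cases_head
    · calc n ^ vTrunc v x.1 ≤ n ^ k := Nat.pow_le_pow_right hn hvk
        _ ≤ (B + 1) * n ^ k := Nat.le_mul_of_pos_left _ B.succ_pos
    · exact absurd (Finset.mem_filter.1 ht).2.1 hp

theorem bigOmega_of_pow_le {f : ℕ → ℕ∞} {b N₀ k : ℕ}
    (h : ∀ n ≥ N₀, ∃ z : ℕ, n ^ k ≤ b * z ∧ (z : ℕ∞) ≤ f n) : BigOmega f fun n => n ^ k := by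
  refine ⟨b + 1, N₀, b.succ_pos, fun n hn => ?_⟩
  obtain ⟨z, hz, hzf⟩ := h n hn
  calc ((n ^ k : ℕ) : ℕ∞) ≤ ((b + 1) * z : ℕ) :=
        Nat.cast_le.2 (hz.trans (Nat.mul_le_mul_right _ b.le_succ))
    _ = (b + 1 : ℕ) * (z : ℕ∞) := Nat.cast_mul _ _
    _ ≤ _ := by gcongr

theorem IsSCC.nonempty (hC : IsSCC V C) : C.Nonempty := by
  obtain ⟨r, rfl⟩ := hC
  exact ⟨r, .refl, .refl⟩

theorem bigOmega_CInf (hD : V.demonic) (hC : IsSCC V C) (hv : ∀ x, 1 ≤ v x) (x : {x // v x ≠ ⊤})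
    {k : ℕ} (hx : (k : ℕ∞) ≤ (sccNet V C v).exponent x) :
    BigOmega (CInf (V.restrictTo C) x.1 v) fun n => n ^ k := by
  obtain ⟨b, N₀, hb⟩ := (isLift_modInf V C v).exists_pumping hC hv k
  obtain ⟨p, hp⟩ := hC.nonempty
  refine bigOmega_of_pow_le (b := b) (N₀ := N₀) fun n hn => ?_
  obtain ⟨z, hreach, hz, -⟩ := hb n hn p hp (fun i => n ^ vTrunc v i)
    (fun y hy => by rw [vTrunc_of_ne_top hy]) (fun y _ => by simp)
  exact ⟨z x.1, hz x k le_rfl hx, (le_Cval (V := (V.restrictTo C).modInf v) hD x.1 hreach).trans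
    (le_iSup (fun q => Cval ((V.restrictTo C).modInf v) x.1 (q, fun i => n ^ vTrunc v i)) p)⟩

theorem Vfun_of_eq_top {x : Fin d} (hx : v x = ⊤) : Vfun V v x = ⊤ := dif_neg fun h => h.1 hx

theorem Vfun_of_bigTheta {x : Fin d} {k : ℕ} (hx : v x ≠ ⊤)
    (h : BigTheta (CInf V x v) fun n => n ^ k) : Vfun V v x = k := by
  have hex : v x ≠ ⊤ ∧ ∃ k : ℕ, BigTheta (CInf V x v) fun n => n ^ k := ⟨hx, k, h⟩
  rw [Vfun, dif_pos hex, hex.2.choose_spec.exponent_unique h]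

theorem Vfun_of_forall_bigOmega {x : Fin d}
    (h : ∀ k : ℕ, BigOmega (CInf V x v) fun n => n ^ k) : Vfun V v x = ⊤ :=
  dif_neg fun ⟨_, k, hk⟩ =>
    (exponent_le_of_bigO_bigOmega hk.1 (h (k + 1))).not_gt k.lt_succ_self

theorem Vfun_eq_exponent (hD : V.demonic) (hC : IsSCC V C) (hv : ∀ x, 1 ≤ v x)
    (x : {x // v x ≠ ⊤}) : Vfun (V.restrictTo C) v x.1 = (sccNet V C v).exponent x := by
  cases hx : (sccNet V C v).exponent x using ENat.recTopCoe with
  | top => exact Vfun_of_forall_bigOmega fun k => bigOmega_CInf hD hC hv x (hx.symm ▸ le_top)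
  | coe k => exact Vfun_of_bigTheta x.2 ⟨bigO_CInf x hx, bigOmega_CInf hD hC hv x hx.ge⟩

theorem le_Vfun (hD : V.demonic) (hC : IsSCC V C) (hv : ∀ x, 1 ≤ v x) (x : Fin d) :
    v x ≤ Vfun (V.restrictTo C) v x := by
  by_cases hx : v x = ⊤
  · rw [Vfun_of_eq_top hx]
    exact le_top
  · rw [Vfun_eq_exponent hD hC hv ⟨x, hx⟩, ← ENat.natCast_toNat hx]
    exact (sccNet V C v).v_le_exponent ⟨x, hx⟩

theorem exists_bound_of_stepIn (hD : V.demonic) (hC : IsSCC V C) (hv : ∀ x, 1 ≤ v x) :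
    ∃ B : ℕ, ∀ n ≥ 1, ∀ c c' : V.Config, c.1 ∈ C → (∀ x (j : ℕ), v x = j → c.2 x ≤ n ^ j) →
      Relation.ReflTransGen (V.StepIn C) c c' →
        ∀ x (k : ℕ), Vfun (V.restrictTo C) v x = k → c'.2 x ≤ B * n ^ k := by
  have hbound : ∀ x, ∃ B : ℕ, ∀ n ≥ 1, ∀ c c' : V.Config, c.1 ∈ C →
      (∀ x (j : ℕ), v x = j → c.2 x ≤ n ^ j) → Relation.ReflTransGen (V.StepIn C) c c' →
        ∀ k : ℕ, Vfun (V.restrictTo C) v x = k → c'.2 x ≤ B * n ^ k := by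
    intro x
    by_cases hk : ∃ k : ℕ, Vfun (V.restrictTo C) v x = k
    · obtain ⟨k, hk⟩ := hk
      have hx : v x ≠ ⊤ := fun hx => ENat.natCast_ne_top k (hk.symm.trans (Vfun_of_eq_top hx))
      obtain ⟨B, hB⟩ := exists_bound_of_finStep (x := ⟨x, hx⟩)
        ((Vfun_eq_exponent hD hC hv ⟨x, hx⟩).symm.trans hk)
      refine ⟨B, fun n hn c c' hc hstart h k' hk' => ?_⟩
      obtain rfl : k = k' := Nat.cast_inj.1 (hk.symm.trans hk')
      exact hB n hn c c' hc (fun y hy => hstart y _ (ENat.natCast_toNat hy).symm)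
        (Relation.ReflTransGen.mono (fun _ _ hs => hs.finStep v) _ _ h)
    · exact ⟨0, fun _ _ _ _ _ _ _ k hk' => absurd ⟨k, hk'⟩ hk⟩
  choose B hB using hbound
  obtain ⟨M, hM⟩ := Finite.exists_le B
  exact ⟨M, fun n hn c c' hc hstart h x k hk =>
    (hB x n hn c c' hc hstart h k hk).trans (Nat.mul_le_mul_right _ (hM x))⟩

/-- The counters infinite in `v` start at `n ^ (K + 1)`, which outweighs their loss along a
computation of length `O(n ^ K)`. -/
theorem exists_pumping_reach (hD : V.demonic) (hC : IsSCC V C) (hv : ∀ x, 1 ≤ v x) (K : ℕ) :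
    ∃ b N₀ : ℕ, ∀ n ≥ N₀, ∀ p ∈ C, ∀ y : Fin d → ℕ,
      (∀ x (j : ℕ), v x = j → n ^ j ≤ y x) → (∀ x, v x = ⊤ → n ^ (K + 1) ≤ y x) →
      ∃ z, V.Reach (p, y) (p, z) ∧
        ∀ x (k : ℕ), k ≤ K → (k : ℕ∞) ≤ Vfun (V.restrictTo C) v x → n ^ k ≤ b * z x := by
  obtain ⟨U, hU⟩ := exists_isLift_self V C v
  obtain ⟨b, N₀, hb⟩ := hU.exists_pumping hC hv K
  refine ⟨b + 1, max N₀ (U * b + 1), fun n hn p hp y hy htop => ?_⟩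
  have hloss : U * (b * n ^ K) + n ^ K ≤ n ^ (K + 1) := by
    calc U * (b * n ^ K) + n ^ K = (U * b + 1) * n ^ K := by ring
      _ ≤ n * n ^ K := Nat.mul_le_mul_right _ (le_of_max_le_right hn)
      _ = n ^ (K + 1) := (pow_succ' n K).symm
  obtain ⟨z, hreach, hz, hztop⟩ := hb n (le_of_max_le_left hn) p hp y
    (fun x hx => hy x _ (ENat.natCast_toNat hx).symm) fun x hx => by
      have := htop x hx
      omega
  refine ⟨z, hreach, fun x k hkK hk => ?_⟩
  by_cases hx : v x = ⊤
  · calc n ^ k ≤ n ^ K := Nat.pow_le_pow_right (by have := le_of_max_le_right hn; omega) hkK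
      _ ≤ z x := by have := htop x hx; have := hztop x hx; omega
      _ ≤ (b + 1) * z x := Nat.le_mul_of_pos_left _ b.succ_pos
  · rw [Vfun_eq_exponent hD hC hv ⟨x, hx⟩] at hk
    exact (hz ⟨x, hx⟩ k hkK hk).trans (Nat.mul_le_mul_right _ b.le_succ)

end Component

/-! ### Growth along a walk through several components -/

section Growth

variable {V : VASS d} {C C' : Set V.Q} {w : Fin d → ℕ∞}

theorem VASS.Step.le_add {c c' : V.Config} {U : ℕ} (h : V.Step c c')
    (hU : ∀ t ∈ V.Tran, ∀ x, |t.2.1 x| ≤ (U : ℤ)) (x : Fin d) : c'.2 x ≤ c.2 x + U := by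
  obtain ⟨t, ⟨ht, -, hnonneg⟩, rfl⟩ := h
  have := (abs_le.1 (hU t ht x)).2
  have := hnonneg x
  simp only [VASS.applyT]
  omega

theorem exists_step_of_edgeRel {p q : V.Q} {U : ℕ} (h : V.edgeRel p q)
    (hU : ∀ t ∈ V.Tran, ∀ x, |t.2.1 x| ≤ (U : ℤ)) {y : Fin d → ℕ} (hy : ∀ x, U ≤ y x) :
    ∃ z, V.Step (p, y) (q, z) ∧ ∀ x, y x ≤ z x + U := by
  obtain ⟨u, hu⟩ := h
  have hlower : ∀ x, -(U : ℤ) ≤ u x := fun x => (abs_le.1 (hU _ hu x)).1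
  have hnonneg : ∀ x, 0 ≤ (y x : ℤ) + u x := fun x => by
    have := hlower x
    have := hy x
    omega
  refine ⟨_, ⟨(p, u, q), ⟨hu, rfl, hnonneg⟩, rfl⟩, fun x => ?_⟩
  have := hlower x
  dsimp only
  omega

theorem exists_cost_of_reflTransGen {p q : V.Q} (h : Relation.ReflTransGen V.edgeRel p q) :
    ∃ B : ℕ, ∀ y : Fin d → ℕ, (∀ x, B ≤ y x) →
      ∃ z, V.Reach (p, y) (q, z) ∧ ∀ x, y x ≤ z x + B := by
  obtain ⟨U, hU⟩ := exists_abs_update_le V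
  induction h with
  | refl => exact ⟨0, fun y _ => ⟨y, .refl, fun x => le_rfl⟩⟩
  | tail _ hedge ih =>
    obtain ⟨B, hB⟩ := ih
    refine ⟨B + U, fun y hy => ?_⟩
    obtain ⟨z, hreach, hz⟩ := hB y fun x => (Nat.le_add_right _ _).trans (hy x)
    obtain ⟨z', hstep, hz'⟩ := exists_step_of_edgeRel hedge hU (y := z) fun x => by
      have := hy x
      have := hz x
      omega
    exact ⟨z', hreach.tail hstep, fun x => by have := hz x; have := hz' x; omega⟩

theorem exists_cost (V : VASS d) : ∃ B : ℕ, ∀ p q, Relation.ReflTransGen V.edgeRel p q →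
    ∀ y : Fin d → ℕ, (∀ x, B ≤ y x) → ∃ z, V.Reach (p, y) (q, z) ∧ ∀ x, y x ≤ z x + B := by
  choose B hB using fun a : {a : V.Q × V.Q // Relation.ReflTransGen V.edgeRel a.1 a.2} =>
    exists_cost_of_reflTransGen a.2
  obtain ⟨M, hM⟩ := Finite.exists_le B
  refine ⟨M, fun p q hpq y hy => ?_⟩
  obtain ⟨z, hreach, hz⟩ := hB ⟨(p, q), hpq⟩ y fun x => (hM _).trans (hy x)
  exact ⟨z, hreach, fun x => (hz x).trans (Nat.add_le_add_left (hM _) _)⟩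

theorem VASS.Reach.mono {c c' : V.Config} (h : V.Reach c c') {y : Fin d → ℕ}
    (hy : ∀ x, c.2 x ≤ y x) : ∃ z, V.Reach (c.1, y) (c'.1, z) ∧ ∀ x, c'.2 x ≤ z x := by
  induction h with
  | refl => exact ⟨y, .refl, hy⟩
  | tail _ hstep ih =>
    obtain ⟨z, hreach, hz⟩ := ih
    obtain ⟨t, ⟨ht, hsrc, hnonneg⟩, rfl⟩ := hstep
    refine ⟨_, hreach.tail ⟨t, ⟨ht, hsrc, fun x => ?_⟩, rfl⟩, fun x => ?_⟩
    · have := hnonneg x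
      have := hz x
      dsimp only
      omega
    · have := hz x
      simp only [VASS.applyT]
      omega

theorem exists_forall_le_of_eq_coe (w : Fin d → ℕ∞) : ∃ J : ℕ, ∀ x (k : ℕ), w x = k → k ≤ J :=
  (Finite.exists_le fun x => (w x).toNat).imp fun _ hJ x _ hk => by simpa [hk] using hJ x

/-- Some computation from the initial counters `n` ends in any given state of `C` with all counters
`x` of order `n ^ w x` at once. An infinite exponent is represented by arbitrarily large `K`. -/
def Attains (V : VASS d) (C : Set V.Q) (w : Fin d → ℕ∞) : Prop :=
  ∀ K : ℕ, ∃ c N₀ : ℕ, ∀ n ≥ N₀, ∀ q ∈ C, ∃ p y, V.Reach (p, fun _ => n) (q, y) ∧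
    ∀ x (k : ℕ), k ≤ K → (k : ℕ∞) ≤ w x → n ^ k ≤ c * y x

theorem attains_one (V : VASS d) (C : Set V.Q) : Attains V C fun _ => 1 := fun K => by
  refine ⟨1, 1, fun n hn q _ => ⟨q, fun _ => n, .refl, fun _ k _ hk => ?_⟩⟩
  calc n ^ k ≤ n ^ 1 := Nat.pow_le_pow_right hn (Nat.cast_le_one.1 hk)
    _ = 1 * n := by rw [pow_one, one_mul]

theorem Attains.walk (h : Attains V C w) (hw : ∀ x, 1 ≤ w x)
    (hCC' : ∀ q ∈ C', ∃ p ∈ C, Relation.ReflTransGen V.edgeRel p q) : Attains V C' w := by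
  intro K
  obtain ⟨c, N₀, hc⟩ := h (K + 1)
  obtain ⟨B, hB⟩ := exists_cost V
  refine ⟨2 * c, max N₀ (c * (2 * B) + 1), fun n hn q hq => ?_⟩
  obtain ⟨q', hq', hreach⟩ := hCC' q hq
  obtain ⟨p, y, hpq', hy⟩ := hc n (le_of_max_le_left hn) q' hq'
  have hBy : ∀ x, 2 * B ≤ y x := by
    intro x
    have := hy x 1 (Nat.le_add_left 1 K) (hw x)
    rw [pow_one] at this
    by_contra! hlt
    have := Nat.mul_le_mul_left c hlt.le
    have := le_of_max_le_right hn
    omega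
  obtain ⟨z, hreach', hz⟩ := hB q' q hreach y fun x => by have := hBy x; omega
  refine ⟨p, z, hpq'.trans hreach', fun x k hk hkx => ?_⟩
  calc n ^ k ≤ c * y x := hy x k (hk.trans K.le_succ) hkx
    _ ≤ c * (2 * z x) := Nat.mul_le_mul_left c (by have := hBy x; have := hz x; omega)
    _ = 2 * c * z x := by ring

/-- The pumping inside `C` happens at a smaller scale `m` proportional to `n`, which absorbs the
constants lost so far. -/
theorem Attains.vfun (hD : V.demonic) (hC : IsSCC V C) (h : Attains V C w)
    (hw : ∀ x, 1 ≤ w x) : Attains V C (Vfun (V.restrictTo C) w) := by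
  intro K
  obtain ⟨b, N₁, hpump⟩ := exists_pumping_reach hD hC hw K
  obtain ⟨J, hJ⟩ := exists_forall_le_of_eq_coe w
  obtain ⟨c, N₀, hc⟩ := h (max J (K + 1))
  set M := 2 * c * 1 + 1
  refine ⟨(2 * M) ^ K * b, max N₀ (M * (N₁ + 1)), fun n hn q hq => ?_⟩
  obtain ⟨m, hm, hmn, hnm⟩ := exists_scale (M := M) (by omega) N₁.succ_pos (le_of_max_le_right hn)
  obtain ⟨p, y, hreach, hy⟩ := hc n (le_of_max_le_left hn) q hq
  have hmy : ∀ x (k : ℕ), k ≠ 0 → k ≤ max J (K + 1) → (k : ℕ∞) ≤ w x → m ^ k ≤ y x := by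
    intro x k hk hkJ hkw
    have := two_mul_le_of_pow_le (y := y x) hk (by omega) hmn (mod_cast hy x k hkJ hkw)
    have : 2 * (1 * m ^ k) ≤ y x := by exact_mod_cast this
    omega
  obtain ⟨z, hreach', hz⟩ := hpump m (by omega) q hq y
    (fun x j hj => hmy x j (fun hj0 => by simpa [hj, hj0] using hw x)
      (le_max_of_le_left (hJ x j hj)) hj.ge)
    (fun x hx => hmy x (K + 1) K.succ_ne_zero (le_max_right _ _) (hx.symm ▸ le_top))
  refine ⟨p, z, hreach.trans hreach', fun x k hk hkx => ?_⟩
  calc n ^ k ≤ (2 * M * m) ^ k := Nat.pow_le_pow_left hnm k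
    _ = (2 * M) ^ k * m ^ k := mul_pow ..
    _ ≤ (2 * M) ^ K * (b * z x) :=
      Nat.mul_le_mul (Nat.pow_le_pow_right (by omega) hk) (hz x k hk hkx)
    _ = (2 * M) ^ K * b * z x := (mul_assoc ..).symm

/-- The computations described by the relation `R`, from initial counters at most `n`, raise every
counter `x` with a finite `w x` to at most `O(n ^ w x)`. -/
def Dominated (R : V.Config → V.Config → Prop) (w : Fin d → ℕ∞) : Prop :=
  ∃ B : ℕ, ∀ n ≥ 1, ∀ c₀ c : V.Config, (∀ x, c₀.2 x ≤ n) → R c₀ c →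
    ∀ x (k : ℕ), w x = k → c.2 x ≤ B * n ^ k

theorem dominated_eq (V : VASS d) : Dominated (V := V) Eq fun _ => 1 := by
  refine ⟨1, fun n _ c₀ c hc₀ h x k hk => ?_⟩
  obtain rfl : k = 1 := Nat.cast_eq_one.1 hk.symm
  simpa [← h] using hc₀ x

theorem Dominated.comp_step {R : V.Config → V.Config → Prop} (h : Dominated R w) :
    Dominated (Relation.Comp R V.Step) w := by
  obtain ⟨B, hB⟩ := h
  obtain ⟨U, hU⟩ := exists_abs_update_le V
  refine ⟨B + U, fun n hn c₀ c hc₀ ⟨c₁, hR, hstep⟩ x k hk => ?_⟩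
  calc c.2 x ≤ c₁.2 x + U := hstep.le_add hU x
    _ ≤ B * n ^ k + U * n ^ k :=
      add_le_add (hB n hn c₀ c₁ hc₀ hR x k hk) (Nat.le_mul_of_pos_right U (Nat.pow_pos hn))
    _ = (B + U) * n ^ k := (add_mul ..).symm

/-- A computation inside `C`, possibly without any step. -/
def Within (V : VASS d) (C : Set V.Q) (c c' : V.Config) : Prop :=
  c.1 ∈ C ∧ Relation.ReflTransGen (V.StepIn C) c c'

/-- The bound for `C` applies at a scale larger than `n` by a constant factor, which absorbs the
constant of `h`. -/
theorem Dominated.comp_within (hD : V.demonic) (hC : IsSCC V C)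
    {R : V.Config → V.Config → Prop} (h : Dominated R w) (hw : ∀ x, 1 ≤ w x) :
    Dominated (Relation.Comp R (Within V C)) (Vfun (V.restrictTo C) w) := by
  obtain ⟨B, hB⟩ := h
  obtain ⟨A, hA⟩ := exists_bound_of_stepIn hD hC hw
  obtain ⟨J, hJ⟩ := exists_forall_le_of_eq_coe (Vfun (V.restrictTo C) w)
  refine ⟨A * (B + 1) ^ J, fun n hn c₀ c hc₀ ⟨c₁, hR, hmem, hin⟩ x k hk => ?_⟩
  have hc₁ : ∀ x (j : ℕ), w x = j → c₁.2 x ≤ ((B + 1) * n) ^ j := by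
    intro x j hj
    have hj0 : j ≠ 0 := fun hj0 => by simpa [hj, hj0] using hw x
    calc c₁.2 x ≤ B * n ^ j := hB n hn c₀ c₁ hc₀ hR x j hj
      _ ≤ (B + 1) ^ j * n ^ j :=
        Nat.mul_le_mul_right _ (B.le_succ.trans (Nat.le_self_pow hj0 _))
      _ = ((B + 1) * n) ^ j := (mul_pow ..).symm
  calc c.2 x ≤ A * ((B + 1) * n) ^ k := hA _ (Nat.mul_pos B.succ_pos hn) c₁ c hmem hc₁ hin x k hk
    _ = A * (B + 1) ^ k * n ^ k := by rw [mul_pow, mul_assoc]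
    _ ≤ A * (B + 1) ^ J * n ^ k := by
      gcongr
      exacts [Nat.succ_pos B, hJ x k hk]

end Growth

/-! ### Paths in the DAG of components -/

section Paths

variable {V : VASS d} {C C' : Set V.Q} {r : List (Set V.Q)}

theorem mem_sccOf_self (V : VASS d) (p : V.Q) : p ∈ sccOf V p := ⟨.refl, .refl⟩

theorem IsSCC.reflTransGen (hC : IsSCC V C) {p q : V.Q} (hp : p ∈ C) (hq : q ∈ C) :
    Relation.ReflTransGen V.edgeRel p q := by
  obtain ⟨r, rfl⟩ := hC
  exact hp.2.trans hq.1

theorem IsSCC.eq_of_mutReach (hC : IsSCC V C) (hC' : IsSCC V C') {p q : V.Q} (hp : p ∈ C)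
    (hq : q ∈ C') (hpq : mutReach V p q) : C = C' := by
  obtain ⟨a, rfl⟩ := hC
  obtain ⟨b, rfl⟩ := hC'
  have hab := (hp.1.trans hpq.1).trans hq.2
  have hba := (hq.1.trans hpq.2).trans hp.2
  ext x
  exact ⟨fun hx => ⟨hba.trans hx.1, hx.2.trans hab⟩, fun hx => ⟨hab.trans hx.1, hx.2.trans hba⟩⟩

/-- `RootedPath V C r`: the list `C :: r`, read from its end to its head, is a path in `D(A)` from a
root to `C`. Storing the last component first makes the recursion of `pathVec` structural. -/
inductive RootedPath (V : VASS d) : Set V.Q → List (Set V.Q) → Prop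
  | root {C : Set V.Q} : IsRootSCC V C → RootedPath V C []
  | step {C C' : Set V.Q} {r : List (Set V.Q)} :
      RootedPath V C r → IsSCC V C' → sccEdge V C C' → RootedPath V C' (C :: r)

/-- The vector `v_m` of the path stored as `C :: r`. -/
def revPathVec (V : VASS d) (C : Set V.Q) (r : List (Set V.Q)) : Fin d → ℕ∞ :=
  pathVec V (C :: r).reverse

theorem revPathVec_nil (V : VASS d) (C : Set V.Q) :
    revPathVec V C [] = Vfun (V.restrictTo C) fun _ => 1 := by
  simp [revPathVec, pathVec]

theorem revPathVec_cons (V : VASS d) (C' C : Set V.Q) (r : List (Set V.Q)) :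
    revPathVec V C' (C :: r) = Vfun (V.restrictTo C') (revPathVec V C r) := by
  simp [revPathVec, pathVec]

theorem isRootedSCCPath_reverse {l : List (Set V.Q)} : IsRootedSCCPath V l.reverse ↔
    (∀ D ∈ l, IsSCC V D) ∧ l.IsChain (fun D D' => sccEdge V D' D) ∧
      ∃ C₀ ∈ l.getLast?, IsRootSCC V C₀ := by
  have hroot : (∃ C₀ rest, l.reverse = C₀ :: rest ∧ IsRootSCC V C₀) ↔
      ∃ C₀ ∈ l.getLast?, IsRootSCC V C₀ := by
    simp only [← List.head?_reverse, Option.mem_def, List.head?_eq_some_iff, exists_and_right]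
  rw [IsRootedSCCPath, hroot]
  exact and_congr (by simp only [List.mem_reverse]) (and_congr_left' List.isChain_reverse)

theorem rootedPath_iff : RootedPath V C r ↔ IsRootedSCCPath V (C :: r).reverse := by
  rw [isRootedSCCPath_reverse]
  induction r generalizing C with
  | nil =>
    simp only [List.mem_singleton, forall_eq, List.isChain_singleton, List.getLast?_singleton,
      Option.mem_some_iff, exists_eq_left', true_and]
    exact ⟨fun | .root h => ⟨h.1, h⟩, fun h => .root h.2⟩
  | cons C' r ih =>
    simp only [List.forall_mem_cons (a := C), List.isChain_cons_cons, List.getLast?_cons_cons]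
    exact ⟨fun | .step h hC he => by simp_all, fun ⟨⟨hC, hr⟩, ⟨he, hchain⟩, hroot⟩ =>
      .step (ih.2 ⟨hr, hchain, hroot⟩) hC he⟩

theorem exists_rootedPath {l : List (Set V.Q)} (h : IsRootedSCCPath V l) :
    ∃ C r, RootedPath V C r ∧ pathVec V l = revPathVec V C r := by
  obtain ⟨l, rfl⟩ := List.reverse_surjective l
  cases l with
  | nil =>
    obtain ⟨-, -, _, _, hnil, -⟩ := h
    exact absurd hnil.symm (List.cons_ne_nil _ _)
  | cons C r => exact ⟨C, r, rootedPath_iff.2 h, rfl⟩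

namespace RootedPath

theorem isSCC : RootedPath V C r → IsSCC V C
  | root h => h.1
  | step _ h _ => h

theorem one_le_revPathVec (h : RootedPath V C r) (hD : V.demonic) (x : Fin d) :
    1 ≤ revPathVec V C r x := by
  induction h generalizing x with
  | root h =>
    rw [revPathVec_nil]
    exact le_Vfun hD h.1 (fun _ => le_rfl) x
  | step _ hC' _ ih =>
    rw [revPathVec_cons]
    exact (ih x).trans (le_Vfun hD hC' ih x)

theorem attains (h : RootedPath V C r) (hD : V.demonic) : Attains V C (revPathVec V C r) := by
  induction h with
  | root h =>
    rw [revPathVec_nil]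
    exact (attains_one V _).vfun hD h.1 fun _ => le_rfl
  | step hr hC' hedge ih =>
    obtain ⟨-, p, hp, p', hp', hpp'⟩ := hedge
    have hw := hr.one_le_revPathVec hD
    rw [revPathVec_cons]
    exact (ih.walk hw fun q hq => ⟨p, hp, (hC'.reflTransGen hp' hq).head hpp'⟩).vfun hD hC' hw

end RootedPath

/-- Some computation from `c` to `c'` traverses exactly the components of `C :: r`, from the end of
the list to its head. -/
def Traverses (V : VASS d) : Set V.Q → List (Set V.Q) → V.Config → V.Config → Prop
  | C, [] => Relation.Comp Eq (Within V C)
  | C', C :: r => Relation.Comp (Relation.Comp (Traverses V C r) V.Step) (Within V C')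

theorem RootedPath.dominated (h : RootedPath V C r) (hD : V.demonic) :
    Dominated (Traverses V C r) (revPathVec V C r) := by
  induction h with
  | root h =>
    rw [revPathVec_nil]
    exact (dominated_eq V).comp_within hD h.1 fun _ => le_rfl
  | step hr hC' _ ih =>
    rw [revPathVec_cons]
    exact ih.comp_step.comp_within hD hC' (hr.one_le_revPathVec hD)

theorem Traverses.tail {c₀ c c' : V.Config} (h : Traverses V C r c₀ c) (hs : V.StepIn C c c') :
    Traverses V C r c₀ c' := by
  cases r with
  | nil | cons =>
    obtain ⟨c₁, hc₁, hmem, hin⟩ := h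
    exact ⟨c₁, hc₁, hmem, hin.tail hs⟩

theorem exists_traverses {c₀ c : V.Config} (hroot : IsRootSCC V (sccOf V c₀.1))
    (h : V.Reach c₀ c) : ∃ C r, RootedPath V C r ∧ Traverses V C r c₀ c ∧ c.1 ∈ C := by
  have hself := mem_sccOf_self V
  induction h with
  | refl => exact ⟨_, [], .root hroot, ⟨_, rfl, hself _, .refl⟩, hself _⟩
  | @tail c c' _ hstep ih =>
    obtain ⟨C, r, hpath, htrav, hc⟩ := ih
    by_cases hc' : c'.1 ∈ C
    · exact ⟨C, r, hpath, htrav.tail ⟨hstep, hc, hc'⟩, hc'⟩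
    · have hedge : V.edgeRel c.1 c'.1 := by
        obtain ⟨t, ⟨ht, hsrc, -⟩, rfl⟩ := hstep
        exact ⟨t.2.1, hsrc ▸ ht⟩
      have hne : C ≠ sccOf V c'.1 := fun hC => hc' (hC ▸ hself _)
      exact ⟨sccOf V c'.1, C :: r, hpath.step ⟨_, rfl⟩ ⟨hne, _, hc, _, hself _, hedge⟩,
        ⟨c', ⟨c, htrav, hstep⟩, hself _, .refl⟩, hself _⟩

/-! ### The finitely many paths together -/

namespace RootedPath

theorem exists_reflTransGen_of_mem (h : RootedPath V C r) {D : Set V.Q} (hD : D ∈ C :: r) :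
    ∃ p ∈ D, ∃ q ∈ C, Relation.ReflTransGen V.edgeRel p q := by
  induction h with
  | root h =>
    obtain rfl := List.mem_singleton.1 hD
    obtain ⟨p, hp⟩ := h.1.nonempty
    exact ⟨p, hp, p, hp, .refl⟩
  | step hr _ hedge ih =>
    obtain ⟨-, a, ha, a', ha', haa'⟩ := hedge
    obtain rfl | hD := List.mem_cons.1 hD
    · exact ⟨a', ha', a', ha', .refl⟩
    · obtain ⟨p, hp, q, hq, hpq⟩ := ih hD
      exact ⟨p, hp, a', ha', (hpq.trans (hr.isSCC.reflTransGen hq ha)).tail haa'⟩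

theorem nodup (h : RootedPath V C r) : (C :: r).Nodup := by
  induction h with
  | root => exact List.nodup_singleton _
  | step hr hC' hedge ih =>
    refine List.nodup_cons.2 ⟨fun hmem => ?_, ih⟩
    obtain ⟨hne, a, ha, a', ha', haa'⟩ := hedge
    obtain ⟨p, hp, q, hq, hpq⟩ := hr.exists_reflTransGen_of_mem hmem
    exact hne (hr.isSCC.eq_of_mutReach hC' ha ha' ⟨.single haa',
      ((hC'.reflTransGen ha' hp).trans hpq).trans (hr.isSCC.reflTransGen hq ha)⟩)

theorem finite (V : VASS d) : Finite {a : Set V.Q × List (Set V.Q) // RootedPath V a.1 a.2} :=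
  Finite.of_injective (β := {l : List (Set V.Q) // l.Nodup}) (fun a => ⟨a.1.1 :: a.1.2, a.2.nodup⟩)
    fun _ _ hab => Subtype.ext (Prod.ext_iff.2 (List.cons.inj (congrArg Subtype.val hab)))

end RootedPath

/-- The root is an ancestor of `p` with the fewest ancestors. -/
theorem exists_isRootSCC_reach (V : VASS d) (p : V.Q) :
    ∃ r, IsRootSCC V (sccOf V r) ∧ Relation.ReflTransGen V.edgeRel r p := by
  let anc (q : V.Q) : Finset V.Q := {a | Relation.ReflTransGen V.edgeRel a q}
  have mem_anc {a q : V.Q} : a ∈ anc q ↔ Relation.ReflTransGen V.edgeRel a q := by simp [anc]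
  obtain ⟨r, hrp, hmin⟩ := (anc p).exists_min_image (fun q => (anc q).card) ⟨p, mem_anc.2 .refl⟩
  rw [mem_anc] at hrp
  refine ⟨r, ⟨⟨r, rfl⟩, fun C hC ⟨hne, a, ha, b, hb, hab⟩ => hne ?_⟩, hrp⟩
  have har : Relation.ReflTransGen V.edgeRel a r := hb.2.head hab
  have hsub : anc a ⊆ anc r := fun x hx => mem_anc.2 ((mem_anc.1 hx).trans har)
  have heq : anc a = anc r :=
    Finset.eq_of_subset_of_card_le hsub (hmin a (mem_anc.2 (har.trans hrp)))
  have hra : Relation.ReflTransGen V.edgeRel r a := mem_anc.1 (heq ▸ mem_anc.2 .refl)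
  exact hC.eq_of_mutReach ⟨r, rfl⟩ ha (mem_sccOf_self V r) ⟨har, hra⟩

theorem exists_bound_of_isRootSCC (hD : V.demonic) {i : Fin d} {k : ℕ}
    (h : ∀ C r, RootedPath V C r → revPathVec V C r i ≤ k) :
    ∃ B : ℕ, ∀ n ≥ 1, ∀ c₀ c : V.Config, IsRootSCC V (sccOf V c₀.1) → (∀ x, c₀.2 x ≤ n) →
      V.Reach c₀ c → c.2 i ≤ B * n ^ k := by
  choose B hB using fun a : {a : Set V.Q × List (Set V.Q) // RootedPath V a.1 a.2} =>
    a.2.dominated hD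
  have := RootedPath.finite V
  obtain ⟨M, hM⟩ := Finite.exists_le B
  refine ⟨M, fun n hn c₀ c hroot hc₀ hreach => ?_⟩
  obtain ⟨C, r, hpath, htrav, -⟩ := exists_traverses hroot hreach
  obtain ⟨j, hj, hjk⟩ := ENat.le_natCast_iff.1 (h C r hpath)
  calc c.2 i ≤ B ⟨(C, r), hpath⟩ * n ^ j := hB ⟨(C, r), hpath⟩ n hn c₀ c hc₀ htrav i j hj
    _ ≤ M * n ^ k := Nat.mul_le_mul (hM _) (Nat.pow_le_pow_right hn hjk)

/-- A computation that starts outside the root components is compared with one that first walks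
there from a root, at a bounded cost. -/
theorem bigO_Ccomp (hD : V.demonic) {i : Fin d} {k : ℕ}
    (h : ∀ C r, RootedPath V C r → revPathVec V C r i ≤ k) : BigO (Ccomp V i) fun n => n ^ k := by
  obtain ⟨B, hB⟩ := exists_bound_of_isRootSCC hD h
  obtain ⟨A, hA⟩ := exists_cost V
  refine ⟨B * (1 + A) ^ k, 1, fun n hn => iSup_le fun p => Cval_le _ fun c hreach => ?_⟩
  obtain ⟨r, hroot, hrp⟩ := exists_isRootSCC_reach V p
  obtain ⟨y, hry, hy⟩ := hA r p hrp (fun _ => n + A) fun _ => Nat.le_add_left _ _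
  obtain ⟨z, hyz, hz⟩ := VASS.Reach.mono hreach fun x => Nat.le_of_add_le_add_right (hy x)
  have hscale : n + A ≤ (1 + A) * n := by nlinarith
  rw [Nat.cast_le]
  calc c.2 i ≤ z i := hz i
    _ ≤ B * (n + A) ^ k :=
      hB (n + A) (by omega) (r, fun _ => n + A) _ hroot (fun _ => le_rfl) (hry.trans hyz)
    _ ≤ B * ((1 + A) * n) ^ k := by gcongr
    _ = B * (1 + A) ^ k * n ^ k := by rw [mul_pow, mul_assoc]

theorem RootedPath.bigOmega_Ccomp (h : RootedPath V C r) (hD : V.demonic) {i : Fin d} {k : ℕ}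
    (hk : (k : ℕ∞) ≤ revPathVec V C r i) : BigOmega (Ccomp V i) fun n => n ^ k := by
  obtain ⟨c, N₀, hc⟩ := h.attains hD k
  obtain ⟨q, hq⟩ := h.isSCC.nonempty
  refine bigOmega_of_pow_le (b := c) (N₀ := N₀) fun n hn => ?_
  obtain ⟨p, y, hreach, hy⟩ := hc n hn q hq
  exact ⟨y i, hy i k le_rfl hk,
    (le_Cval hD i hreach).trans (le_iSup (fun p => Cval V i (p, fun _ => n)) p)⟩

theorem bigO_Ccomp_iff (hD : V.demonic) {i : Fin d} {k : ℕ} :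
    BigO (Ccomp V i) (fun n => n ^ k) ↔ ∀ C r, RootedPath V C r → revPathVec V C r i ≤ k := by
  refine ⟨fun hO C r hpath => ?_, bigO_Ccomp hD⟩
  by_contra! hlt
  have hΩ := hpath.bigOmega_Ccomp hD (k := k + 1) (by exact_mod_cast Order.add_one_le_of_lt hlt)
  exact (exponent_le_of_bigO_bigOmega hO hΩ).not_gt k.lt_succ_self

theorem exists_rootedPath_of_bigOmega_Ccomp (hD : V.demonic) {i : Fin d} {k : ℕ}
    (hΩ : BigOmega (Ccomp V i) fun n => n ^ k) :
    ∃ C r, RootedPath V C r ∧ k ≤ revPathVec V C r i := by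
  by_contra! hlt
  cases k with
  | zero =>
    obtain ⟨r, hr, -⟩ := exists_isRootSCC_reach V (Classical.arbitrary V.Q)
    exact not_lt_zero (hlt _ _ (.root hr))
  | succ k =>
    have hO : BigO (Ccomp V i) fun n => n ^ k := bigO_Ccomp hD fun C r hpath =>
      Order.le_of_lt_add_one (by exact_mod_cast hlt C r hpath)
    exact (exponent_le_of_bigO_bigOmega hO hΩ).not_gt k.lt_succ_self

end Paths

/-- Let `A` be a demonic VASS.  For every counter `c_i` and every `k ∈ ℕ`:
`C_A[c_i] ∈ Ω(n^k)` iff there is a path `η_1,…,η_m` in `D(A)` from a root with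
`v_m(i) ≥ k`; and `C_A[c_i] ∈ O(n^k)` iff for every path `η_1,…,η_m` in `D(A)` from a root,
`v_m(i) ≤ k`. -/
theorem demonic_scc_path_characterization {d : ℕ} (V : VASS d) (hT : V.total)
    (hD : V.demonic) (i : Fin d) (k : ℕ) :
    (BigOmega (Ccomp V i) (fun n => n ^ k) ↔
      ∃ ηs : List (Set V.Q), IsRootedSCCPath V ηs ∧ (k : ℕ∞) ≤ pathVec V ηs i) ∧
    (BigO (Ccomp V i) (fun n => n ^ k) ↔
      ∀ ηs : List (Set V.Q), IsRootedSCCPath V ηs → pathVec V ηs i ≤ (k : ℕ∞)) := by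
  refine ⟨⟨fun hΩ => ?_, fun ⟨ηs, hηs, hk⟩ => ?_⟩, (bigO_Ccomp_iff hD).trans ⟨fun h ηs hηs => ?_,
    fun h C r hpath => h _ (rootedPath_iff.1 hpath)⟩⟩
  · obtain ⟨C, r, hpath, hk⟩ := exists_rootedPath_of_bigOmega_Ccomp hD hΩ
    exact ⟨_, rootedPath_iff.1 hpath, hk⟩
  · obtain ⟨C, r, hpath, hvec⟩ := exists_rootedPath hηs
    exact hpath.bigOmega_Ccomp hD (hvec ▸ hk)
  · obtain ⟨C, r, hpath, hvec⟩ := exists_rootedPath hηs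
    exact hvec ▸ h C r hpath

end
end VassPaper
end

section
/- For every VASS game A, the locking decomposition G_A is acyclic, and the length of every path in G_A is at most |Q| + |Q_A|, with at most |Q| demonic vertices on any path. -/
/-! Say that the demon drives `p` to `q` in a game when a path leads from `p` to `q` all of whose
*sources* are demonic; the target may be angelic. This is a preorder, and the vertices of the
demonic decomposition are exactly its classes of mutual reachability. Locking a further angelic
state only adds moves of the demon, so the set of states that the demon can drive into a vertex
never shrinks along an edge of `G_A`.

Along a demonic edge `[p] → [q]` this set gains `q`, and along an angelic edge the set of locked
states grows; so the sum of the two cardinalities, which is positive and at most `|Q| + |Q_A|`,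
increases strictly along every edge. This gives both acyclicity and the bound on the length. For
the bound on demonic vertices, count only the demonic states that can be driven into a vertex: a
demonic edge into a demonic `[q]` adds `q`, and an angelic edge out of `[p]` adds `p`, which has
just become demonic. -/

open scoped Classical

namespace VassPaper

noncomputable section

variable {d : ℕ}

/-- A locking set: a set of transitions of `A` with angelic source states, containing at most
one outgoing transition per state. -/
def IsLockingSet {d : ℕ} (V : VASS d) (L : Finset (V.Q × (Fin d → ℤ) × V.Q)) : Prop :=
  (∀ t ∈ L, t ∈ V.Tran ∧ V.angelic t.1) ∧
  ∀ t ∈ L, ∀ t' ∈ L, t.1 = t'.1 → t = t'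

/-- A state is locked by `L` if `L` contains one of its outgoing transitions. -/
def lockedBy {d : ℕ} {V : VASS d} (L : Finset (V.Q × (Fin d → ℤ) × V.Q)) (p : V.Q) : Prop :=
  ∃ t ∈ L, t.1 = p

/-- The VASS game `A_L`: each state locked by `L` becomes demonic, with its transition in `L`
as its only outgoing transition. -/
def VASS.lock {d : ℕ} (V : VASS d) (L : Finset (V.Q × (Fin d → ℤ) × V.Q)) : VASS d :=
  { V with
    Tran := V.Tran.filter (fun t => ¬ lockedBy L t.1) ∪ L
    angelic := fun q => V.angelic q ∧ ¬ lockedBy L q }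

/-- Reachability via a finite path leading only through demonic states. -/
def demReach {d : ℕ} (W : VASS d) (p q : W.Q) : Prop :=
  Relation.ReflTransGen (fun a b => ¬ W.angelic a ∧ ¬ W.angelic b ∧ W.edgeRel a b) p q

/-- The equivalence underlying the demonic decomposition `D_A`: `p ~ q` iff `p = q`, or both
are demonic and mutually reachable via paths through demonic states. -/
def demEquiv {d : ℕ} (W : VASS d) (p q : W.Q) : Prop :=
  p = q ∨ (¬ W.angelic p ∧ ¬ W.angelic q ∧ demReach W p q ∧ demReach W q p)

/-- The vertex `[p]` of the demonic decomposition `D_W`. -/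
def demClass {d : ℕ} (W : VASS d) (p : W.Q) : Set W.Q := {q | demEquiv W p q}

/-- The edges of the demonic decomposition `D_W`. -/
def DEdge {d : ℕ} (W : VASS d) (C C' : Set W.Q) : Prop :=
  C ≠ C' ∧ ∃ p ∈ C, ∃ q ∈ C', W.edgeRel p q

/-- The vertices of the locking decomposition `G_A` of a VASS game `A` (defined as the least
collection closed under the given rules). -/
inductive IsGVert {d : ℕ} (V : VASS d) :
    Set V.Q → Finset (V.Q × (Fin d → ℤ) × V.Q) → Prop
  | base (p : V.Q) : IsGVert V (demClass (V.lock ∅) p) ∅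
  | dem {C : Set V.Q} {L : Finset (V.Q × (Fin d → ℤ) × V.Q)} (p q : V.Q)
      (h : IsGVert V C L) (hp : p ∈ C) (hdem : ¬ (V.lock L).angelic p)
      (hedge : DEdge (V.lock L) C (demClass (V.lock L) q)) :
      IsGVert V (demClass (V.lock L) q) L
  | ang {C : Set V.Q} {L : Finset (V.Q × (Fin d → ℤ) × V.Q)} (p : V.Q)
      (u : Fin d → ℤ) (q : V.Q)
      (h : IsGVert V C L) (hp : p ∈ C) (hang : (V.lock L).angelic p)
      (ht : (p, u, q) ∈ V.Tran) :
      IsGVert V (demClass (V.lock (insert (p, u, q) L)) q) (insert (p, u, q) L)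

/-- The edges of the locking decomposition `G_A`. -/
def GEdge {d : ℕ} (V : VASS d) :
    (Set V.Q × Finset (V.Q × (Fin d → ℤ) × V.Q)) →
    (Set V.Q × Finset (V.Q × (Fin d → ℤ) × V.Q)) → Prop := fun x y =>
  IsGVert V x.1 x.2 ∧
  ((y.2 = x.2 ∧ (∃ p ∈ x.1, ¬ (V.lock x.2).angelic p) ∧
      (∃ q : V.Q, y.1 = demClass (V.lock x.2) q) ∧ DEdge (V.lock x.2) x.1 y.1) ∨
   (∃ p ∈ x.1, (V.lock x.2).angelic p ∧ ∃ u q, (p, u, q) ∈ V.Tran ∧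
      y.2 = insert (p, u, q) x.2 ∧ y.1 = demClass (V.lock y.2) q))

section Chain

variable {α : Type*} {r : α → α → Prop} {p : α → Bool} {f : α → ℕ} {N : ℕ}

lemma add_countP_le_of_isChain_cons (hN : ∀ a, f a ≤ N) (hmono : ∀ {a b}, r a b → f a ≤ f b)
    (hlt : ∀ {a b}, r a b → p b → f a < f b) {a : α} {l : List α} (hl : (a :: l).IsChain r) :
    f a + l.countP p ≤ N := by
  induction l generalizing a with
  | nil => simpa using hN a
  | cons b l ih =>
    obtain ⟨hab, hbl⟩ := List.isChain_cons_cons.1 hl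
    have hb : f b + l.countP p ≤ N := ih hbl
    by_cases hpb : p b
    · have : f a < f b := hlt hab hpb
      rw [List.countP_cons_of_pos hpb]
      omega
    · have : f a ≤ f b := hmono hab
      rw [List.countP_cons_of_neg hpb]
      omega

lemma countP_le_of_isChain (hN : ∀ a, f a ≤ N) (hmono : ∀ {a b}, r a b → f a ≤ f b)
    (hlt : ∀ {a b}, r a b → p b → f a < f b) {l : List α} (hpos : ∀ a ∈ l, p a → 0 < f a)
    (hl : l.IsChain r) : l.countP p ≤ N := by
  cases l with
  | nil => simp
  | cons a l =>
    have hal : f a + l.countP p ≤ N := add_countP_le_of_isChain_cons hN hmono hlt hl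
    by_cases hpa : p a
    · have : 0 < f a := hpos a List.mem_cons_self hpa
      rw [List.countP_cons_of_pos hpa]
      omega
    · rw [List.countP_cons_of_neg hpa]
      omega

end Chain

section DemonReaches

/-- A move of the demon: a transition out of a demonic state, into an arbitrary state. -/
def VASS.demonStep (W : VASS d) (p q : W.Q) : Prop :=
  ¬ W.angelic p ∧ W.edgeRel p q

/-- The demon can drive `p` to `q` on its own. Unlike in `demReach`, the last state of the path
may be angelic, which makes this the preorder behind the demonic decomposition. -/
def VASS.demonReaches (W : VASS d) : W.Q → W.Q → Prop :=
  Relation.ReflTransGen W.demonStep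

/-- The states that the demon can drive into `C`. -/
def VASS.predecessors (W : VASS d) (C : Set W.Q) : Set W.Q :=
  {a | ∃ b ∈ C, W.demonReaches a b}

/-- The demonic states that the demon can drive into `C`. -/
def VASS.demonicPredecessors (W : VASS d) (C : Set W.Q) : Set W.Q :=
  {a ∈ W.predecessors C | ¬ W.angelic a}

variable {W : VASS d} {p q : W.Q}

lemma VASS.demonReaches.not_angelic (h : W.demonReaches p q) (hq : ¬ W.angelic q) :
    ¬ W.angelic p := by
  rcases h.cases_head with rfl | ⟨_, hstep, -⟩
  exacts [hq, hstep.1]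

lemma VASS.demonReaches.not_angelic_of_ne (h : W.demonReaches p q) (hne : p ≠ q) :
    ¬ W.angelic p := by
  rcases h.cases_head with rfl | ⟨_, hstep, -⟩
  exacts [absurd rfl hne, hstep.1]

lemma demReach_iff_demonReaches (hq : ¬ W.angelic q) : demReach W p q ↔ W.demonReaches p q := by
  refine ⟨Relation.ReflTransGen.mono (fun _ _ h => ⟨h.1, h.2.2⟩) p q, fun h => ?_⟩
  induction h using Relation.ReflTransGen.head_induction_on with
  | refl => exact .refl
  | head hstep hreach ih =>
    exact .head ⟨hstep.1, VASS.demonReaches.not_angelic hreach hq, hstep.2⟩ ih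

lemma mem_demClass_iff : q ∈ demClass W p ↔ W.demonReaches p q ∧ W.demonReaches q p := by
  constructor
  · rintro (rfl | ⟨hp, hq, hpq, hqp⟩)
    · exact ⟨.refl, .refl⟩
    · exact ⟨(demReach_iff_demonReaches hq).1 hpq, (demReach_iff_demonReaches hp).1 hqp⟩
  · rintro ⟨hpq, hqp⟩
    by_cases hne : p = q
    · exact .inl hne
    · have hp := hpq.not_angelic_of_ne hne
      have hq := hqp.not_angelic_of_ne (Ne.symm hne)
      exact .inr ⟨hp, hq, (demReach_iff_demonReaches hq).2 hpq,
        (demReach_iff_demonReaches hp).2 hqp⟩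

lemma demClass_eq_of_mem (h : q ∈ demClass W p) : demClass W p = demClass W q := by
  obtain ⟨hpq, hqp⟩ := mem_demClass_iff.1 h
  ext r
  rw [mem_demClass_iff, mem_demClass_iff]
  exact ⟨fun ⟨hpr, hrp⟩ => ⟨hqp.trans hpr, hrp.trans hpq⟩,
    fun ⟨hqr, hrq⟩ => ⟨hpq.trans hqr, hrq.trans hqp⟩⟩

lemma self_mem_demClass : p ∈ demClass W p := .inl rfl

lemma mem_predecessors_demClass {a : W.Q} :
    a ∈ W.predecessors (demClass W p) ↔ W.demonReaches a p :=
  ⟨fun ⟨_, hb, hab⟩ => hab.trans (mem_demClass_iff.1 hb).2, fun h => ⟨p, self_mem_demClass, h⟩⟩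

lemma DEdge.demonReaches (h : DEdge W (demClass W p) (demClass W q)) (hp : ¬ W.angelic p) :
    W.demonReaches p q := by
  obtain ⟨-, a, ha, b, hb, hab⟩ := h
  obtain ⟨hpa, hap⟩ := mem_demClass_iff.1 ha
  exact (hpa.tail ⟨hap.not_angelic hp, hab⟩).trans (mem_demClass_iff.1 hb).2

lemma DEdge.not_demonReaches (h : DEdge W (demClass W p) (demClass W q)) (hp : ¬ W.angelic p) :
    ¬ W.demonReaches q p :=
  fun hqp => h.1 (demClass_eq_of_mem (mem_demClass_iff.2 ⟨h.demonReaches hp, hqp⟩))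

end DemonReaches

section Lock

variable {V : VASS d} {L : Finset (V.Q × (Fin d → ℤ) × V.Q)} {t : V.Q × (Fin d → ℤ) × V.Q}
  {p q : V.Q}

lemma lockedBy_insert : lockedBy (insert t L) p ↔ t.1 = p ∨ lockedBy L p := by
  simp only [lockedBy, Finset.mem_insert, exists_eq_or_imp]

lemma not_angelic_lock_insert_self : ¬ (V.lock (insert t L)).angelic t.1 :=
  fun h => h.2 (lockedBy_insert.2 (.inl rfl))

lemma not_angelic_lock_insert (h : ¬ (V.lock L).angelic p) :
    ¬ (V.lock (insert t L)).angelic p :=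
  fun ⟨hp, hl⟩ => h ⟨hp, fun hL => hl (lockedBy_insert.2 (.inr hL))⟩

lemma demonStep_lock_insert_self : (V.lock (insert t L)).demonStep t.1 t.2.2 :=
  ⟨not_angelic_lock_insert_self, t.2.1, Finset.mem_union_right _ (Finset.mem_insert_self t L)⟩

lemma demonStep_lock_insert (ht : (V.lock L).angelic t.1) (h : (V.lock L).demonStep p q) :
    (V.lock (insert t L)).demonStep p q := by
  obtain ⟨hp, w, hw⟩ := h
  refine ⟨not_angelic_lock_insert hp, w, ?_⟩
  rcases Finset.mem_union.1 hw with hw | hw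
  · obtain ⟨hV, hL⟩ := Finset.mem_filter.1 hw
    have htp : t.1 ≠ p := fun h => hp (h ▸ ht)
    exact Finset.mem_union_left _
      (Finset.mem_filter.2 ⟨hV, fun h => (lockedBy_insert.1 h).elim htp hL⟩)
  · exact Finset.mem_union_right _ (Finset.mem_insert_of_mem hw)

lemma demonReaches_lock_insert (ht : (V.lock L).angelic t.1) (h : (V.lock L).demonReaches p q) :
    (V.lock (insert t L)).demonReaches p q :=
  Relation.ReflTransGen.mono (fun _ _ => demonStep_lock_insert ht) p q h

lemma demonReaches_lock_insert_target (ht : (V.lock L).angelic t.1)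
    (h : (V.lock L).demonReaches p t.1) : (V.lock (insert t L)).demonReaches p t.2.2 :=
  (demonReaches_lock_insert ht h).tail demonStep_lock_insert_self

/-- The angelic states of `V` locked by `L`. -/
def lockedStates (V : VASS d) (L : Finset (V.Q × (Fin d → ℤ) × V.Q)) : Set V.Q :=
  {q | V.angelic q ∧ lockedBy L q}

lemma ncard_lockedStates_le (V : VASS d) (L : Finset (V.Q × (Fin d → ℤ) × V.Q)) :
    (lockedStates V L).ncard ≤ Nat.card {q : V.Q // V.angelic q} :=
  Set.ncard_le_ncard (t := {q | V.angelic q}) fun _ hq => hq.1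

lemma lockedStates_ssubset_insert (ht : (V.lock L).angelic t.1) :
    lockedStates V L ⊂ lockedStates V (insert t L) :=
  Set.ssubset_iff_exists.2 ⟨fun _ hq => ⟨hq.1, lockedBy_insert.2 (.inr hq.2)⟩,
    t.1, ⟨ht.1, lockedBy_insert.2 (.inl rfl)⟩, fun h => ht.2 h.2⟩

end Lock

section LockingDecomposition

variable {V : VASS d} {x y : Set V.Q × Finset (V.Q × (Fin d → ℤ) × V.Q)}

lemma IsGVert.exists_eq_demClass {C : Set V.Q} {L : Finset (V.Q × (Fin d → ℤ) × V.Q)}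
    (h : IsGVert V C L) : ∃ p : V.Q, C = demClass (V.lock L) p := by
  cases h with
  | base p => exact ⟨p, rfl⟩
  | dem _ q => exact ⟨q, rfl⟩
  | ang _ _ q => exact ⟨q, rfl⟩

lemma IsGVert.nonempty {C : Set V.Q} {L : Finset (V.Q × (Fin d → ℤ) × V.Q)}
    (h : IsGVert V C L) : C.Nonempty := by
  obtain ⟨p, rfl⟩ := h.exists_eq_demClass
  exact ⟨p, self_mem_demClass⟩

lemma GEdge.exists_eq_demClass (h : GEdge V x y) :
    (∃ L p q, x = (demClass (V.lock L) p, L) ∧ y = (demClass (V.lock L) q, L) ∧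
      (V.lock L).demonReaches p q ∧ ¬ (V.lock L).demonReaches q p) ∨
    ∃ L t, x = (demClass (V.lock L) t.1, L) ∧ (V.lock L).angelic t.1 ∧
      y = (demClass (V.lock (insert t L)) t.2.2, insert t L) := by
  obtain ⟨C, L⟩ := x
  obtain ⟨C', L'⟩ := y
  obtain ⟨hx, h⟩ := h
  obtain ⟨c, rfl⟩ : ∃ c, C = demClass (V.lock L) c := hx.exists_eq_demClass
  dsimp only at h
  rcases h with ⟨rfl, ⟨p, hp, hdem⟩, ⟨q, rfl⟩, hedge⟩ | ⟨p, hp, hang, u, q, -, rfl, rfl⟩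
  · rw [demClass_eq_of_mem hp] at hedge ⊢
    exact .inl ⟨L', p, q, rfl, rfl, hedge.demonReaches hdem, hedge.not_demonReaches hdem⟩
  · rw [demClass_eq_of_mem hp]
    exact .inr ⟨L, (p, u, q), rfl, hang, rfl⟩

lemma GEdge.predecessors_subset (h : GEdge V x y) :
    ((V.lock x.2).predecessors x.1 : Set V.Q) ⊆ (V.lock y.2).predecessors y.1 := by
  intro a ha
  rcases h.exists_eq_demClass with ⟨L, p, q, rfl, rfl, hpq, -⟩ | ⟨L, t, rfl, ht, rfl⟩
  · exact mem_predecessors_demClass.2 ((mem_predecessors_demClass.1 ha).trans hpq)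
  · exact mem_predecessors_demClass.2
      (demonReaches_lock_insert_target ht (mem_predecessors_demClass.1 ha))

lemma GEdge.demonicPredecessors_subset (h : GEdge V x y) :
    ((V.lock x.2).demonicPredecessors x.1 : Set V.Q) ⊆
      (V.lock y.2).demonicPredecessors y.1 := by
  rintro a ⟨ha, hdem⟩
  refine ⟨h.predecessors_subset ha, ?_⟩
  rcases h.exists_eq_demClass with ⟨L, p, q, rfl, rfl, -⟩ | ⟨L, t, rfl, -, rfl⟩
  exacts [hdem, not_angelic_lock_insert hdem]

/-- The number of states that the demon can drive into the vertex `x` of `G_A` plus the number of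
locked states: a potential that increases strictly along every edge of `G_A`. -/
def rank (V : VASS d) (x : Set V.Q × Finset (V.Q × (Fin d → ℤ) × V.Q)) : ℕ :=
  ((V.lock x.2).predecessors x.1).ncard + (lockedStates V x.2).ncard

/-- The number of demonic states that the demon can drive into the vertex `x` of `G_A`: a
potential that never decreases along the edges of `G_A`, and increases strictly along those into
demonic vertices. -/
def demonicRank (V : VASS d) (x : Set V.Q × Finset (V.Q × (Fin d → ℤ) × V.Q)) : ℕ :=
  ((V.lock x.2).demonicPredecessors x.1).ncard

lemma rank_le_card_add_card (V : VASS d) (x : Set V.Q × Finset (V.Q × (Fin d → ℤ) × V.Q)) :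
    rank V x ≤ Nat.card V.Q + Nat.card {q : V.Q // V.angelic q} :=
  add_le_add (Set.ncard_le_card _) (ncard_lockedStates_le V x.2)

lemma demonicRank_le_card (V : VASS d) (x : Set V.Q × Finset (V.Q × (Fin d → ℤ) × V.Q)) :
    demonicRank V x ≤ Nat.card V.Q :=
  Set.ncard_le_card _

lemma rank_pos (hx : x.1.Nonempty) : 0 < rank V x := by
  obtain ⟨p, hp⟩ := hx
  have hpre : 0 < ((V.lock x.2).predecessors x.1).ncard := (Set.ncard_pos).2 ⟨p, p, hp, .refl⟩
  exact Nat.add_pos_left hpre _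

lemma demonicRank_pos (hx : ∃ p ∈ x.1, ¬ (V.lock x.2).angelic p) : 0 < demonicRank V x := by
  obtain ⟨p, hp, hdem⟩ := hx
  exact (Set.ncard_pos).2 ⟨p, ⟨p, hp, .refl⟩, hdem⟩

lemma GEdge.rank_lt (h : GEdge V x y) : rank V x < rank V y := by
  have hsub := h.predecessors_subset
  rcases h.exists_eq_demClass with ⟨L, p, q, rfl, rfl, -, hqp⟩ | ⟨L, t, rfl, ht, rfl⟩
  · have hlt := Set.ncard_lt_ncard <| Set.ssubset_iff_exists.2
      ⟨hsub, q, mem_predecessors_demClass.2 .refl, fun hq => hqp (mem_predecessors_demClass.1 hq)⟩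
    exact Nat.add_lt_add_right hlt _
  · exact Nat.add_lt_add_of_le_of_lt (Set.ncard_le_ncard hsub)
      (Set.ncard_lt_ncard (lockedStates_ssubset_insert ht))

lemma GEdge.demonicRank_le (h : GEdge V x y) : demonicRank V x ≤ demonicRank V y :=
  Set.ncard_le_ncard h.demonicPredecessors_subset

lemma GEdge.demonicRank_lt (h : GEdge V x y) (hy : ∃ p ∈ y.1, ¬ (V.lock y.2).angelic p) :
    demonicRank V x < demonicRank V y := by
  refine Set.ncard_lt_ncard (Set.ssubset_iff_exists.2 ⟨h.demonicPredecessors_subset, ?_⟩)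
  rcases h.exists_eq_demClass with ⟨L, p, q, rfl, rfl, -, hqp⟩ | ⟨L, t, rfl, ht, rfl⟩
  · obtain ⟨r, hr, hdem⟩ := hy
    have hq : ¬ (V.lock L).angelic q := (mem_demClass_iff.1 hr).1.not_angelic hdem
    exact ⟨q, ⟨mem_predecessors_demClass.2 .refl, hq⟩,
      fun h => hqp (mem_predecessors_demClass.1 h.1)⟩
  · exact ⟨t.1, ⟨mem_predecessors_demClass.2 (demonReaches_lock_insert_target ht .refl),
      not_angelic_lock_insert_self⟩, fun h => h.2 ht⟩

lemma GEdge.not_transGen_self (V : VASS d) (x : Set V.Q × Finset (V.Q × (Fin d → ℤ) × V.Q)) :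
    ¬ Relation.TransGen (GEdge V) x x := by
  intro hx
  have hlt : Relation.TransGen (· < ·) (rank V x) (rank V x) :=
    hx.lift (rank V) fun _ _ h => h.rank_lt
  rw [Relation.transGen_eq_self] at hlt
  exact lt_irrefl _ hlt

lemma length_le_of_isChain_gEdge {l : List (Set V.Q × Finset (V.Q × (Fin d → ℤ) × V.Q))}
    (hl : l.IsChain (GEdge V)) (hvert : ∀ x ∈ l, IsGVert V x.1 x.2) :
    l.length ≤ Nat.card V.Q + Nat.card {q : V.Q // V.angelic q} := by
  rw [← List.countP_true]
  exact countP_le_of_isChain (rank_le_card_add_card V)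
    (fun h => h.rank_lt.le) (fun h _ => h.rank_lt)
    (fun x hx _ => rank_pos (hvert x hx).nonempty) hl

lemma countP_demonic_le_of_isChain_gEdge
    {l : List (Set V.Q × Finset (V.Q × (Fin d → ℤ) × V.Q))} (hl : l.IsChain (GEdge V)) :
    (l.countP fun x => decide (∃ p ∈ x.1, ¬ (V.lock x.2).angelic p)) ≤ Nat.card V.Q :=
  countP_le_of_isChain (demonicRank_le_card V) GEdge.demonicRank_le
    (fun h hy => h.demonicRank_lt (of_decide_eq_true hy))
    (fun _ _ hx => demonicRank_pos (of_decide_eq_true hx)) hl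

end LockingDecomposition

/-- For every VASS game `A`, the locking decomposition `G_A` is acyclic,
and every path in `G_A` has length at most `|Q| + |Q_A|`, with at most `|Q|` demonic
vertices on any path. -/
theorem locking_decomposition_acyclic {d : ℕ} (V : VASS d) (hT : V.total) :
    (∀ x, ¬ Relation.TransGen (GEdge V) x x) ∧
    (∀ vs : List (Set V.Q × Finset (V.Q × (Fin d → ℤ) × V.Q)),
      vs.Chain' (GEdge V) → (∀ x ∈ vs, IsGVert V x.1 x.2) →
      vs.length ≤ Nat.card V.Q + Nat.card {q : V.Q // V.angelic q} ∧
      (vs.countP fun x => decide (∃ p ∈ x.1, ¬ (V.lock x.2).angelic p)) ≤ Nat.card V.Q) := by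
  exact ⟨GEdge.not_transGen_self V, fun vs hchain hvert =>
    ⟨length_le_of_isChain_gEdge hchain hvert, countP_demonic_le_of_isChain_gEdge hchain⟩⟩

end
end VassPaper
end

section
/- For every VASS game A, every configuration pv, and every counter c: sup_π inf_σ len(Comp^{σ,π}(pv)) = inf_σ sup_π len(Comp^{σ,π}(pv)), and sup_π inf_σ max_c(Comp^{σ,π}(pv)) = inf_σ sup_π max_c(Comp^{σ,π}(pv)), where σ ranges over all Angel strategies and π over all Demon strategies, and both sides are evaluated in ℕ∞. -/
/-!
Both payoffs are suprema, over the finite prefixes of the computation, of a value attached to each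
prefix. Such a payoff exceeds a threshold `x` exactly when the computation has a prefix in the set
`T` of finite computations of value greater than `x`, so Demon plays a reachability game on finite
computations. Let the rank of a finite computation be the least number of steps in which Demon can
force a visit to `T`. Where the rank is finite and nonzero, Demon can make it decrease. Where the
rank is infinite, Angel can keep it infinite: finite branching bounds the ranks of the successors
when all of them are finite. Hence one of the players wins at every threshold, and this makes the
lower and the upper value agree.
-/

open scoped Classical

namespace VassPaper

noncomputable section

variable {d : ℕ}

theorem iSup_iInf_eq_iInf_iSup_of_determined {β : Type*} [CompleteLinearOrder β] {ι κ : Sort*}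
    {f : ι → κ → β} (h : ∀ x, (∃ j, ∀ i, x < f i j) ∨ ∃ i, ∀ j, f i j ≤ x) :
    ⨆ j, ⨅ i, f i j = ⨅ i, ⨆ j, f i j := by
  have exists_column {x : β} (hx : x < ⨅ i, ⨆ j, f i j) : ∃ j, ∀ i, x < f i j :=
    (h x).resolve_right fun ⟨i, hi⟩ => hx.not_ge ((iInf_le _ i).trans (iSup_le hi))
  refine (iSup_iInf_le_iInf_iSup fun j i => f i j).antisymm (le_of_not_gt fun hlt => ?_)
  -- A column above the lower value need not be bounded away from it, so a threshold strictly
  -- between the two values is used whenever there is one.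
  by_cases hcov : (⨆ j, ⨅ i, f i j) ⋖ ⨅ i, ⨆ j, f i j
  · obtain ⟨j, hj⟩ := exists_column hlt
    exact hlt.not_ge (le_iSup_of_le j (le_iInf fun i => hcov.ge_of_gt (hj i)))
  · obtain ⟨x, hx, hx'⟩ := exists_lt_lt_of_not_covBy hlt hcov
    obtain ⟨j, hj⟩ := exists_column hx'
    exact hx.not_ge (le_iSup_of_le j (le_iInf fun i => (hj i).le))

/-- The arena of a two-player turn-based game: Angel moves at the angelic positions and Demon at
all others, along `step`. A play ends at a position without successors. -/
structure Arena (α : Type*) where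
  angelic : α → Prop
  step : α → α → Prop

namespace Arena

variable {α : Type*} (G : Arena α) {T X : Set α} {p : α}

/-- The controllable predecessor of `X`: the positions at which the play cannot end and Demon can
force the next position to lie in `X`. -/
def forcePred (X : Set α) : Set α :=
  {p | (∃ q ∈ X, G.step p q) ∧ (G.angelic p → ∀ q, G.step p q → q ∈ X)}

theorem forcePred_mono : Monotone G.forcePred :=
  fun _ _ hXY _ ⟨⟨q, hq, hpq⟩, hall⟩ => ⟨⟨q, hXY hq, hpq⟩, fun ha r hr => hXY (hall ha r hr)⟩

/-- The `k`-th stage of Demon's attractor of `T`: the positions from which Demon can force a visit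
to `T` within `k` steps. -/
def attractor (T : Set α) : ℕ → Set α
  | 0 => T
  | k + 1 => attractor T k ∪ G.forcePred (attractor T k)

theorem attractor_mono (T : Set α) : Monotone (G.attractor T) :=
  monotone_nat_of_le_succ fun _ => Set.subset_union_left

/-- The least number of steps within which Demon can force a visit to `T`, or `⊤` if there is no
such number. -/
def rank (T : Set α) (p : α) : ℕ∞ :=
  ⨅ (k : ℕ) (_ : p ∈ G.attractor T k), (k : ℕ∞)

variable {G}

theorem rank_le_natCast_iff {k : ℕ} : G.rank T p ≤ k ↔ p ∈ G.attractor T k := by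
  refine ⟨fun h => ?_, fun h => iInf₂_le k h⟩
  by_contra hk
  have hlt (j : ℕ) (hj : p ∈ G.attractor T j) : k < j :=
    lt_of_not_ge fun hjk => hk (G.attractor_mono T hjk hj)
  have hrank : ((k + 1 : ℕ) : ℕ∞) ≤ G.rank T p :=
    le_iInf₂ fun j hj => Nat.cast_le.2 (hlt j hj)
  exact (Nat.cast_lt.2 k.lt_succ_self).not_ge (hrank.trans h)

theorem rank_ne_top_iff : G.rank T p ≠ ⊤ ↔ ∃ k, p ∈ G.attractor T k := by
  simp [rank, iInf_eq_top]

theorem rank_ne_top_of_mem (hp : p ∈ T) : G.rank T p ≠ ⊤ :=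
  rank_ne_top_iff.2 ⟨0, hp⟩

theorem mem_forcePred_rank_lt (hpT : p ∉ T) (hp : G.rank T p ≠ ⊤) :
    p ∈ G.forcePred {q | G.rank T q < G.rank T p} := by
  obtain ⟨k, hk⟩ := ENat.ne_top_iff_exists.1 hp
  have hmem : p ∈ G.attractor T k := rank_le_natCast_iff.1 hk.ge
  cases k with
  | zero => exact absurd hmem hpT
  | succ k =>
    have hlt : (k : ℕ∞) < G.rank T p := hk ▸ Nat.cast_lt.2 k.lt_succ_self
    have hnot : p ∉ G.attractor T k := fun h => hlt.not_ge (rank_le_natCast_iff.2 h)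
    exact G.forcePred_mono (fun q hq => (rank_le_natCast_iff.2 hq).trans_lt hlt)
      (hmem.resolve_left hnot)

theorem rank_ne_top_of_mem_forcePred (hfin : {q | G.step p q}.Finite)
    (hp : p ∈ G.forcePred {q | G.rank T q ≠ ⊤}) : G.rank T p ≠ ⊤ := by
  have hstage : ∀ᶠ k in Filter.atTop, ∀ q ∈ {q | G.step p q},
      G.rank T q ≠ ⊤ → q ∈ G.attractor T k := by
    refine (Filter.eventually_all_finite hfin).2 fun q _ => ?_
    by_cases hq : G.rank T q = ⊤
    · simp [hq]
    · obtain ⟨k, hk⟩ := rank_ne_top_iff.1 hq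
      filter_upwards [Filter.eventually_ge_atTop k] with l hl _ using G.attractor_mono T hl hk
  obtain ⟨k, hk⟩ := hstage.exists
  obtain ⟨⟨q, hq, hpq⟩, hall⟩ := hp
  exact rank_ne_top_iff.2
    ⟨k + 1, Or.inr ⟨⟨q, hk q hpq hq, hpq⟩, fun ha r hr => hk r hr (hall ha r hr)⟩⟩

end Arena

/-- A finite computation, given by its strict past and its current configuration. -/
abbrev FiniteComputation (V : VASS d) : Type := List V.Config × V.Config

/-- The prolongation of a finite computation by a transition. -/
def FiniteComputation.extend {V : VASS d} (p : FiniteComputation V)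
    (t : V.Q × (Fin d → ℤ) × V.Q) : FiniteComputation V :=
  (p.1 ++ [p.2], V.applyT p.2 t)

/-- The arena of finite computations of `V`. Its positions carry the whole history, so that the
strategies of the VASS game are positional here. -/
def VASS.arena (V : VASS d) : Arena (FiniteComputation V) where
  angelic p := V.angelic p.2.1
  step p q := ∃ t, V.enabled p.2 t ∧ p.extend t = q

theorem VASS.finite_setOf_arena_step (V : VASS d) (p : FiniteComputation V) :
    {q | V.arena.step p q}.Finite :=
  (V.Tran.finite_toSet.image p.extend).subset fun _ ⟨t, ht, hq⟩ => ⟨t, ht.1, hq⟩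

section Strategy

variable {V : VASS d} {own : V.Q → Prop}

/-- At the finite computation `p`, the strategy `s` moves into `X` whenever this is possible. -/
def Strategy.Prefers (s : Strategy V own) (p : FiniteComputation V)
    (X : Set (FiniteComputation V)) : Prop :=
  (∃ q ∈ X, V.arena.step p q) → p.extend (s.choose p.1 p.2) ∈ X

instance : Inhabited (Strategy V own) where
  default :=
    { choose := fun _ c =>
        if ∃ t, V.enabled c t then Classical.epsilon (V.enabled c)
        else Classical.epsilon fun t => t ∈ V.Tran ∧ t.1 = c.1
      choose_mem := fun _ c _ hout => by
        split_ifs with hen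
        · have ht := Classical.epsilon_spec hen
          exact ⟨ht.1, ht.2.1⟩
        · exact Classical.epsilon_spec hout
      choose_enabled := fun _ c _ hen => by
        rw [if_pos hen]
        exact Classical.epsilon_spec hen }

theorem Strategy.exists_forall_prefers (own : V.Q → Prop)
    (X : FiniteComputation V → Set (FiniteComputation V)) :
    ∃ s : Strategy V own, ∀ p, s.Prefers p (X p) := by
  let s : Strategy V own := default
  let good (p : FiniteComputation V) (t : V.Q × (Fin d → ℤ) × V.Q) : Prop :=
    V.enabled p.2 t ∧ p.extend t ∈ X p
  let choice (h : List V.Config) (c : V.Config) : V.Q × (Fin d → ℤ) × V.Q :=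
    if ∃ t, good (h, c) t then Classical.epsilon (good (h, c)) else s.choose h c
  have choice_good {p : FiniteComputation V} (hp : ∃ t, good p t) :
      good p (choice p.1 p.2) := by
    simpa only [choice, if_pos hp] using Classical.epsilon_spec hp
  have choice_default {p : FiniteComputation V} (hp : ¬ ∃ t, good p t) :
      choice p.1 p.2 = s.choose p.1 p.2 := if_neg hp
  refine ⟨⟨choice, fun h c hc hout => ?_, fun h c hc hen => ?_⟩, ?_⟩
  · by_cases hp : ∃ t, good (h, c) t
    · exact ⟨(choice_good hp).1.1, (choice_good hp).1.2.1⟩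
    · exact choice_default hp ▸ s.choose_mem h c hc hout
  · by_cases hp : ∃ t, good (h, c) t
    · exact (choice_good hp).1
    · exact choice_default hp ▸ s.choose_enabled h c hc hen
  · rintro p ⟨_, hX, t, ht, rfl⟩
    exact (choice_good ⟨t, ht, hX⟩).2

end Strategy

section Play

variable {V : VASS d} {σ : AngelStrategy V} {π : DemonStrategy V} {init : V.Config}
  {p q : FiniteComputation V} {X : Set (FiniteComputation V)} {n : ℕ}

/-- The transition that the pair of strategies `(σ, π)` selects after the finite computation `p`. -/
def nextMove (σ : AngelStrategy V) (π : DemonStrategy V) (p : FiniteComputation V) :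
    V.Q × (Fin d → ℤ) × V.Q :=
  if V.angelic p.2.1 then σ.choose p.1 p.2 else π.choose p.1 p.2

theorem enabled_nextMove (hp : ∃ q, V.arena.step p q) : V.enabled p.2 (nextMove σ π p) := by
  obtain ⟨_, t, ht, -⟩ := hp
  by_cases ha : V.angelic p.2.1
  · simpa only [nextMove, if_pos ha] using σ.choose_enabled p.1 p.2 ha ⟨t, ht⟩
  · simpa only [nextMove, if_neg ha] using π.choose_enabled p.1 p.2 ha ⟨t, ht⟩

/-- The finite prefixes of the maximal computation `Comp^{σ,π}(init)`. -/
def prefixes (σ : AngelStrategy V) (π : DemonStrategy V) (init : V.Config) :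
    Set (FiniteComputation V) :=
  {p | ∃ n, playAux σ π init n = some p}

theorem playAux_succ_eq_some_iff : playAux σ π init (n + 1) = some q ↔
    ∃ p : FiniteComputation V, playAux σ π init n = some p ∧ V.enabled p.2 (nextMove σ π p) ∧
      p.extend (nextMove σ π p) = q := by
  simp [playAux, Option.bind_eq_some_iff, nextMove, FiniteComputation.extend]

theorem length_of_playAux_eq_some (hp : playAux σ π init n = some p) : p.1.length = n := by
  induction n generalizing p with
  | zero => simp [← Option.some.inj hp]
  | succ n ih =>
    obtain ⟨q, hq, -, rfl⟩ := playAux_succ_eq_some_iff.1 hp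
    simp [FiniteComputation.extend, ih hq]

theorem extend_nextMove_mem_prefixes (hp : p ∈ prefixes σ π init)
    (hen : V.enabled p.2 (nextMove σ π p)) :
    p.extend (nextMove σ π p) ∈ prefixes σ π init :=
  hp.imp' (· + 1) fun _ hn => playAux_succ_eq_some_iff.2 ⟨p, hn, hen, rfl⟩

theorem prefixes_induction {P : FiniteComputation V → Prop} (hinit : P ([], init))
    (hext : ∀ p, V.enabled p.2 (nextMove σ π p) → P p → P (p.extend (nextMove σ π p))) :
    ∀ p ∈ prefixes σ π init, P p := by
  rintro p ⟨n, hp⟩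
  induction n generalizing p with
  | zero => exact Option.some.inj hp ▸ hinit
  | succ n ih =>
    obtain ⟨q, hq, hen, rfl⟩ := playAux_succ_eq_some_iff.1 hp
    exact hext q hen (ih q hq)

theorem extend_nextMove_mem_of_prefers (hπ : π.Prefers p X) (hp : p ∈ V.arena.forcePred X) :
    p.extend (nextMove σ π p) ∈ X := by
  obtain ⟨⟨q, hq, hpq⟩, hall⟩ := hp
  by_cases ha : V.angelic p.2.1
  · exact hall ha _ ⟨_, enabled_nextMove ⟨q, hpq⟩, rfl⟩
  · simpa only [nextMove, if_neg ha] using hπ ⟨q, hq, hpq⟩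

theorem extend_nextMove_notMem_of_prefers (hσ : σ.Prefers p Xᶜ) (hp : p ∉ V.arena.forcePred X)
    (hen : V.enabled p.2 (nextMove σ π p)) : p.extend (nextMove σ π p) ∉ X := by
  intro hX
  refine hp ⟨⟨_, hX, _, hen, rfl⟩, fun (ha : V.angelic p.2.1) q hpq =>
    by_contra fun hq => ?_⟩
  have hXc : p.extend (nextMove σ π p) ∈ Xᶜ := by
    simpa only [nextMove, if_pos ha] using hσ ⟨q, hq, hpq⟩
  exact hXc hX

theorem exists_demonStrategy_reaches (T : Set (FiniteComputation V)) :
    ∃ π : DemonStrategy V, ∀ (σ : AngelStrategy V) (init : V.Config),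
      ∀ p ∈ prefixes σ π init, V.arena.rank T p ≠ ⊤ → ∃ q ∈ prefixes σ π init, q ∈ T := by
  obtain ⟨π, hπ⟩ := Strategy.exists_forall_prefers (fun q => ¬ V.angelic q)
    fun p => {q | V.arena.rank T q < V.arena.rank T p}
  refine ⟨π, fun σ init p => ?_⟩
  induction hr : V.arena.rank T p using WellFoundedLT.induction generalizing p with
  | ind r ih =>
    subst hr
    intro hp hrank
    by_cases hpT : p ∈ T
    · exact ⟨p, hp, hpT⟩
    · have hforce := Arena.mem_forcePred_rank_lt hpT hrank
      have hlt := extend_nextMove_mem_of_prefers (σ := σ) (hπ p) hforce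
      have hen := enabled_nextMove (σ := σ) (π := π) (hforce.1.imp fun _ hq => hq.2)
      exact ih _ hlt _ rfl (extend_nextMove_mem_prefixes hp hen) hlt.ne_top

theorem exists_angelStrategy_avoids (T : Set (FiniteComputation V)) :
    ∃ σ : AngelStrategy V, ∀ (π : DemonStrategy V) (init : V.Config),
      V.arena.rank T ([], init) = ⊤ → ∀ p ∈ prefixes σ π init, p ∉ T := by
  obtain ⟨σ, hσ⟩ := Strategy.exists_forall_prefers V.angelic
    fun _ => {q | V.arena.rank T q ≠ ⊤}ᶜ
  refine ⟨σ, fun π init hinit p hp hpT => Arena.rank_ne_top_of_mem (G := V.arena) hpT ?_⟩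
  refine prefixes_induction (P := fun p => V.arena.rank T p = ⊤) hinit
    (fun p hen hrank => ?_) p hp
  have hout : p ∉ V.arena.forcePred {q | V.arena.rank T q ≠ ⊤} := fun h =>
    Arena.rank_ne_top_of_mem_forcePred (V.finite_setOf_arena_step p) h hrank
  exact not_not.1 (extend_nextMove_notMem_of_prefers (hσ p) hout hen)

theorem reachability_determined (init : V.Config) (T : Set (FiniteComputation V)) :
    (∃ π : DemonStrategy V, ∀ σ : AngelStrategy V, ∃ p ∈ prefixes σ π init, p ∈ T) ∨
      ∃ σ : AngelStrategy V, ∀ π : DemonStrategy V, ∀ p ∈ prefixes σ π init, p ∉ T := by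
  by_cases hinit : V.arena.rank T ([], init) = ⊤
  · obtain ⟨σ, hσ⟩ := exists_angelStrategy_avoids T
    exact Or.inr ⟨σ, fun π => hσ π init hinit⟩
  · obtain ⟨π, hπ⟩ := exists_demonStrategy_reaches T
    exact Or.inl ⟨π, fun σ => hπ σ init _ ⟨0, rfl⟩ hinit⟩

theorem lenComp_eq_iSup_prefixes :
    lenComp σ π init = ⨆ p ∈ prefixes σ π init, ((p.1.length : ℕ∞) + 1) := by
  simp only [lenComp, prefixes, Set.mem_ofPred_eq, Option.isSome_iff_exists, iSup_exists]
  rw [iSup_comm]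
  exact iSup_congr fun p => iSup_congr fun n => iSup_congr fun hp => by
    rw [length_of_playAux_eq_some hp]

theorem maxCounter_eq_iSup_prefixes {c : Fin d} :
    maxCounter σ π init c = ⨆ p ∈ prefixes σ π init, (p.2.2 c : ℕ∞) := by
  have visited_eq : {x | visits σ π init x} = Prod.snd '' prefixes σ π init := by
    ext x
    simpa [visits, prefixes] using exists_comm
  rw [maxCounter, visited_eq, iSup_image]

end Play

theorem vass_game_determinacy_general {β : Type*} [CompleteLinearOrder β] (V : VASS d)
    (init : V.Config) (value : FiniteComputation V → β) :
    (⨆ π : DemonStrategy V, ⨅ σ : AngelStrategy V, ⨆ p ∈ prefixes σ π init, value p) =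
      ⨅ σ : AngelStrategy V, ⨆ π : DemonStrategy V, ⨆ p ∈ prefixes σ π init, value p := by
  refine iSup_iInf_eq_iInf_iSup_of_determined fun x => ?_
  simpa only [lt_iSup_iff, iSup_le_iff, exists_prop, Set.mem_ofPred_eq, not_lt] using
    reachability_determined init {p | x < value p}

/-- For every VASS game `A`, every configuration `pv` and every counter `c`:
`sup_π inf_σ len(Comp^{σ,π}(pv)) = inf_σ sup_π len(Comp^{σ,π}(pv))` and
`sup_π inf_σ max_c(Comp^{σ,π}(pv)) = inf_σ sup_π max_c(Comp^{σ,π}(pv))`, in `ℕ∞`. -/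
theorem vass_game_determinacy {d : ℕ} (V : VASS d) (hT : V.total)
    (init : V.Config) (c : Fin d) :
    ((⨆ π : DemonStrategy V, ⨅ σ : AngelStrategy V, lenComp σ π init) =
      ⨅ σ : AngelStrategy V, ⨆ π : DemonStrategy V, lenComp σ π init) ∧
    ((⨆ π : DemonStrategy V, ⨅ σ : AngelStrategy V, maxCounter σ π init c) =
      ⨅ σ : AngelStrategy V, ⨆ π : DemonStrategy V, maxCounter σ π init c) := by
  simp only [lenComp_eq_iSup_prefixes, maxCounter_eq_iSup_prefixes]
  exact ⟨vass_game_determinacy_general V init _, vass_game_determinacy_general V init _⟩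

end
end VassPaper
end
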